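/- (Hölder stability of the data-to-solution map, Theorem 5.1(i)) Let 0 ≤ α < 1/2, let γ satisfy γ > α and α + γ < 1, and fix a cut-off function θ on ℝ². There exist constants C₁, C₂ > 0 depending only on α and γ with the following property. Let u₁ and u₂ be classical Yudovich solutions of the 2D Euler equations on [0,∞) × ℝ² (with the same cut-off θ in the pressure formula), and set K(t) := sup_{0 ≤ s ≤ t} Σ_{i=1}^{2} ( sup_x |curl uᵢ(s,x)| + ‖uᵢ(s,·)‖_{L²_α} ), assumed finite for every t ≥ 0. Then for all t ≥ 0: ‖u₂(t,·) − u₁(t,·)‖_{L²_γ} ≤ C₁ ‖u₂(0,·) − u₁(0,·)‖_{L²_γ}^{exp(−C₂ t K(t))} · K(t)^{1 − exp(−C₂ t K(t))}. -/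

import Mathlib

open MeasureTheory Metric ENNReal

noncomputable section

/-- The plane `ℝ²` as a Euclidean space. -/
abbrev E2 := EuclideanSpace ℝ (Fin 2)

/-- The `i`-th standard basis vector of `ℝ²`. -/
def e2 (i : Fin 2) : E2 := EuclideanSpace.single i 1

/-- Partial derivative `∂ᵢ F` of a scalar function on `ℝ²`. -/
def pd (i : Fin 2) (F : E2 → ℝ) (z : E2) : ℝ := fderiv ℝ F z (e2 i)

/-- Partial derivative `∂ⱼ uᵢ` of a vector field on `ℝ²`. -/
def pdv (j i : Fin 2) (u : E2 → E2) (y : E2) : ℝ := fderiv ℝ u y (e2 j) i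

/-- Divergence `∂₁u₁ + ∂₂u₂` of a vector field on `ℝ²`. -/
def div2 (u : E2 → E2) (x : E2) : ℝ := ∑ i, pdv i i u x

/-- Scalar vorticity `∂₁u₂ − ∂₂u₁` of a vector field on `ℝ²`. -/
def curl2 (u : E2 → E2) (x : E2) : ℝ := pdv 0 1 u x - pdv 1 0 u x

/-- Truncated local Morrey `L²` norm
`‖f‖_{L²_α(R)} = sup_{r ≥ R} ( r^{-(d+2α)} ∫_{B(0,r)} |f|² )^{1/2}`, valued in `ℝ≥0∞`. -/
def morreyR {d : ℕ} {F : Type*} [NormedAddCommGroup F] (α R : ℝ)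
    (f : EuclideanSpace ℝ (Fin d) → F) : ℝ≥0∞ :=
  ⨆ r : {r : ℝ // R ≤ r},
    ((∫⁻ x in ball (0 : EuclideanSpace ℝ (Fin d)) (r : ℝ), (‖f x‖₊ : ℝ≥0∞) ^ 2) /
      ENNReal.ofReal ((r : ℝ) ^ ((d : ℝ) + 2 * α))) ^ ((1 : ℝ) / 2)

/-- Truncated `L^∞_β` norm `sup_{r ≥ R} r^{-β} sup_{|x| ≤ r} |f(x)|`, valued in `ℝ≥0∞`. -/
def morreyInfR {d : ℕ} {F : Type*} [NormedAddCommGroup F] (β R : ℝ)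
    (f : EuclideanSpace ℝ (Fin d) → F) : ℝ≥0∞ :=
  ⨆ r : {r : ℝ // R ≤ r},
    (⨆ x : {x : EuclideanSpace ℝ (Fin d) // ‖x‖ ≤ (r : ℝ)}, (‖f x.1‖₊ : ℝ≥0∞)) /
      ENNReal.ofReal ((r : ℝ) ^ β)

/-- The fundamental solution `E(x) = −(2π)⁻¹ log |x|` of `−Δ` on `ℝ²`. -/
def fundE (z : E2) : ℝ := -(2 * Real.pi)⁻¹ * Real.log ‖z‖

/-- A cut-off function: smooth, `0 ≤ θ ≤ 1`, `θ ≡ 1` on `B(0,1)`, supported in `B(0,2)`. -/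
def IsCutoff (θ : E2 → ℝ) : Prop :=
  ContDiff ℝ (⊤ : ℕ∞) θ ∧ (∀ x, 0 ≤ θ x ∧ θ x ≤ 1) ∧ (∀ x : E2, ‖x‖ ≤ 1 → θ x = 1) ∧
    (∀ x : E2, 2 ≤ ‖x‖ → θ x = 0)

/-- The near-field kernel `θE`. -/
def thetaE (θ : E2 → ℝ) (w : E2) : ℝ := θ w * fundE w

/-- The far-field kernel `(1−θ)E` (which vanishes near the origin). -/
def oneThetaE (θ : E2 → ℝ) (w : E2) : ℝ := (1 - θ w) * fundE w

/-- The pressure force `∇Π(u⊗u)` of Definition 3.1: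
`∂ᵢΠ = ∂ᵢ(θE) * (Σ_{jk} ∂ⱼu_k ∂_k uⱼ) + Σ_{jk} ∂ᵢ∂ⱼ∂ₖ((1−θ)E) * (uⱼ u_k)`. -/
def pressureForce (θ : E2 → ℝ) (u : E2 → E2) (i : Fin 2) (x : E2) : ℝ :=
  (∫ y, pd i (thetaE θ) (x - y) * ∑ j, ∑ k, pdv j k u y * pdv k j u y) +
  ∑ j, ∑ k, ∫ y, pd i (pd j (pd k (oneThetaE θ))) (x - y) * (u y j * u y k)

/-- Absolute convergence of all the integrals defining the pressure force. -/
def PressureIntegrable (θ : E2 → ℝ) (u : E2 → E2) (x : E2) : Prop :=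
  (∀ i : Fin 2,
    Integrable (fun y => pd i (thetaE θ) (x - y) * ∑ j, ∑ k, pdv j k u y * pdv k j u y)) ∧
  (∀ i j k : Fin 2,
    Integrable (fun y => pd i (pd j (pd k (oneThetaE θ))) (x - y) * (u y j * u y k)))

/-- A classical Yudovich solution of the 2D incompressible Euler equations on `[0,∞) × ℝ²`:
a smooth divergence-free vector field satisfying
`∂ₜuᵢ + Σⱼ uⱼ∂ⱼuᵢ + Pᵢ = 0` with the integral pressure force `Pᵢ`, all pressure integrals
being absolutely convergent. -/
def IsYudovichSolution (θ : E2 → ℝ) (u : ℝ → E2 → E2) : Prop :=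
  ContDiffOn ℝ (⊤ : ℕ∞) (fun q : ℝ × E2 => u q.1 q.2) (Set.Ici 0 ×ˢ Set.univ) ∧
  (∀ t, 0 ≤ t → ∀ x, div2 (u t) x = 0) ∧
  (∀ t, 0 ≤ t → ∀ x, PressureIntegrable θ (u t) x) ∧
  (∀ t, 0 ≤ t → ∀ x, ∀ i : Fin 2,
    HasDerivWithinAt (fun s => u s x i)
      (-(∑ j, u t x j * pdv j i (u t) x) - pressureForce θ (u t) i x) (Set.Ici 0) t)


/-- The quantity `K(t) = sup_{0 ≤ s ≤ t} Σᵢ ( ‖curl uᵢ(s)‖_{L^∞} + ‖uᵢ(s)‖_{L²_α} )`. -/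
def yudovichK (α : ℝ) (u₁ u₂ : ℝ → E2 → E2) (t : ℝ) : ℝ≥0∞ :=
  ⨆ s : Set.Icc (0 : ℝ) t,
    (((⨆ x, ENNReal.ofReal |curl2 (u₁ s.1) x|) + morreyR α 1 (u₁ s.1)) +
      ((⨆ x, ENNReal.ofReal |curl2 (u₂ s.1) x|) + morreyR α 1 (u₂ s.1)))

/-!
Stability of bounded-vorticity solutions of the planar Euler equations in growing Morrey norms.

Let `w = u₂ - u₁` and, for every scale `r ≥ 1`, let `F_r(s) = r^{-2-2γ} ∫ χ_r |w(s)|²` with a cut-off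
`χ_r` equal to one on `B(0,r)`, supported in `B(0,2r)` and with gradient `O(1/r)`. The supremum of
`F_r` over `r` is equivalent to the square of `‖w‖_{L²_γ}`, so it suffices to bound all `F_r` together.
Differentiating `F_r` produces a transport term and a pressure term.

Transport. After integrating the drift by parts the dangerous term is `w·∇u·w`, and `∇u` need not be
bounded. Bounded vorticity makes `u` log-Lipschitz: with a radial mollifier, averaging `u` at scale `ε`
gives a field `U` with `|u - U| ≲ εK` and `|∇U| ≲ K (1 + log (r/ε))` on `B(0,4r)` (`moll_bounds`,
`split_vel`). On `u - U` the derivative is moved away, at the cost of `‖∇w‖` in `L²(B(0,2r))`, which is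
`O(Kr)` by the local div-curl estimate (`ell`, `grad_L2`). If `‖w‖_{L²(B(0,2r))} ≲ Kεr`, the term is
`O(K³ (εr)² (1 + log (r/ε)))` (`transport`).

Pressure. Tested against `χ w`, all derivatives in the pressure force can be moved onto the test field.
The near and far parts then recombine, the cut-off `θ` disappears, and the difference of the pressures
becomes `∫ (u₂ ⊗ u₂ - u₁ ⊗ u₁) : H`, where `H` is the Hessian of the potential of `div (χ w) = w·∇χ`
(`press_id`). Near the support of `χ`, `H` is bounded in `L²` by `w·∇χ`, again by the div-curl estimate;
far away it decays like `|y|⁻³` (`H_bounds`), which beats the growth `R^{2+α+γ}` of `∫_{B(0,R)} |w||u|`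
exactly when `α + γ < 1` (`dyadic`, `pressure`). No logarithm appears.

Closing the argument. Suppose `‖w‖_{L²_γ} ≤ δK` with `δ ≤ 1`. The choice `ε = min (r^γ δ) (r^α)` is
allowed by the two a priori bounds on `w`, and since `γ > α` it replaces `log (r/ε)` by a multiple of
`1 + log (1/δ)`, uniformly in `r` (`scale_choice`). Hence `F_r' ≤ c M log (A/M)` for every `r` whenever
all energies are at most `M` (`fixed_time`). No single `F_r` satisfies a closed inequality and the
supremum need not be differentiable, so Osgood's lemma is proved for families: a uniform bound on the
derivatives keeps the whole family below the solution of `M' = c M log (A/M)` (`family_compare`,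
`family_osgood`). That solution is `A^{1-e(s)} M(0)^{e(s)}` with `e(s) = exp (-cs)`, and `c` is a
multiple of `K`: this is the stated Hölder estimate.
-/

/-! ### Partial derivatives and integration by parts on the plane -/

/-- Smooth scalar functions on the plane. -/
abbrev Sm (F : E2 → ℝ) : Prop := ContDiff ℝ (⊤ : ℕ∞) F

lemma Sm.diff {F : E2 → ℝ} (h : Sm F) : Differentiable ℝ F := h.differentiable (by simp)

lemma Sm.cont {F : E2 → ℝ} (h : Sm F) : Continuous F := h.continuous

lemma Sm.pd {F : E2 → ℝ} (h : Sm F) (i : Fin 2) : Sm (pd i F) :=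
  (h.fderiv_right (m := (⊤ : ℕ∞)) (by simp)).clm_apply contDiff_const

lemma hcs_pd {F : E2 → ℝ} (h : HasCompactSupport F) (i : Fin 2) : HasCompactSupport (pd i F) :=
  (h.fderiv ℝ).comp_left (g := fun L : E2 →L[ℝ] ℝ => L (e2 i)) (by simp)

lemma pd_add {F G : E2 → ℝ} {x : E2} (hF : DifferentiableAt ℝ F x) (hG : DifferentiableAt ℝ G x)
    (i : Fin 2) : pd i (fun z => F z + G z) x = pd i F x + pd i G x := by
  simp [pd, fderiv_fun_add hF hG]

lemma pd_sub {F G : E2 → ℝ} {x : E2} (hF : DifferentiableAt ℝ F x) (hG : DifferentiableAt ℝ G x)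
    (i : Fin 2) : pd i (fun z => F z - G z) x = pd i F x - pd i G x := by
  simp [pd, fderiv_fun_sub hF hG]

lemma pd_mul {F G : E2 → ℝ} {x : E2} (hF : DifferentiableAt ℝ F x) (hG : DifferentiableAt ℝ G x)
    (i : Fin 2) : pd i (fun z => F z * G z) x = pd i F x * G x + F x * pd i G x := by
  simp [pd, fderiv_fun_mul hF hG]; ring

lemma pd_const_mul {F : E2 → ℝ} {x : E2} (hF : DifferentiableAt ℝ F x) (c : ℝ)
    (i : Fin 2) : pd i (fun z => c * F z) x = c * pd i F x := by
  simp [pd, fderiv_const_mul hF]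

lemma pd_neg {F : E2 → ℝ} {x : E2}
    (i : Fin 2) : pd i (fun z => -F z) x = - pd i F x := by
  simp [pd, fderiv_fun_neg]

lemma pd_comp_affine {F : E2 → ℝ} (hF : Differentiable ℝ F) (c : ℝ) (x z : E2) (i : Fin 2) :
    pd i (fun z => F (x + c • z)) z = c * pd i F (x + c • z) := by
  have h1 : HasFDerivAt (fun z : E2 => x + c • z) (c • ContinuousLinearMap.id ℝ E2) z :=
    ((hasFDerivAt_id z).const_smul c).const_add x
  have h2 := (hF (x + c • z)).hasFDerivAt.comp z h1
  have h3 : fderiv ℝ (fun z => F (x + c • z)) z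
    = (fderiv ℝ F (x + c • z)).comp (c • ContinuousLinearMap.id ℝ E2) := h2.fderiv
  simp [pd, h3]

lemma pd_comm {F : E2 → ℝ} (hF : Sm F) (i j : Fin 2) : pd i (pd j F) = pd j (pd i F) := by
  funext x
  have hd : DifferentiableAt ℝ (fderiv ℝ F) x :=
    ((hF.fderiv_right (m := (⊤ : ℕ∞)) (by simp)).differentiable (by simp)) x
  have key : ∀ i j : Fin 2, pd i (pd j F) x = fderiv ℝ (fderiv ℝ F) x (e2 i) (e2 j) := by
    intro i j
    have h1 := hd.hasFDerivAt.clm_apply (hasFDerivAt_const (e2 j) x)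
    have h2 : fderiv ℝ (pd j F) x = _ := h1.fderiv
    rw [pd, h2]
    simp
  rw [key, key]
  have hs : IsSymmSndFDerivAt ℝ F x :=
    hF.contDiffAt.isSymmSndFDerivAt (by simpa using (WithTop.coe_le_coe.2 (le_top : (2:ℕ∞) ≤ ⊤) : ((2:ℕ∞):WithTop ℕ∞) ≤ ((⊤:ℕ∞):WithTop ℕ∞)))
  exact hs (e2 i) (e2 j)

lemma int_cs {F : E2 → ℝ} (h : Continuous F) (hc : HasCompactSupport F) : Integrable F :=
  h.integrable_of_hasCompactSupport hc

/-- Integration by parts, no boundary term because the product has compact support. -/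
lemma ibp {F G : E2 → ℝ} (hF : Sm F) (hG : Sm G) (hc : HasCompactSupport F ∨ HasCompactSupport G)
    (i : Fin 2) : ∫ x, F x * pd i G x = - ∫ x, pd i F x * G x := by
  have c1 : HasCompactSupport (fun x => pd i F x * G x) := by
    rcases hc with h | h
    · exact (hcs_pd h i).mul_right
    · exact h.mul_left
  have c2 : HasCompactSupport (fun x => F x * pd i G x) := by
    rcases hc with h | h
    · exact h.mul_right
    · exact (hcs_pd h i).mul_left
  have c3 : HasCompactSupport (fun x => F x * G x) := by
    rcases hc with h | h
    · exact h.mul_right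
    · exact h.mul_left
  exact integral_mul_fderiv_eq_neg_fderiv_mul_of_integrable
    (int_cs ((hF.pd i).cont.mul hG.cont) c1) (int_cs (hF.cont.mul (hG.pd i).cont) c2)
    (int_cs (hF.cont.mul hG.cont) c3) (fun x _ => hF.diff x) (fun x _ => hG.diff x)

lemma int_pd_zero {F : E2 → ℝ} (hF : Sm F) (hc : HasCompactSupport F) (i : Fin 2) :
    ∫ x, pd i F x = 0 := by
  have := ibp (F := fun _ => (1:ℝ)) (G := F) contDiff_const hF (Or.inr hc) i
  simpa [pd] using this

lemma fderiv_decomp (L : E2 →L[ℝ] ℝ) (v : E2) : L v = v 0 * L (e2 0) + v 1 * L (e2 1) := by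
  have : v = v 0 • e2 0 + v 1 • e2 1 := by
    ext i; fin_cases i <;> simp [e2]
  conv_lhs => rw [this]
  simp

lemma nsq (v : E2) : ‖v‖ ^ 2 = v 0 ^ 2 + v 1 ^ 2 := by
  rw [EuclideanSpace.norm_sq_eq]; simp [Fin.sum_univ_two]

lemma abs_le_norm2 (v : E2) (i : Fin 2) : |v i| ≤ ‖v‖ := by
  simpa using PiLp.norm_apply_le v i

lemma pdv_eq {u : E2 → E2} {x : E2} (hu : DifferentiableAt ℝ u x) (j i : Fin 2) :
    pdv j i u x = pd j (fun y => u y i) x := by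
  have h := hu.hasFDerivAt
  have h2 : HasFDerivAt (fun y => u y i)
      ((EuclideanSpace.proj i : E2 →L[ℝ] ℝ).comp (fderiv ℝ u x)) x :=
    (EuclideanSpace.proj i : E2 →L[ℝ] ℝ).hasFDerivAt.comp x h
  simp [pdv, pd, h2.fderiv]

lemma sm_comp {u : E2 → E2} (hu : ContDiff ℝ (⊤ : ℕ∞) u) (i : Fin 2) : Sm (fun y => u y i) :=
  (EuclideanSpace.proj i : E2 →L[ℝ] ℝ).contDiff.comp hu

/-! ### Differentiation under the integral sign -/

/-- Differentiation under the integral sign for a locally integrable weight and an integrand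
supported in a fixed compact set. -/
lemma par_deriv {κ : E2 → ℝ} (hκ : LocallyIntegrable κ) {Φ Φ' : ℝ → E2 → ℝ} {k : Set E2}
    (hk : IsCompact k) {a b s0 : ℝ} (hs0 : s0 ∈ Set.Ioo a b)
    (hΦ : ∀ s ∈ Set.Icc a b, Continuous (Φ s))
    (hd : ∀ s ∈ Set.Ioo a b, ∀ z, HasDerivAt (fun s => Φ s z) (Φ' s z) s)
    (hΦ' : ContinuousOn (fun q : ℝ × E2 => Φ' q.1 q.2) (Set.Icc a b ×ˢ Set.univ))
    (h0 : ∀ s ∈ Set.Icc a b, ∀ z, z ∉ k → Φ s z = 0)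
    (h0' : ∀ s ∈ Set.Icc a b, ∀ z, z ∉ k → Φ' s z = 0) :
    HasDerivAt (fun s => ∫ z, κ z * Φ s z) (∫ z, κ z * Φ' s0 z) s0 := by
  obtain ⟨C, hC⟩ := (isCompact_Icc.prod hk).exists_bound_of_continuousOn
    (hΦ'.mono (Set.prod_mono_right (Set.subset_univ k)))
  have hs0' : s0 ∈ Set.Icc a b := Set.Ioo_subset_Icc_self hs0
  have hc' : Continuous (Φ' s0) := by
    rw [← continuousOn_univ]
    exact hΦ'.comp (f := fun z => (s0, z)) (by fun_prop) (fun z _ => ⟨hs0', trivial⟩)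
  have hki : IntegrableOn κ k := hκ.integrableOn_isCompact hk
  have ki : Integrable (k.indicator κ) := hki.integrable_indicator hk.measurableSet
  have hm : ∀ s ∈ Set.Icc a b, Integrable (fun z => κ z * Φ s z) := by
    intro s hs
    have hcs : HasCompactSupport (Φ s) := HasCompactSupport.intro hk (h0 s hs)
    obtain ⟨M, hM⟩ := (hcs.exists_bound_of_continuous (hΦ s hs))
    have := ki.mul_bdd (g := Φ s) (c := M) (hΦ s hs).aestronglyMeasurable (Filter.Eventually.of_forall hM)
    refine this.congr (Filter.Eventually.of_forall fun z => ?_)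
    by_cases hz : z ∈ k
    · simp [hz]
    · simp [hz, h0 s hs z hz]
  refine (hasDerivAt_integral_of_dominated_loc_of_deriv_le (s := Set.Ioo a b)
    (F := fun s z => κ z * Φ s z) (F' := fun s z => κ z * Φ' s z)
    (bound := fun z => C * ‖k.indicator κ z‖)
    (Ioo_mem_nhds hs0.1 hs0.2) ?_ (hm s0 hs0') ?_ ?_ ?_ ?_).2
  · filter_upwards [Ioo_mem_nhds hs0.1 hs0.2] with s hs
    exact (hm s (Set.Ioo_subset_Icc_self hs)).aestronglyMeasurable
  · exact hκ.aestronglyMeasurable.mul hc'.aestronglyMeasurable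
  · refine Filter.Eventually.of_forall fun z s hs => ?_
    by_cases hz : z ∈ k
    · have := hC (s, z) ⟨Set.Ioo_subset_Icc_self hs, hz⟩
      simp only [hz, Set.indicator_of_mem, norm_mul] at this ⊢
      rw [mul_comm]
      gcongr
    · simp [hz, h0' s (Set.Ioo_subset_Icc_self hs) z hz]
  · exact ki.norm.const_mul C
  · exact Filter.Eventually.of_forall fun z s hs => (hd s hs z).const_mul _

/-- Smoothness and partial derivatives of a parametric integral over the plane. -/
lemma param_int {κ : E2 → ℝ} (hκ : LocallyIntegrable κ) {G : E2 → E2 → ℝ}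
    (hG : ContDiff ℝ (⊤ : ℕ∞) (fun q : E2 × E2 => G q.1 q.2)) {k : Set E2} (hk : IsCompact k)
    (x : E2) (h0 : ∀ p, ‖p - x‖ < 2 → ∀ z, z ∉ k → G p z = 0) :
    ContDiffAt ℝ (⊤ : ℕ∞) (fun p => ∫ z, κ z * G p z) x ∧
      ∀ j, pd j (fun p => ∫ z, κ z * G p z) x = ∫ z, κ z * pd j (fun p => G p z) x := by
  have hsm : ContDiffAt ℝ (⊤ : ℕ∞) (fun p => ∫ z, κ z * G p z) x := by
    have hneg : LocallyIntegrable (fun z => κ (-z)) := by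
      intro y
      obtain ⟨s, hs, hi⟩ := hκ (-y)
      refine ⟨Neg.neg ⁻¹' s, continuous_neg.tendsto y hs, ?_⟩
      exact ((Measure.measurePreserving_neg volume).integrableOn_comp_preimage
        (MeasurableEquiv.neg E2).measurableEmbedding).2 hi
    have h1 := contDiffOn_convolution_right_with_param (𝕜 := ℝ) (μ := volume)
      (f := fun z => κ (-z)) (n := (⊤ : ℕ∞))
      (ContinuousLinearMap.mul ℝ ℝ) (g := fun p t => G p t) (s := ball x 2) (k := k)
      isOpen_ball hk (fun p t hp ht => h0 p (by simpa [dist_eq_norm] using hp) _ ht)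
      hneg
      (by
        apply ContDiff.contDiffOn
        exact hG)
    have h2 : ContDiffAt ℝ (⊤ : ℕ∞) (fun q : E2 × E2 => convolution (fun z => κ (-z)) (fun t => G q.1 t)
        (ContinuousLinearMap.mul ℝ ℝ) volume q.2) (x, 0) :=
      h1.contDiffAt ((isOpen_ball.prod isOpen_univ).mem_nhds ⟨mem_ball_self (by norm_num), trivial⟩)
    have h3 := h2.comp x (f := fun p : E2 => (p, (0:E2))) (contDiffAt_id.prodMk contDiffAt_const)
    refine h3.congr_of_eventuallyEq (Filter.Eventually.of_forall fun p => ?_)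
    simp only [Function.comp, convolution_def, ContinuousLinearMap.mul_apply']
    conv_lhs => rw [← integral_neg_eq_self]
    simp
  refine ⟨hsm, fun j => ?_⟩
  have hdiff : DifferentiableAt ℝ (fun p => ∫ z, κ z * G p z) x := hsm.differentiableAt (by simp)
  have hline : ∀ s : ℝ, HasDerivAt (fun s : ℝ => x + s • e2 j) (e2 j) s := fun s => by
    simpa using ((hasDerivAt_id s).smul_const (e2 j)).const_add x
  have e1 : HasDerivAt (fun s : ℝ => ∫ z, κ z * G (x + s • e2 j) z)
      (pd j (fun p => ∫ z, κ z * G p z) x) 0 := by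
    have h := hdiff.hasFDerivAt
    have := HasFDerivAt.comp_hasDerivAt (f := fun s : ℝ => x + s • e2 j) (0:ℝ) (by simpa using h) (hline 0)
    exact this
  have hGz : ∀ z, Sm (fun p => G p z) := fun z => hG.comp (contDiff_id.prodMk contDiff_const)
  have hpdG : ∀ p z, pd j (fun p => G p z) p = fderiv ℝ (fun q : E2 × E2 => G q.1 q.2) (p, z) (e2 j, 0) := by
    intro p z
    have h1 := ((hG.differentiable (by simp)) (p, z)).hasFDerivAt
    have h2 : HasFDerivAt (fun p : E2 => (p, z)) (ContinuousLinearMap.inl ℝ E2 E2) p := by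
      simpa using hasFDerivAt_prodMk_left p z
    have h3 := (h1.comp p h2).fderiv
    simp only [pd]
    have h4 : fderiv ℝ (fun p => G p z) p = _ := h3
    rw [h4]; simp
  have hcont : Continuous (fun q : E2 × E2 => pd j (fun p => G p q.2) q.1) := by
    simp_rw [hpdG]
    exact (hG.continuous_fderiv (by simp)).clm_apply continuous_const
  have hnear : ∀ s : ℝ, s ∈ Set.Icc (-1:ℝ) 1 → ‖x + s • e2 j - x‖ < 2 := by
    intro s hs
    have : |s| ≤ 1 := abs_le.2 hs
    simp [e2, norm_smul]; linarith
  have e2' := par_deriv hκ (Φ := fun s z => G (x + s • e2 j) z)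
    (Φ' := fun s z => pd j (fun p => G p z) (x + s • e2 j)) hk (a := -1) (b := 1) (s0 := 0)
    (by simp) (fun s _ => hG.continuous.comp (f := fun z => (x + s • e2 j, z)) (by fun_prop))
    (fun s _ z => by
      have h := ((hGz z).diff (x + s • e2 j)).hasFDerivAt
      have := HasFDerivAt.comp_hasDerivAt (f := fun s : ℝ => x + s • e2 j) s h (hline s)
      exact this)
    ((hcont.comp (f := fun q : ℝ × E2 => (x + q.1 • e2 j, q.2)) (by fun_prop)).continuousOn)
    (fun s hs z hz => h0 _ (hnear s hs) z hz)
    (fun s hs z hz => by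
      have : (fun p => G p z) =ᶠ[nhds (x + s • e2 j)] fun _ => 0 := by
        have : ball x 2 ∈ nhds (x + s • e2 j) :=
          isOpen_ball.mem_nhds (by simpa [dist_eq_norm] using hnear s hs)
        filter_upwards [this] with p hp
        exact h0 p (by simpa [dist_eq_norm] using hp) z hz
      simp [pd, this.fderiv_eq])
  have := e1.unique e2'
  simpa using this

/-! ### A radial mollifier -/

/-- Cauchy–Schwarz for real integrals. -/
lemma cs_int {X : Type*} [MeasurableSpace X] {μ : Measure X} {f g : X → ℝ}
    (hf : AEStronglyMeasurable f μ) (hg : AEStronglyMeasurable g μ)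
    (hf2 : Integrable (fun x => f x ^ 2) μ) (hg2 : Integrable (fun x => g x ^ 2) μ) :
    Integrable (fun x => f x * g x) μ ∧
    |∫ x, f x * g x ∂μ| ≤ √(∫ x, f x ^ 2 ∂μ) * √(∫ x, g x ^ 2 ∂μ) := by
  have mf : MemLp f 2 μ := (memLp_two_iff_integrable_sq hf).2 hf2
  have mg : MemLp g 2 μ := (memLp_two_iff_integrable_sq hg).2 hg2
  refine ⟨mf.integrable_mul mg, ?_⟩
  have h := integral_mul_norm_le_Lp_mul_Lq (μ := μ) (f := f) (g := g) (p := 2) (q := 2)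
    (by norm_num [Real.holderConjugate_iff]) (by simpa using mf) (by simpa using mg)
  calc |∫ x, f x * g x ∂μ| ≤ ∫ x, ‖f x * g x‖ ∂μ := norm_integral_le_integral_norm (fun x => f x * g x)
    _ = ∫ x, ‖f x‖ * ‖g x‖ ∂μ := by simp
    _ ≤ _ := h
    _ = _ := by simp [Real.sqrt_eq_rpow]

/-- A mollifier `ρ` with unit integral together with a compactly supported `ψ` such that `∇ψ = -zρ`;
such a `ψ` exists because `ρ` is radial. -/
lemma exists_moll : ∃ ρ ψ : E2 → ℝ, Sm ρ ∧ Sm ψ ∧ (∀ z, 1 < ‖z‖ → ρ z = 0) ∧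
    (∀ z, 1 < ‖z‖ → ψ z = 0) ∧ ∫ z, ρ z = 1 ∧ ∀ i z, pd i ψ z = - (z i * ρ z) := by
  set st := Real.smoothTransition
  have hst : ContDiff ℝ (⊤ : ℕ∞) st := Real.smoothTransition.contDiff
  have hst' : ContDiff ℝ (⊤ : ℕ∞) (deriv st) := ((contDiff_infty_iff_deriv (f := st)).1 hst).2
  have hq : ContDiff ℝ (⊤ : ℕ∞) (fun z : E2 => 1 - ‖z‖ ^ 2) := contDiff_const.sub (contDiff_norm_sq ℝ)
  set ψ0 : E2 → ℝ := fun z => st (1 - ‖z‖ ^ 2) with hψ0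
  set ρ0 : E2 → ℝ := fun z => 2 * deriv st (1 - ‖z‖ ^ 2) with hρ0
  have sψ : Sm ψ0 := hst.comp hq
  have sρ : Sm ρ0 := contDiff_const.mul (hst'.comp hq)
  have hneg : ∀ z : E2, 1 < ‖z‖ → 1 - ‖z‖ ^ 2 < 0 := fun z hz => by nlinarith
  have zψ : ∀ z, 1 < ‖z‖ → ψ0 z = 0 := fun z hz =>
    Real.smoothTransition.zero_of_nonpos (hneg z hz).le
  have zρ : ∀ z, 1 < ‖z‖ → ρ0 z = 0 := fun z hz => by
    have : st =ᶠ[nhds (1 - ‖z‖ ^ 2)] fun _ => 0 := by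
      filter_upwards [Iio_mem_nhds (hneg z hz)] with y hy
      exact Real.smoothTransition.zero_of_nonpos (le_of_lt hy)
    simp [hρ0, this.deriv_eq]
  have hpd : ∀ i z, pd i ψ0 z = - (z i * ρ0 z) := by
    intro i z
    have h1 : HasFDerivAt (fun z : E2 => 1 - ‖z‖ ^ 2) (-(2 • (innerSL ℝ z))) z :=
      (hasStrictFDerivAt_norm_sq z).hasFDerivAt.const_sub 1
    have h2 : HasDerivAt st (deriv st (1 - ‖z‖ ^ 2)) (1 - ‖z‖ ^ 2) :=
      (hst.differentiable (by simp) _).hasDerivAt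
    have h3 := (h2.comp_hasFDerivAt z h1).fderiv
    have h4 : fderiv ℝ ψ0 z = _ := h3
    rw [pd, h4]
    simp [e2, hρ0, EuclideanSpace.inner_single_right]
    ring
  have cρ : HasCompactSupport ρ0 := HasCompactSupport.intro (isCompact_closedBall (0:E2) 1)
    (fun z hz => zρ z (by simpa using hz))
  have hN : 0 < ∫ z, ρ0 z := by
    have hnn : 0 ≤ ρ0 := fun z => by
      have : 0 ≤ deriv st (1 - ‖z‖ ^ 2) := Real.smoothTransition.monotone.deriv_nonneg
      simp only [hρ0, Pi.zero_apply]; positivity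
    obtain ⟨x, hx⟩ : ∃ x, ρ0 x ≠ 0 := by
      by_contra! hcon
      have h0 : ∀ x, fderiv ℝ ψ0 x = 0 := fun x => by
        ext v
        rw [fderiv_decomp (fderiv ℝ ψ0 x) v]
        have a0 := hpd 0 x
        have a1 := hpd 1 x
        simp only [pd, hcon, mul_zero, neg_zero] at a0 a1
        simp [a0, a1]
      have h1 := is_const_of_fderiv_eq_zero sψ.diff h0 0 ((2:ℝ) • e2 0)
      rw [zψ ((2:ℝ) • e2 0) (by simp [e2, norm_smul])] at h1
      have h2 : ψ0 0 = 1 := by simp [hψ0, st]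
      rw [h1] at h2
      norm_num at h2
    exact sρ.cont.integral_pos_of_hasCompactSupport_nonneg_nonzero cρ hnn hx
  refine ⟨fun z => (∫ z, ρ0 z)⁻¹ * ρ0 z, fun z => (∫ z, ρ0 z)⁻¹ * ψ0 z, contDiff_const.mul sρ,
    contDiff_const.mul sψ, fun z hz => by simp [zρ z hz], fun z hz => by simp [zψ z hz], ?_, ?_⟩
  · rw [integral_const_mul, inv_mul_cancel₀ hN.ne']
  · intro i z
    rw [pd_const_mul (sψ.diff z), hpd]; ring

/-! ### Approximation of bounded-vorticity fields by averages -/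

/-- The average of `F` around `x` at scale `c` with profile `ρ`. -/
def mo (ρ : E2 → ℝ) (c : ℝ) (F : E2 → ℝ) (x : E2) : ℝ := ∫ z, ρ z * F (x + c • z)

lemma hcs_of_zero {ρ : E2 → ℝ} (R : ℝ) (h : ∀ z, R < ‖z‖ → ρ z = 0) : HasCompactSupport ρ :=
  HasCompactSupport.intro (isCompact_closedBall (0:E2) R) (fun z hz => h z (by simpa using hz))

lemma sm_aff {F : E2 → ℝ} (hF : Sm F) (x : E2) (c : ℝ) : Sm (fun z => F (x + c • z)) :=
  hF.comp (contDiff_const.add (contDiff_id.const_smul c))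

lemma mo_param {ρ F : E2 → ℝ} (hρ : Sm ρ) (h0 : ∀ z, 1 < ‖z‖ → ρ z = 0) (hF : Sm F) (c : ℝ) :
    Sm (mo ρ c F) ∧ ∀ j x, pd j (mo ρ c F) x = mo ρ c (pd j F) x := by
  have hG : ContDiff ℝ (⊤ : ℕ∞) (fun q : E2 × E2 => ρ q.2 * F (q.1 + c • q.2)) :=
    (hρ.comp contDiff_snd).mul (hF.comp (contDiff_fst.add (contDiff_snd.const_smul c)))
  have key := fun x => param_int (κ := fun _ => 1) (locallyIntegrable_const 1)
    (G := fun p z => ρ z * F (p + c • z)) hG (isCompact_closedBall (0:E2) 1) x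
    (fun p _ z hz => by simp [h0 z (by simpa using hz)])
  simp only [one_mul] at key
  refine ⟨contDiff_iff_contDiffAt.2 fun x => (key x).1, fun j x => ?_⟩
  have := (key x).2 j
  rw [show mo ρ c F = fun p => ∫ z, ρ z * F (p + c • z) from rfl, this, mo]
  congr 1; funext z
  have hd : DifferentiableAt ℝ (fun p => F (p + c • z)) x :=
    (show Sm fun p : E2 => F (p + c • z) from hF.comp (contDiff_id.add contDiff_const)).diff x
  rw [pd_const_mul hd]
  congr 1
  simp only [pd]
  rw [fderiv_comp_add_right]

lemma mo_deriv {ρ F : E2 → ℝ} (hρ : Sm ρ) (h0 : ∀ z, 1 < ‖z‖ → ρ z = 0) (hF : Sm F) (c : ℝ)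
    (x : E2) : HasDerivAt (fun c => mo ρ c F x)
      (∫ z, ρ z * (z 0 * pd 0 F (x + c • z) + z 1 * pd 1 F (x + c • z))) c := by
  have hp : ∀ i : Fin 2, Continuous fun q : ℝ × E2 => pd i F (x + q.1 • q.2) := fun i =>
    (hF.pd i).cont.comp (by fun_prop)
  have h := par_deriv (κ := fun _ => 1) (locallyIntegrable_const 1)
    (Φ := fun c z => ρ z * F (x + c • z))
    (Φ' := fun c z => ρ z * (z 0 * pd 0 F (x + c • z) + z 1 * pd 1 F (x + c • z)))
    (isCompact_closedBall (0:E2) 1) (a := c - 1) (b := c + 1) (s0 := c) (by simp)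
    (fun s _ => hρ.cont.mul (hF.cont.comp (by fun_prop)))
    (fun s _ z => by
      have hline : HasDerivAt (fun s : ℝ => x + s • z) z s := by
        simpa using ((hasDerivAt_id s).smul_const z).const_add x
      have := (HasFDerivAt.comp_hasDerivAt (f := fun s : ℝ => x + s • z) s
        (hF.diff (x + s • z)).hasFDerivAt hline).const_mul (ρ z)
      rw [fderiv_decomp] at this
      exact this)
    ((by
      have := hρ.cont
      have := hp 0
      have := hp 1
      fun_prop : Continuous fun q : ℝ × E2 => ρ q.2 * (q.2 0 * pd 0 F (x + q.1 • q.2)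
        + q.2 1 * pd 1 F (x + q.1 • q.2)))).continuousOn
    (fun s _ z hz => by simp [h0 z (by simpa using hz)])
    (fun s _ z hz => by simp [h0 z (by simpa using hz)])
  simp only [one_mul] at h; exact h

/-- The `c`-derivative of an average of a component `F` of a divergence free field only sees the
vorticity `ω`, because the profile is radial. -/
lemma mo_deriv_curl {ρ ψ F B ω : E2 → ℝ} (hρ : Sm ρ) (h0 : ∀ z, 1 < ‖z‖ → ρ z = 0) (hψ : Sm ψ)
    (h0' : ∀ z, 1 < ‖z‖ → ψ z = 0) (hψρ : ∀ i z, pd i ψ z = - (z i * ρ z))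
    (hF : Sm F) (hB : Sm B) (hω : Sm ω) {i j : Fin 2} (hij : i ≠ j)
    (h1 : ∀ y, pd i F y = - pd j B y) (h2 : ∀ y, pd j F y = pd i B y + ω y) (c : ℝ) (x : E2) :
    HasDerivAt (fun c => mo ρ c F x) (- ∫ z, pd j ψ z * ω (x + c • z)) c := by
  have hc : HasCompactSupport ψ := hcs_of_zero 1 h0'
  have h := mo_deriv hρ h0 hF c x
  convert h using 1
  have e1 : ∀ z, ρ z * (z 0 * pd 0 F (x + c • z) + z 1 * pd 1 F (x + c • z))
      = pd i ψ z * pd j B (x + c • z) - pd j ψ z * pd i B (x + c • z)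
        - pd j ψ z * ω (x + c • z) := by
    intro z
    have : z 0 * pd 0 F (x + c • z) + z 1 * pd 1 F (x + c • z)
      = z i * pd i F (x + c • z) + z j * pd j F (x + c • z) := by
      fin_cases i <;> fin_cases j <;> simp_all <;> ring
    rw [this, h1, h2, hψρ, hψρ]; ring
  have i1 : ∀ (k : Fin 2) (H : E2 → ℝ), Sm H →
      Integrable fun z => pd k ψ z * H (x + c • z) := fun k H hH =>
    int_cs ((hψ.pd k).cont.mul (sm_aff hH x c).cont) ((hcs_pd hc k).mul_right)
  have e2 : ∀ (k : Fin 2) (H : E2 → ℝ), Sm H → ∫ z, pd k ψ z * H (x + c • z)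
      = - ∫ z, ψ z * (c * pd k H (x + c • z)) := fun k H hH => by
    have := ibp hψ (sm_aff hH x c) (Or.inl hc) k
    simp_rw [pd_comp_affine hH.diff] at this
    linarith
  have i12 : Integrable fun z => pd i ψ z * pd j B (x + c • z) - pd j ψ z * pd i B (x + c • z) :=
    (i1 i _ (hB.pd j)).sub (i1 j _ (hB.pd i))
  simp_rw [e1]
  rw [integral_sub i12 (i1 j _ hω),
    integral_sub (i1 i _ (hB.pd j)) (i1 j _ (hB.pd i)), e2 i _ (hB.pd j), e2 j _ (hB.pd i),
    pd_comm hB i j]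
  ring

lemma int_affine (x : E2) {r : ℝ} (hr : 0 < r) (F : E2 → ℝ) :
    ∫ z in ball (0:E2) 2, F (x + r • z) = (r ^ 2)⁻¹ * ∫ y in ball x (2 * r), F y := by
  rw [← integral_indicator measurableSet_ball, ← integral_indicator measurableSet_ball]
  have h := Measure.integral_comp_smul (volume : Measure E2)
    (fun w => (ball x (2 * r)).indicator F (x + w)) r
  rw [integral_add_left_eq_self (fun w => (ball x (2 * r)).indicator F w) x] at h
  simp only [finrank_euclideanSpace, Fintype.card_fin, smul_eq_mul] at h
  rw [abs_of_pos (by positivity)] at h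
  rw [← h]
  congr 1; funext z
  have : z ∈ ball (0:E2) 2 ↔ x + r • z ∈ ball x (2 * r) := by
    simp [norm_smul, abs_of_pos hr]
    constructor <;> intro h <;> nlinarith
  by_cases hz : z ∈ ball (0:E2) 2
  · rw [Set.indicator_of_mem hz, Set.indicator_of_mem (this.1 hz)]
  · rw [Set.indicator_of_notMem hz, Set.indicator_of_notMem (fun h => hz (this.2 h))]

/-- Cauchy–Schwarz for an average at scale `r`, after rescaling to the physical ball. -/
lemma mo_cs {ρ F : E2 → ℝ} (hρ : Sm ρ) (h0 : ∀ z, 1 < ‖z‖ → ρ z = 0) (hF : Sm F) {r : ℝ}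
    (hr : 0 < r) (x : E2) :
    |∫ z, ρ z * F (x + r • z)| ≤ √(∫ z, ρ z ^ 2) * (r⁻¹ * √(∫ y in ball x (2 * r), F y ^ 2)) := by
  have hc := hcs_of_zero 1 h0
  have hρ2 : Integrable fun z => ρ z ^ 2 := int_cs (hρ.cont.pow 2) (by
    simp_rw [sq]; exact hc.mul_left)
  have e : ∫ z, ρ z * F (x + r • z) = ∫ z in ball (0:E2) 2, ρ z * F (x + r • z) := by
    symm; apply setIntegral_eq_integral_of_forall_compl_eq_zero
    intro z hz
    rw [h0 z (by simp at hz; linarith)]; simp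
  have hFc := (sm_aff hF x r).cont
  have i2 : IntegrableOn (fun z => F (x + r • z) ^ 2) (ball (0:E2) 2) :=
    ((hFc.pow 2).continuousOn.integrableOn_compact (isCompact_closedBall (0:E2) 2)).mono_set
      ball_subset_closedBall
  have h := (cs_int (μ := volume.restrict (ball (0:E2) 2)) hρ.cont.aestronglyMeasurable
    hFc.aestronglyMeasurable hρ2.integrableOn i2).2
  rw [e]
  refine h.trans ?_
  rw [int_affine x hr (fun y => F y ^ 2), Real.sqrt_mul (by positivity), Real.sqrt_inv,
    Real.sqrt_sq hr.le]
  refine mul_le_mul_of_nonneg_right (Real.sqrt_le_sqrt (setIntegral_le_integral hρ2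
    (Filter.Eventually.of_forall fun z => sq_nonneg _))) (by positivity)

/-- Approximation of a divergence free field by averages `mo ρ c`: rate of convergence,
logarithmic gradient growth, and bounds by local `L²` norms. -/
lemma moll_bounds : ∃ ρ : E2 → ℝ, ∃ C : ℝ, 0 < C ∧ Sm ρ ∧ (∀ z, 1 < ‖z‖ → ρ z = 0) ∧
    ∀ (i j : Fin 2), i ≠ j → ∀ (F B ω : E2 → ℝ) (K : ℝ), 0 ≤ K → Sm F → Sm B → Sm ω →
      (∀ y, pd i F y = - pd j B y) → (∀ y, pd j F y = pd i B y + ω y) → (∀ y, |ω y| ≤ K) →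
      (∀ x c, 0 ≤ c → |mo ρ c F x - F x| ≤ C * c * K) ∧
      (∀ x c r k, 0 < c → c ≤ r →
        |pd k (mo ρ c F) x| ≤ |pd k (mo ρ r F) x| + C * K * Real.log (r / c)) ∧
      (∀ x r, 0 < r → |mo ρ r F x| ≤ C / r * √(∫ y in ball x (2 * r), F y ^ 2)) ∧
      (∀ x r k, 0 < r → |pd k (mo ρ r F) x| ≤ C / r ^ 2 * √(∫ y in ball x (2 * r), F y ^ 2)) := by
  obtain ⟨ρ, ψ, hρ, hψ, h0, h0', hInt, hψρ⟩ := exists_moll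
  have hcψ : HasCompactSupport ψ := hcs_of_zero 1 h0'
  have hcρ : HasCompactSupport ρ := hcs_of_zero 1 h0
  set C1 := ∑ j : Fin 2, ∫ z, |pd j ψ z| with hC1
  set C2 := ∑ k : Fin 2, ∑ j : Fin 2, ∫ z, |pd k (pd j ψ) z| with hC2
  set C3 := √(∫ z, ρ z ^ 2) with hC3
  set C4 := ∑ k : Fin 2, √(∫ z, pd k ρ z ^ 2) with hC4
  have b1 : ∀ j : Fin 2, ∫ z, |pd j ψ z| ≤ C1 := fun j =>
    Finset.single_le_sum (f := fun j : Fin 2 => ∫ z, |pd j ψ z|)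
      (fun j _ => integral_nonneg fun z => abs_nonneg _) (Finset.mem_univ j)
  have b2 : ∀ k j : Fin 2, ∫ z, |pd k (pd j ψ) z| ≤ C2 := fun k j =>
    (Finset.single_le_sum (f := fun j : Fin 2 => ∫ z, |pd k (pd j ψ) z|)
      (fun j _ => integral_nonneg fun z => abs_nonneg _) (Finset.mem_univ j)).trans
    (Finset.single_le_sum (f := fun k : Fin 2 => ∑ j : Fin 2, ∫ z, |pd k (pd j ψ) z|)
      (fun k _ => Finset.sum_nonneg fun j _ => integral_nonneg fun z => abs_nonneg _)
        (Finset.mem_univ k))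
  have b4 : ∀ k : Fin 2, √(∫ z, pd k ρ z ^ 2) ≤ C4 := fun k =>
    Finset.single_le_sum (f := fun k : Fin 2 => √(∫ z, pd k ρ z ^ 2))
      (fun j _ => Real.sqrt_nonneg _) (Finset.mem_univ k)
  have p1 : 0 ≤ C1 := (integral_nonneg fun z => abs_nonneg _).trans (b1 0)
  have p2 : 0 ≤ C2 := (integral_nonneg fun z => abs_nonneg _).trans (b2 0 0)
  have p3 : 0 ≤ C3 := Real.sqrt_nonneg _
  have p4 : 0 ≤ C4 := (Real.sqrt_nonneg _).trans (b4 0)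
  -- an integral of a compactly supported kernel against a bounded function
  have bd : ∀ (κ ω : E2 → ℝ) (K : ℝ), Sm κ → HasCompactSupport κ → (∀ y, |ω y| ≤ K) → 0 ≤ K →
      |∫ z, κ z * ω z| ≤ (∫ z, |κ z|) * K := by
    intro κ ω K hκ hcκ hω hK
    rw [← integral_mul_const, ← Real.norm_eq_abs]
    refine norm_integral_le_of_norm_le ((int_cs hκ.cont hcκ).abs.mul_const K)
      (Filter.Eventually.of_forall fun z => ?_)
    rw [norm_mul]
    exact mul_le_mul_of_nonneg_left (hω z) (abs_nonneg _)
  refine ⟨ρ, C1 + C2 + C3 + C4 + 1, by positivity, hρ, h0, ?_⟩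
  intro i j hij F B ω K hK hF hB hω h1 h2 hωK
  refine ⟨?_, ?_, ?_, ?_⟩
  · intro x c hc
    have hd : ∀ s ∈ Set.Icc (0:ℝ) c, HasDerivWithinAt (fun c => mo ρ c F x)
        (- ∫ z, pd j ψ z * ω (x + s • z)) (Set.Icc 0 c) s := fun s _ =>
      (mo_deriv_curl hρ h0 hψ h0' hψρ hF hB hω hij h1 h2 s x).hasDerivWithinAt
    have := norm_image_sub_le_of_norm_deriv_le_segment' (C := C1 * K) hd (fun s _ => by
      rw [norm_neg, Real.norm_eq_abs]
      refine (bd _ (fun z => ω (x + s • z)) K (hψ.pd j) (hcs_pd hcψ j) (fun z => hωK _) hK).trans ?_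
      gcongr
      exact b1 j) c (Set.right_mem_Icc.2 hc)
    simp only [mo, zero_smul, add_zero, sub_zero] at this
    rw [integral_mul_const, hInt, one_mul] at this
    refine (this : |_| ≤ _).trans ?_
    have : 0 ≤ (C2 + C3 + C4 + 1) * (c * K) := by positivity
    linarith
  · intro x c r k hc hcr
    have hk1 : ∀ y, pd i (pd k F) y = - pd j (pd k B) y := fun y => by
      rw [pd_comm hF, pd_comm hB]
      rw [show pd i F = fun y => - pd j B y from funext h1, pd_neg]
    have hk2 : ∀ y, pd j (pd k F) y = pd i (pd k B) y + pd k ω y := fun y => by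
      rw [pd_comm hF, pd_comm hB]
      rw [show pd j F = fun y => pd i B y + ω y from funext h2,
        pd_add ((hB.pd i).diff y) (hω.diff y)]
    have hd : ∀ s, 0 < s → HasDerivAt (fun c => mo ρ c (pd k F) x)
        (s⁻¹ * ∫ z, pd k (pd j ψ) z * ω (x + s • z)) s := fun s hs => by
      have h := mo_deriv_curl hρ h0 hψ h0' hψρ (hF.pd k) (hB.pd k) (hω.pd k) hij hk1 hk2 s x
      convert h using 1
      have := ibp (hψ.pd j) (sm_aff hω x s) (Or.inl (hcs_pd hcψ j)) k
      simp_rw [pd_comp_affine hω.diff] at this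
      rw [show (∫ z, pd k (pd j ψ) z * ω (x + s • z)) = - ∫ z, pd j ψ z * (s * pd k ω (x + s • z))
        by linarith]
      rw [show (∫ z, pd j ψ z * (s * pd k ω (x + s • z))) = s * ∫ z, pd j ψ z * pd k ω (x + s • z) by
        rw [← integral_const_mul]; congr 1; funext z; ring]
      field_simp
    -- logarithmic change of variable in the scale
    have hd2 : ∀ τ ∈ Set.Icc (Real.log c) (Real.log r), HasDerivWithinAt
        (fun τ => mo ρ (Real.exp τ) (pd k F) x)
        (∫ z, pd k (pd j ψ) z * ω (x + Real.exp τ • z)) (Set.Icc (Real.log c) (Real.log r)) τ := by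
      intro τ _
      have := (hd (Real.exp τ) (Real.exp_pos τ)).comp τ (Real.hasDerivAt_exp τ)
      refine (this.congr_deriv ?_).hasDerivWithinAt
      have := Real.exp_pos τ
      field_simp
    have hr : 0 < r := hc.trans_le hcr
    have := norm_image_sub_le_of_norm_deriv_le_segment' (C := C2 * K) hd2 (fun s _ => by
      rw [Real.norm_eq_abs]
      refine (bd _ (fun z => ω (x + Real.exp s • z)) K ((hψ.pd j).pd k) (hcs_pd (hcs_pd hcψ j) k)
        (fun z => hωK _) hK).trans ?_
      gcongr
      exact b2 k j) (Real.log r) (Set.right_mem_Icc.2 (Real.log_le_log hc hcr))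
    rw [Real.exp_log hr, Real.exp_log hc, ← Real.log_div hr.ne' hc.ne'] at this
    rw [(mo_param hρ h0 hF c).2, (mo_param hρ h0 hF r).2]
    have h3 : 0 ≤ (C1 + C3 + C4 + 1) * (K * Real.log (r / c)) := by
      have : 0 ≤ Real.log (r / c) := Real.log_nonneg (by rwa [le_div_iff₀ hc, one_mul])
      positivity
    have h4 := abs_sub_abs_le_abs_sub (mo ρ c (pd k F) x) (mo ρ r (pd k F) x)
    rw [abs_sub_comm] at h4
    rw [Real.norm_eq_abs] at this
    linarith
  · intro x r hr
    refine (mo_cs hρ h0 hF hr x).trans ?_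
    rw [← mul_assoc, ← div_eq_mul_inv]
    gcongr
    linarith
  · intro x r k hr
    rw [(mo_param hρ h0 hF r).2, mo]
    have h5 : ∀ z, 1 < ‖z‖ → pd k ρ z = 0 := fun z hz => by
      have : ρ =ᶠ[nhds z] fun _ => 0 := by
        filter_upwards [continuous_norm.continuousAt.preimage_mem_nhds (Ioi_mem_nhds hz)] with y hy
        exact h0 y hy
      simp [pd, this.fderiv_eq]
    have h6 := mo_cs (hρ.pd k) h5 hF hr x
    have := ibp hρ (sm_aff hF x r) (Or.inl hcρ) k
    simp_rw [pd_comp_affine hF.diff] at this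
    rw [show (∫ z, ρ z * (r * pd k F (x + r • z))) = r * ∫ z, ρ z * pd k F (x + r • z) by
        rw [← integral_const_mul]; congr 1; funext z; ring] at this
    have h7 : |∫ z, ρ z * pd k F (x + r • z)| = r⁻¹ * |∫ z, pd k ρ z * F (x + r • z)| := by
      rw [← abs_neg (∫ z, pd k ρ z * F (x + r • z)), ← this, abs_mul, abs_of_pos hr]
      field_simp
    rw [h7]
    calc r⁻¹ * |∫ z, pd k ρ z * F (x + r • z)| ≤ r⁻¹ * (√(∫ z, pd k ρ z ^ 2) * (r⁻¹ * √(∫ y in ball x (2 * r), F y ^ 2))) := by gcongr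
      _ ≤ r⁻¹ * ((C1 + C2 + C3 + C4 + 1) * (r⁻¹ * √(∫ y in ball x (2 * r), F y ^ 2))) := by
        gcongr; linarith [b4 k]
      _ = _ := by field_simp

/-! ### The local div-curl estimate -/

lemma Sm.mul' {F G : E2 → ℝ} (hF : Sm F) (hG : Sm G) : Sm fun x => F x * G x := ContDiff.mul hF hG

lemma Sm.add' {F G : E2 → ℝ} (hF : Sm F) (hG : Sm G) : Sm fun x => F x + G x := ContDiff.add hF hG

lemma Sm.sub' {F G : E2 → ℝ} (hF : Sm F) (hG : Sm G) : Sm fun x => F x - G x := ContDiff.sub hF hG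

lemma Sm.neg' {F : E2 → ℝ} (hF : Sm F) : Sm fun x => - F x := ContDiff.neg hF

lemma Sm.pow' {F : E2 → ℝ} (hF : Sm F) (n : ℕ) : Sm fun x => F x ^ n := ContDiff.pow hF n

lemma Sm.const_mul' {F : E2 → ℝ} (hF : Sm F) (c : ℝ) : Sm fun x => c * F x :=
  ContDiff.mul contDiff_const hF

lemma iadd {X : Type*} [MeasurableSpace X] {μ : Measure X} {f g : X → ℝ} (hf : Integrable f μ)
    (hg : Integrable g μ) : Integrable (fun x => f x + g x) μ := hf.add hg

lemma isub {X : Type*} [MeasurableSpace X] {μ : Measure X} {f g : X → ℝ} (hf : Integrable f μ)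
    (hg : Integrable g μ) : Integrable (fun x => f x - g x) μ := hf.sub hg

/-- Caccioppoli type estimate: the full gradient of a planar field is controlled by its
divergence, its curl and the field itself, since `∂₁a∂₀b − ∂₀a∂₁b` is a null Lagrangian. -/
lemma ell {a b η : E2 → ℝ} (ha : Sm a) (hb : Sm b) (hη : Sm η) (hc : HasCompactSupport η) :
    ∫ x, η x ^ 2 * (pd 0 a x ^ 2 + pd 1 a x ^ 2 + pd 0 b x ^ 2 + pd 1 b x ^ 2) ≤
      2 * (∫ x, η x ^ 2 * ((pd 0 a x + pd 1 b x) ^ 2 + (pd 0 b x - pd 1 a x) ^ 2)) +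
      16 * ∫ x, (pd 0 η x ^ 2 + pd 1 η x ^ 2) * (a x ^ 2 + b x ^ 2) := by
  have hη2 : HasCompactSupport (fun x => η x ^ 2) := by
    simp_rw [sq]; exact hc.mul_left
  have cη := hη.cont
  have ca := ha.cont
  have cb := hb.cont
  have c1 := fun i => (hη.pd i).cont
  have c2 := fun i => (ha.pd i).cont
  have c3 := fun i => (hb.pd i).cont
  have hQ : ∀ i : Fin 2, Sm (fun x => η x ^ 2 * a x * pd i b x) := fun i =>
    ((hη.pow 2).mul ha).mul (hb.pd i)
  have cQ : ∀ i : Fin 2, HasCompactSupport (fun x => η x ^ 2 * a x * pd i b x) := fun i =>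
    (hη2.mul_right).mul_right
  have z1 := int_pd_zero (hQ 0) (cQ 0) 1
  have z0 := int_pd_zero (hQ 1) (cQ 1) 0
  have eQ : ∀ (i k : Fin 2) x, pd k (fun x => η x ^ 2 * a x * pd i b x) x =
      2 * η x * pd k η x * a x * pd i b x + η x ^ 2 * pd k a x * pd i b x
        + η x ^ 2 * a x * pd k (pd i b) x := by
    intro i k x
    rw [pd_mul (((hη.pow' 2).mul' ha).diff x) ((hb.pd i).diff x),
      pd_mul ((hη.pow' 2).diff x) (ha.diff x)]
    simp_rw [sq]
    rw [pd_mul (hη.diff x) (hη.diff x)]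
    ring
  have i1 : Integrable fun x => η x ^ 2 * (pd 0 a x ^ 2 + pd 1 a x ^ 2 + pd 0 b x ^ 2 + pd 1 b x ^ 2) :=
    int_cs (by fun_prop) hη2.mul_right
  have i2 : Integrable fun x => η x ^ 2 * ((pd 0 a x + pd 1 b x) ^ 2 + (pd 0 b x - pd 1 a x) ^ 2) :=
    int_cs (by fun_prop) hη2.mul_right
  have i3 : Integrable fun x => (pd 0 η x ^ 2 + pd 1 η x ^ 2) * (a x ^ 2 + b x ^ 2) := by
    refine int_cs (by fun_prop) (HasCompactSupport.mul_right ?_)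
    simp_rw [sq]
    exact ((hcs_pd hc 0).mul_left).add ((hcs_pd hc 1).mul_left)
  have i4 : ∀ i k : Fin 2, Integrable fun x => pd k (fun x => η x ^ 2 * a x * pd i b x) x := fun i k =>
    int_cs ((hQ i).pd k).cont (hcs_pd (cQ i) k)
  have key : ∫ x, η x ^ 2 * (pd 0 a x ^ 2 + pd 1 a x ^ 2 + pd 0 b x ^ 2 + pd 1 b x ^ 2) ≤
      ∫ x, ((2 * (η x ^ 2 * ((pd 0 a x + pd 1 b x) ^ 2 + (pd 0 b x - pd 1 a x) ^ 2)) +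
      16 * ((pd 0 η x ^ 2 + pd 1 η x ^ 2) * (a x ^ 2 + b x ^ 2))) +
      (4 * pd 1 (fun x => η x ^ 2 * a x * pd 0 b x) x
        - 4 * pd 0 (fun x => η x ^ 2 * a x * pd 1 b x) x)) := by
    refine integral_mono i1 ((iadd (i2.const_mul 2) (i3.const_mul 16)).add
      (isub ((i4 0 1).const_mul 4) ((i4 1 0).const_mul 4))) fun x => ?_
    simp only [eQ, pd_comm hb 1 0]
    nlinarith [sq_nonneg (η x * pd 0 b x + 4 * pd 1 η x * a x),
      sq_nonneg (η x * pd 1 b x - 4 * pd 0 η x * a x), sq_nonneg (η x * pd 0 a x),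
      sq_nonneg (η x * pd 1 a x), sq_nonneg (pd 0 η x * b x), sq_nonneg (pd 1 η x * b x)]
  refine key.trans (le_of_eq ?_)
  rw [integral_add (iadd (i2.const_mul 2) (i3.const_mul 16))
      (isub ((i4 0 1).const_mul 4) ((i4 1 0).const_mul 4)),
    integral_add (i2.const_mul 2) (i3.const_mul 16), integral_sub ((i4 0 1).const_mul 4)
      ((i4 1 0).const_mul 4)]
  simp only [integral_const_mul, z0, z1]
  ring

/-! ### The logarithmic potential as a distribution -/

lemma li_mul {κ h : E2 → ℝ} (hκ : LocallyIntegrable κ) (hh : Continuous h)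
    (hc : HasCompactSupport h) : Integrable fun z => κ z * h z := by
  simpa [mul_comm] using hκ.integrable_smul_left_of_hasCompactSupport hh hc

lemma li_inv : LocallyIntegrable (fun z : E2 => ‖z‖⁻¹) := by
  refine locallyIntegrable_of_norm_le_rpow (C := 1) (α := 1) (by simp) (by simp)
    (Filter.Eventually.of_forall fun z => ?_) (by fun_prop)
  rw [Real.rpow_neg_one]; simp

/-- The regularised logarithm `−(4π)⁻¹ log(|z|² + q)`. -/
def Ereg (q : ℝ) (z : E2) : ℝ := -(4 * Real.pi)⁻¹ * Real.log (‖z‖ ^ 2 + q)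

lemma Ereg_zero : Ereg 0 = fundE := by
  funext z
  simp only [Ereg, fundE, add_zero, Real.log_pow]
  push_cast
  field_simp
  ring

lemma sm_nq (q : ℝ) : Sm (fun z : E2 => ‖z‖ ^ 2 + q) := (contDiff_norm_sq ℝ).add contDiff_const

lemma Ereg_cda {q : ℝ} {z : E2} (hq : 0 < ‖z‖ ^ 2 + q) : ContDiffAt ℝ (⊤ : ℕ∞) (Ereg q) z :=
  contDiffAt_const.mul ((sm_nq q).contDiffAt.log hq.ne')

lemma pd_nq (q : ℝ) (z : E2) (i : Fin 2) : pd i (fun z : E2 => ‖z‖ ^ 2 + q) z = 2 * z i := by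
  have h1 : HasFDerivAt (fun z : E2 => ‖z‖ ^ 2 + q) ((2 • (innerSL ℝ z))) z :=
    (hasStrictFDerivAt_norm_sq z).hasFDerivAt.add_const q
  rw [pd, h1.fderiv]
  simp [e2, EuclideanSpace.inner_single_right]

lemma pd_Ereg {q : ℝ} {z : E2} (hq : 0 < ‖z‖ ^ 2 + q) (i : Fin 2) :
    pd i (Ereg q) z = -(2 * Real.pi)⁻¹ * (z i * (‖z‖ ^ 2 + q)⁻¹) := by
  have h1 := ((((sm_nq q).diff z).hasFDerivAt.log hq.ne').const_mul (-(4 * Real.pi)⁻¹)).fderiv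
  have h2 : fderiv ℝ (Ereg q) z = _ := h1
  have h3 := pd_nq q z i
  rw [pd] at h3 ⊢
  rw [h2]
  simp only [smul_apply, smul_eq_mul, h3]
  field_simp
  ring

/-- `ΔE_q` is a negative multiple of an approximate identity at scale `√q`. -/
lemma lap_Ereg {q : ℝ} (hq : 0 < q) (z : E2) :
    pd 0 (pd 0 (Ereg q)) z + pd 1 (pd 1 (Ereg q)) z = -(Real.pi⁻¹ * (q * ((‖z‖ ^ 2 + q) ^ 2)⁻¹)) := by
  have hp : ∀ z : E2, 0 < ‖z‖ ^ 2 + q := fun z => by positivity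
  have key : ∀ i, pd i (pd i (Ereg q)) z = -(2 * Real.pi)⁻¹ *
      ((‖z‖ ^ 2 + q)⁻¹ - 2 * z i ^ 2 * ((‖z‖ ^ 2 + q) ^ 2)⁻¹) := by
    intro i
    have hd : HasFDerivAt (fun z : E2 => (‖z‖ ^ 2 + q)⁻¹) _ z :=
      (hasDerivAt_inv (hp z).ne').comp_hasFDerivAt z ((sm_nq q).diff z).hasFDerivAt
    have hi : DifferentiableAt ℝ (fun z : E2 => (‖z‖ ^ 2 + q)⁻¹) z := hd.differentiableAt
    have h2 : pd i (fun z : E2 => (‖z‖ ^ 2 + q)⁻¹) z = - ((‖z‖ ^ 2 + q) ^ 2)⁻¹ * (2 * z i) := by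
      have h3 := pd_nq q z i
      rw [pd] at h3 ⊢
      rw [hd.fderiv, smul_apply, h3, smul_eq_mul]
    have hc : DifferentiableAt ℝ (fun z : E2 => z i) z :=
      (EuclideanSpace.proj i : E2 →L[ℝ] ℝ).differentiableAt
    have h4 : pd i (fun z : E2 => z i) z = 1 := by
      have : fderiv ℝ (fun z : E2 => z i) z = _ :=
        (EuclideanSpace.proj i : E2 →L[ℝ] ℝ).hasFDerivAt.fderiv
      rw [pd, this]; simp [e2]
    rw [show pd i (Ereg q) = fun z => -(2 * Real.pi)⁻¹ * (z i * (‖z‖ ^ 2 + q)⁻¹) from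
      funext fun z => pd_Ereg (hp z) i, pd_const_mul (hc.fun_mul hi), pd_mul hc hi, h2, h4]
    ring
  rw [key, key]
  have := hp z
  have e := nsq z
  rw [show z 1 ^ 2 = ‖z‖ ^ 2 - z 0 ^ 2 by linarith]
  field_simp
  ring

lemma Ereg_bound {q : ℝ} (h0 : 0 ≤ q) (h1 : q ≤ 1) (z : E2) (hz : z ≠ 0) :
    |Ereg q z| ≤ (‖z‖ ^ 2 + 1) + 2 * ‖z‖⁻¹ := by
  have hn : 0 < ‖z‖ := norm_pos_iff.2 hz
  have hpi : (4 * Real.pi)⁻¹ ≤ 1 := inv_le_one_of_one_le₀ (by linarith [Real.pi_gt_three])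
  have hpi0 : 0 < (4 * Real.pi)⁻¹ := by positivity
  rw [Ereg, abs_mul, abs_neg, abs_of_pos hpi0]
  have up : Real.log (‖z‖ ^ 2 + q) ≤ ‖z‖ ^ 2 + 1 := by
    have := Real.log_le_sub_one_of_pos (x := ‖z‖ ^ 2 + q) (by positivity)
    linarith
  have lo : -(2 * ‖z‖⁻¹) ≤ Real.log (‖z‖ ^ 2 + q) := by
    have a : Real.log (‖z‖ ^ 2) ≤ Real.log (‖z‖ ^ 2 + q) := Real.log_le_log (by positivity) (by linarith)
    have b := Real.one_sub_inv_le_log_of_pos hn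
    rw [Real.log_pow] at a
    push_cast at a
    linarith
  have hi : 0 < ‖z‖⁻¹ := by positivity
  calc (4 * Real.pi)⁻¹ * |Real.log (‖z‖ ^ 2 + q)| ≤ 1 * |Real.log (‖z‖ ^ 2 + q)| := by gcongr
    _ ≤ _ := by
      rw [one_mul, abs_le]
      constructor <;> nlinarith [sq_nonneg ‖z‖]

lemma pdEreg_bound {q : ℝ} (h0 : 0 ≤ q) (z : E2) (hz : z ≠ 0) (i : Fin 2) :
    |pd i (Ereg q) z| ≤ ‖z‖⁻¹ := by
  have hn : 0 < ‖z‖ := norm_pos_iff.2 hz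
  have hpi : (2 * Real.pi)⁻¹ ≤ 1 := inv_le_one_of_one_le₀ (by linarith [Real.pi_gt_three])
  have hpi0 : 0 < (2 * Real.pi)⁻¹ := by positivity
  rw [pd_Ereg (by positivity), abs_mul, abs_neg, abs_of_pos hpi0, abs_mul,
    abs_of_pos (a := (‖z‖ ^ 2 + q)⁻¹) (by positivity)]
  calc _ ≤ 1 * (‖z‖ * (‖z‖ ^ 2)⁻¹) := by
        gcongr
        · exact abs_le_norm2 z i
        · linarith
    _ = ‖z‖⁻¹ := by field_simp

lemma ae_ne_zero : ∀ᵐ z : E2, z ≠ 0 := by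
  simp [ae_iff]

lemma li_dom : LocallyIntegrable (fun z : E2 => (‖z‖ ^ 2 + 1) + 2 * ‖z‖⁻¹) := by
  have h1 : LocallyIntegrable (fun z : E2 => ‖z‖ ^ 2 + 1) :=
    (by fun_prop : Continuous fun z : E2 => ‖z‖ ^ 2 + 1).locallyIntegrable
  exact h1.add (li_inv.smul (2 : ℝ))

lemma meas_fundE : Measurable fundE := by
  unfold fundE; fun_prop

lemma meas_pd (F : E2 → ℝ) (i : Fin 2) : Measurable (pd i F) :=
  measurable_fderiv_apply_const ℝ F (e2 i)

lemma li_fundE : LocallyIntegrable fundE := by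
  refine li_dom.mono meas_fundE.aestronglyMeasurable ?_
  filter_upwards [ae_ne_zero] with z hz
  rw [← Ereg_zero]
  refine (Ereg_bound le_rfl zero_le_one z hz).trans (le_abs_self _)

lemma li_pd_fundE (i : Fin 2) : LocallyIntegrable (pd i fundE) := by
  refine li_inv.mono (meas_pd _ i).aestronglyMeasurable ?_
  filter_upwards [ae_ne_zero] with z hz
  rw [← Ereg_zero]
  refine (pdEreg_bound le_rfl z hz i).trans (le_abs_self _)

/-- The regularisations converge: weak convergence of `E_q`. -/
lemma Ereg_tendsto {h : E2 → ℝ} (hh : Continuous h) (hc : HasCompactSupport h) :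
    Filter.Tendsto (fun n : ℕ => ∫ z, Ereg (1 / ((n : ℝ) + 1)) z * h z) Filter.atTop
      (nhds (∫ z, fundE z * h z)) := by
  refine tendsto_integral_of_dominated_convergence
    (fun z => ((‖z‖ ^ 2 + 1) + 2 * ‖z‖⁻¹) * |h z|) (fun n => ?_)
    (li_mul li_dom hh.abs hc.abs) (fun n => ?_) ?_
  · refine Measurable.aestronglyMeasurable (Measurable.mul ?_ hh.measurable)
    unfold Ereg; fun_prop
  · filter_upwards [ae_ne_zero] with z hz
    rw [norm_mul]
    refine mul_le_mul_of_nonneg_right (Ereg_bound (by positivity) ?_ z hz) (abs_nonneg _)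
    rw [div_le_one (by positivity)]; linarith [(Nat.cast_nonneg n : (0:ℝ) ≤ n)]
  · filter_upwards [ae_ne_zero] with z hz
    rw [← Ereg_zero]
    have hn : 0 < ‖z‖ := norm_pos_iff.2 hz
    have h1 : Filter.Tendsto (fun n : ℕ => ‖z‖ ^ 2 + 1 / ((n : ℝ) + 1)) Filter.atTop
        (nhds (‖z‖ ^ 2 + 0)) := tendsto_one_div_add_atTop_nhds_zero_nat.const_add _
    exact ((h1.log (by positivity)).const_mul _).mul_const _

lemma pdEreg_tendsto {h : E2 → ℝ} (hh : Continuous h) (hc : HasCompactSupport h) (i : Fin 2) :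
    Filter.Tendsto (fun n : ℕ => ∫ z, pd i (Ereg (1 / ((n : ℝ) + 1))) z * h z) Filter.atTop
      (nhds (∫ z, pd i fundE z * h z)) := by
  refine tendsto_integral_of_dominated_convergence
    (fun z => ‖z‖⁻¹ * |h z|) (fun n => ?_)
    (li_mul li_inv hh.abs hc.abs) (fun n => ?_) ?_
  · exact Measurable.aestronglyMeasurable (Measurable.mul (meas_pd _ i) hh.measurable)
  · filter_upwards [ae_ne_zero] with z hz
    rw [norm_mul]
    exact mul_le_mul_of_nonneg_right (pdEreg_bound (by positivity) z hz i) (abs_nonneg _)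
  · filter_upwards [ae_ne_zero] with z hz
    have hn : 0 < ‖z‖ := norm_pos_iff.2 hz
    rw [← Ereg_zero, pd_Ereg (by positivity)]
    simp_rw [fun n : ℕ => pd_Ereg (q := 1 / ((n : ℝ) + 1)) (z := z) (by positivity) i]
    have h1 : Filter.Tendsto (fun n : ℕ => ‖z‖ ^ 2 + 1 / ((n : ℝ) + 1)) Filter.atTop
        (nhds (‖z‖ ^ 2 + 0)) := tendsto_one_div_add_atTop_nhds_zero_nat.const_add _
    exact (((h1.inv₀ (by positivity)).const_mul _).const_mul _).mul_const _

lemma sm_Ereg {q : ℝ} (hq : 0 < q) : Sm (Ereg q) :=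
  contDiff_iff_contDiffAt.2 fun z => Ereg_cda (by positivity)

/-- Integration by parts against the logarithm: its distributional gradient is the pointwise one. -/
lemma fundE_ibp {h : E2 → ℝ} (hh : Sm h) (hc : HasCompactSupport h) (i : Fin 2) :
    ∫ z, pd i fundE z * h z = - ∫ z, fundE z * pd i h z := by
  have h1 := pdEreg_tendsto hh.cont hc i
  have h2 := (Ereg_tendsto (hh.pd i).cont (hcs_pd hc i)).neg
  refine tendsto_nhds_unique h1 (h2.congr fun n => ?_)
  rw [ibp (sm_Ereg (by positivity)) hh (Or.inr hc) i, neg_neg]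

/-- `ΔE` is a multiple of the Dirac mass at the origin. The value of the constant is irrelevant. -/
lemma fundE_lap : ∃ c : ℝ, ∀ h : E2 → ℝ, Sm h → HasCompactSupport h →
    ∫ z, fundE z * (pd 0 (pd 0 h) z + pd 1 (pd 1 h) z) = c * h 0 := by
  refine ⟨-(Real.pi⁻¹ * ∫ y : E2, ((1 + ‖y‖ ^ 2) ^ 2)⁻¹), fun h hh hc => ?_⟩
  have hl : Sm fun z => pd 0 (pd 0 h) z + pd 1 (pd 1 h) z :=
    Sm.add' ((hh.pd 0).pd 0) ((hh.pd 1).pd 1)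
  have hlc : HasCompactSupport fun z => pd 0 (pd 0 h) z + pd 1 (pd 1 h) z :=
    (hcs_pd (hcs_pd hc 0) 0).add (hcs_pd (hcs_pd hc 1) 1)
  have h1 := Ereg_tendsto hl.cont hlc
  refine tendsto_nhds_unique h1 ?_
  have e1 : ∀ n : ℕ, ∫ z, Ereg (1 / ((n : ℝ) + 1)) z * (pd 0 (pd 0 h) z + pd 1 (pd 1 h) z)
      = -(Real.pi⁻¹ * ∫ y : E2, ((1 + ‖y‖ ^ 2) ^ 2)⁻¹ * h (√(1 / ((n : ℝ) + 1)) • y)) := by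
    intro n
    set q : ℝ := 1 / ((n : ℝ) + 1) with hq
    have hq0 : 0 < q := by positivity
    have sE := sm_Ereg hq0
    have t : ∀ i : Fin 2, ∫ z, Ereg q z * pd i (pd i h) z = ∫ z, pd i (pd i (Ereg q)) z * h z := by
      intro i
      rw [ibp sE (hh.pd i) (Or.inr (hcs_pd hc i)), ibp (sE.pd i) hh (Or.inr hc), neg_neg]
    have j1 : ∀ i : Fin 2, Integrable fun z => Ereg q z * pd i (pd i h) z := fun i =>
      int_cs (sE.cont.mul ((hh.pd i).pd i).cont) (hcs_pd (hcs_pd hc i) i).mul_left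
    have j2 : ∀ i : Fin 2, Integrable fun z => pd i (pd i (Ereg q)) z * h z := fun i =>
      int_cs (((sE.pd i).pd i).cont.mul hh.cont) hc.mul_left
    simp_rw [mul_add]
    rw [integral_add (j1 0) (j1 1), t, t, ← integral_add (j2 0) (j2 1)]
    simp_rw [← add_mul, lap_Ereg hq0]
    rw [← integral_const_mul, ← integral_neg]
    have hs : 0 < √q := Real.sqrt_pos.2 hq0
    have hs2 : √q ^ 2 = q := Real.sq_sqrt hq0.le
    have sc := Measure.integral_comp_smul (volume : Measure E2)
      (fun z => -(Real.pi⁻¹ * (q * ((‖z‖ ^ 2 + q) ^ 2)⁻¹)) * h z) (√q)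
    simp only [finrank_euclideanSpace, Fintype.card_fin, smul_eq_mul, hs2] at sc
    rw [abs_of_pos (by positivity)] at sc
    rw [show (∫ z, -(Real.pi⁻¹ * (q * ((‖z‖ ^ 2 + q) ^ 2)⁻¹)) * h z)
      = q * (q⁻¹ * ∫ z, -(Real.pi⁻¹ * (q * ((‖z‖ ^ 2 + q) ^ 2)⁻¹)) * h z) by field_simp, ← sc,
      ← integral_const_mul]
    congr 1; funext z
    rw [norm_smul, Real.norm_of_nonneg hs.le, mul_pow, hs2]
    field_simp
    ring
  simp_rw [e1]
  rw [neg_mul, mul_assoc, ← integral_mul_const]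
  refine (Filter.Tendsto.const_mul _ ?_).neg
  have hInt : Integrable fun y : E2 => ((1 + ‖y‖ ^ 2) ^ 2)⁻¹ := by
    have := integrable_rpow_neg_one_add_norm_sq (E := E2) (μ := volume) (r := 4) (by simp; norm_num)
    refine this.congr (Filter.Eventually.of_forall fun y => ?_)
    simp only
    rw [show (-4/2 : ℝ) = -((2:ℕ):ℝ) by norm_num, Real.rpow_neg (by positivity), Real.rpow_natCast]
  obtain ⟨M, hM⟩ := hc.exists_bound_of_continuous hh.cont
  refine tendsto_integral_of_dominated_convergence (fun y => ((1 + ‖y‖ ^ 2) ^ 2)⁻¹ * M)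
    (fun n => ?_) (hInt.mul_const M) (fun n => ?_) ?_
  · have := hh.cont
    exact Measurable.aestronglyMeasurable (Measurable.mul (by fun_prop) (by fun_prop))
  · refine Filter.Eventually.of_forall fun y => ?_
    rw [norm_mul, Real.norm_of_nonneg (r := ((1 + ‖y‖ ^ 2) ^ 2)⁻¹) (by positivity)]
    gcongr
    exact hM _
  · refine Filter.Eventually.of_forall fun y => ?_
    refine Filter.Tendsto.const_mul _ ?_
    have h1 : Filter.Tendsto (fun n : ℕ => √(1 / ((n : ℝ) + 1)) • y) Filter.atTop
        (nhds (√0 • y)) := tendsto_one_div_add_atTop_nhds_zero_nat.sqrt.smul_const y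
    simp only [Real.sqrt_zero, zero_smul] at h1
    exact (hh.cont.tendsto 0).comp h1

/-! ### Kernels of the pressure force and correlations with test functions -/

/-- Functions smooth away from the origin and positively homogeneous of degree `-n`. -/
def HomS (n : ℕ) (F : E2 → ℝ) : Prop :=
  ContDiffOn ℝ (⊤ : ℕ∞) F {0}ᶜ ∧ ∀ c : ℝ, 0 < c → ∀ z : E2, z ≠ 0 → F (c • z) = (c⁻¹) ^ n * F z

lemma pd_eve {F G : E2 → ℝ} {z : E2} (h : F =ᶠ[nhds z] G) (i : Fin 2) :
    pd i F =ᶠ[nhds z] pd i G := by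
  filter_upwards [h.fderiv (𝕜 := ℝ)] with y hy
  simp [pd, hy]

lemma cdo_pd {F : E2 → ℝ} (h : ContDiffOn ℝ (⊤ : ℕ∞) F {0}ᶜ) (i : Fin 2) :
    ContDiffOn ℝ (⊤ : ℕ∞) (pd i F) {0}ᶜ :=
  (h.fderiv_of_isOpen isOpen_compl_singleton (m := (⊤ : ℕ∞)) (by simp)).clm_apply contDiffOn_const

lemma pd_scale (F : E2 → ℝ) (c : ℝ) (z : E2) (i : Fin 2) :
    pd i (fun z => F (c • z)) z = c * pd i F (c • z) := by
  have h := fderiv_comp_smul (𝕜 := ℝ) (f := F) (x := z) c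
  have h2 : fderiv ℝ (fun z => F (c • z)) z = _ := h
  rw [pd, h2]; simp [pd]

lemma HomS.pd {n : ℕ} {F : E2 → ℝ} (h : HomS n F) (i : Fin 2) : HomS (n + 1) (pd i F) := by
  refine ⟨cdo_pd h.1 i, fun c hc z hz => ?_⟩
  have h1 : (fun z => F (c • z)) =ᶠ[nhds z] fun z => (c⁻¹) ^ n * F z := by
    filter_upwards [isOpen_compl_singleton.mem_nhds hz] with y hy using h.2 c hc y hy
  have h2 := (pd_eve h1 i).eq_of_nhds
  have hd : DifferentiableAt ℝ F z :=
    (h.1.contDiffAt (isOpen_compl_singleton.mem_nhds hz)).differentiableAt (by simp)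
  rw [pd_scale, pd_const_mul hd] at h2
  rw [pow_succ, mul_right_comm, ← h2]
  field_simp

/-- A homogeneous function is bounded by the matching power of `|z|`, by compactness of the circle. -/
lemma HomS.bound {n : ℕ} {F : E2 → ℝ} (h : HomS n F) :
    ∃ C, 0 ≤ C ∧ ∀ z : E2, z ≠ 0 → |F z| ≤ C * (‖z‖⁻¹) ^ n := by
  obtain ⟨C, hC⟩ := (isCompact_sphere (0:E2) 1).exists_bound_of_continuousOn
    (h.1.continuousOn.mono (fun z hz => by
      rintro rfl; simp at hz))
  refine ⟨max C 0, le_max_right _ _, fun z hz => ?_⟩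
  have hn : 0 < ‖z‖ := norm_pos_iff.2 hz
  have h1 := h.2 ‖z‖ hn (‖z‖⁻¹ • z) (by simp [hz])
  rw [smul_smul, mul_inv_cancel₀ hn.ne', one_smul] at h1
  have h2 := hC (‖z‖⁻¹ • z) (by simp [norm_smul, hn.ne'])
  rw [Real.norm_eq_abs] at h2
  rw [h1, abs_mul, abs_of_pos (by positivity), mul_comm]
  gcongr
  exact h2.trans (le_max_left _ _)

lemma cdo_fundE : ContDiffOn ℝ (⊤ : ℕ∞) fundE {0}ᶜ := fun z hz => by
  have hn : 0 < ‖z‖ := norm_pos_iff.2 hz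
  rw [← Ereg_zero]
  exact (Ereg_cda (by positivity)).contDiffWithinAt

lemma hom_pd_fundE (i : Fin 2) : HomS 1 (pd i fundE) := by
  refine ⟨cdo_pd cdo_fundE i, fun c hc z hz => ?_⟩
  have h1 : (fun z => fundE (c • z)) =ᶠ[nhds z] fun z => -(2 * Real.pi)⁻¹ * Real.log c + fundE z := by
    filter_upwards [isOpen_compl_singleton.mem_nhds hz] with y hy
    have hn : 0 < ‖y‖ := norm_pos_iff.2 hy
    simp only [fundE, norm_smul, Real.norm_of_nonneg hc.le]
    rw [Real.log_mul hc.ne' hn.ne']; ring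
  have h2 := (pd_eve h1 i).eq_of_nhds
  rw [pd_scale] at h2
  have h3 : pd i (fun z => -(2 * Real.pi)⁻¹ * Real.log c + fundE z) z = pd i fundE z := by
    simp [pd]
  rw [h3] at h2
  rw [pow_one, ← h2]
  field_simp

lemma fundE_bounds : ∃ C, 0 ≤ C ∧ (∀ i j : Fin 2, ∀ z : E2, z ≠ 0 →
    |pd i (pd j fundE) z| ≤ C * (‖z‖⁻¹) ^ 2) ∧ (∀ i j k : Fin 2, ∀ z : E2, z ≠ 0 →
    |pd i (pd j (pd k fundE)) z| ≤ C * (‖z‖⁻¹) ^ 3) := by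
  choose C2 p2 h2 using fun i j : Fin 2 => ((hom_pd_fundE j).pd i).bound
  choose C3 p3 h3 using fun i j k : Fin 2 => (((hom_pd_fundE k).pd j).pd i).bound
  have q2 : 0 ≤ ∑ i, ∑ j, C2 i j := Finset.sum_nonneg fun i _ => Finset.sum_nonneg fun j _ => p2 i j
  have q3 : 0 ≤ ∑ i, ∑ j, ∑ k, C3 i j k := Finset.sum_nonneg fun i _ => Finset.sum_nonneg fun j _ =>
    Finset.sum_nonneg fun k _ => p3 i j k
  refine ⟨(∑ i, ∑ j, C2 i j) + ∑ i, ∑ j, ∑ k, C3 i j k, by positivity, fun i j z hz => ?_,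
    fun i j k z hz => ?_⟩
  · refine (h2 i j z hz).trans (mul_le_mul_of_nonneg_right ?_ (by positivity))
    have a := Finset.single_le_sum (f := fun j => C2 i j) (fun j _ => p2 i j) (Finset.mem_univ j)
    have b := Finset.single_le_sum (f := fun i => ∑ j, C2 i j)
      (fun i _ => Finset.sum_nonneg fun j _ => p2 i j) (Finset.mem_univ i)
    linarith
  · refine (h3 i j k z hz).trans (mul_le_mul_of_nonneg_right ?_ (by positivity))
    have a := Finset.single_le_sum (f := fun k => C3 i j k) (fun k _ => p3 i j k) (Finset.mem_univ k)
    have b := Finset.single_le_sum (f := fun j => ∑ k, C3 i j k)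
      (fun j _ => Finset.sum_nonneg fun k _ => p3 i j k) (Finset.mem_univ j)
    have c := Finset.single_le_sum (f := fun i => ∑ j, ∑ k, C3 i j k)
      (fun i _ => Finset.sum_nonneg fun j _ => Finset.sum_nonneg fun k _ => p3 i j k)
      (Finset.mem_univ i)
    linarith

lemma sm_N {θ : E2 → ℝ} (hθ : IsCutoff θ) : Sm (oneThetaE θ) := by
  refine contDiff_iff_contDiffAt.2 fun z => ?_
  by_cases hz : z = 0
  · subst hz
    refine (contDiffAt_const (c := (0:ℝ))).congr_of_eventuallyEq ?_
    filter_upwards [ball_mem_nhds (0:E2) one_pos] with y hy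
    simp only [oneThetaE]
    rw [hθ.2.2.1 y (mem_ball_zero_iff.1 hy).le]; simp
  · exact (contDiffAt_const.sub hθ.1.contDiffAt).mul
      (cdo_fundE.contDiffAt (isOpen_compl_singleton.mem_nhds hz))

lemma N_far {θ : E2 → ℝ} (hθ : IsCutoff θ) {z : E2} (hz : 2 < ‖z‖) :
    oneThetaE θ =ᶠ[nhds z] fundE := by
  filter_upwards [continuous_norm.continuousAt.preimage_mem_nhds (Ioi_mem_nhds hz)] with y hy
  simp only [oneThetaE]
  rw [hθ.2.2.2 y (le_of_lt hy)]; simp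

/-- Third derivatives of `(1-θ)E` are smooth and decay like `|z|⁻³`, so they are `O((1+|z|)⁻³)`
everywhere. -/
lemma N3_bound {θ : E2 → ℝ} (hθ : IsCutoff θ) : ∃ C, 0 ≤ C ∧ ∀ i j k : Fin 2, ∀ z : E2,
    |pd i (pd j (pd k (oneThetaE θ))) z| ≤ C * ((1 + ‖z‖)⁻¹) ^ 3 := by
  obtain ⟨C, hC0, -, hC⟩ := fundE_bounds
  choose M hM using fun i j k : Fin 2 => (isCompact_closedBall (0:E2) 3).exists_bound_of_continuousOn
    ((((sm_N hθ).pd k).pd j).pd i).cont.continuousOn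
  have hM' : ∀ i j k : Fin 2, M i j k ≤ ∑ i, ∑ j, ∑ k, |M i j k| := by
    intro i j k
    have a := Finset.single_le_sum (f := fun k => |M i j k|) (fun k _ => abs_nonneg _) (Finset.mem_univ k)
    have b := Finset.single_le_sum (f := fun j => ∑ k, |M i j k|)
      (fun j _ => Finset.sum_nonneg fun k _ => abs_nonneg _) (Finset.mem_univ j)
    have c := Finset.single_le_sum (f := fun i => ∑ j, ∑ k, |M i j k|)
      (fun i _ => Finset.sum_nonneg fun j _ => Finset.sum_nonneg fun k _ => abs_nonneg _)
      (Finset.mem_univ i)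
    linarith [le_abs_self (M i j k)]
  set S := ∑ i, ∑ j, ∑ k, |M i j k| with hS
  have S0 : 0 ≤ S := Finset.sum_nonneg fun i _ => Finset.sum_nonneg fun j _ =>
    Finset.sum_nonneg fun k _ => abs_nonneg _
  refine ⟨64 * S + 8 * C, by positivity, fun i j k z => ?_⟩
  have hp : 0 < 1 + ‖z‖ := by positivity
  by_cases hz : ‖z‖ ≤ 3
  · have h1 := (hM i j k z (by simpa using hz)).trans (hM' i j k)
    rw [Real.norm_eq_abs] at h1
    have h2 : (4⁻¹:ℝ) ≤ (1 + ‖z‖)⁻¹ := inv_anti₀ hp (by linarith)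
    have h3 : (4⁻¹:ℝ) ^ 3 ≤ ((1 + ‖z‖)⁻¹) ^ 3 := by gcongr
    have h4 : 0 ≤ C * ((1 + ‖z‖)⁻¹) ^ 3 := by positivity
    nlinarith
  · push Not at hz
    have hz2 : 2 < ‖z‖ := by linarith
    rw [(pd_eve (pd_eve (pd_eve (N_far hθ hz2) k) j) i).eq_of_nhds]
    have h1 := hC i j k z (by rintro rfl; simp at hz; linarith)
    have h2 : ‖z‖⁻¹ ≤ 2 * (1 + ‖z‖)⁻¹ := by
      rw [← div_eq_mul_inv, inv_eq_one_div, div_le_div_iff₀ (by linarith) hp]; linarith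
    have h3 : (‖z‖⁻¹) ^ 3 ≤ (2 * (1 + ‖z‖)⁻¹) ^ 3 := by gcongr
    have h4 : 0 ≤ S * ((1 + ‖z‖)⁻¹) ^ 3 := by positivity
    rw [mul_pow] at h3
    nlinarith

lemma cutoff_hcs {θ : E2 → ℝ} (hθ : IsCutoff θ) : HasCompactSupport θ :=
  hcs_of_zero 2 fun z hz => hθ.2.2.2 z hz.le

lemma pd_thetaE {θ : E2 → ℝ} (hθ : IsCutoff θ) (i : Fin 2) {z : E2} (hz : z ≠ 0) :
    pd i (thetaE θ) z = fundE z * pd i θ z + pd i fundE z * θ z := by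
  have hd : DifferentiableAt ℝ fundE z :=
    (cdo_fundE.contDiffAt (isOpen_compl_singleton.mem_nhds hz)).differentiableAt (by simp)
  rw [show thetaE θ = fun z => θ z * fundE z from rfl, pd_mul ((show Sm θ from hθ.1).diff z) hd]
  ring

lemma int_thetaE {θ : E2 → ℝ} (hθ : IsCutoff θ) : Integrable (thetaE θ) :=
  (li_mul li_fundE hθ.1.continuous (cutoff_hcs hθ)).congr
    (Filter.Eventually.of_forall fun z => by simp [thetaE, mul_comm])

lemma int_pd_thetaE {θ : E2 → ℝ} (hθ : IsCutoff θ) (i : Fin 2) : Integrable (pd i (thetaE θ)) := by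
  have hs : Sm θ := hθ.1
  refine (iadd (li_mul li_fundE (hs.pd i).cont (hcs_pd (cutoff_hcs hθ) i))
    (li_mul (li_pd_fundE i) hs.cont (cutoff_hcs hθ))).congr ?_
  filter_upwards [ae_ne_zero] with z hz using (pd_thetaE hθ i hz).symm

/-- The distributional gradient of `θE` is its pointwise gradient. -/
lemma thetaE_ibp {θ : E2 → ℝ} (hθ : IsCutoff θ) {h : E2 → ℝ} (hh : Sm h)
    (hc : HasCompactSupport h) (i : Fin 2) :
    ∫ z, pd i (thetaE θ) z * h z = - ∫ z, thetaE θ z * pd i h z := by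
  have hs : Sm θ := hθ.1
  have e1 : ∫ z, pd i (thetaE θ) z * h z
      = ∫ z, (fundE z * (pd i θ z * h z) + pd i fundE z * (θ z * h z)) := by
    refine integral_congr_ae ?_
    filter_upwards [ae_ne_zero] with z hz
    rw [pd_thetaE hθ i hz]; ring
  have c1 : HasCompactSupport (fun z => θ z * h z) := hc.mul_left
  have c2 : HasCompactSupport (fun z => pd i θ z * h z) := hc.mul_left
  have c3 : HasCompactSupport (fun z => θ z * pd i h z) := (hcs_pd hc i).mul_left
  have i1 := li_mul li_fundE ((hs.pd i).mul' hh).cont c2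
  have i3 := li_mul li_fundE (hs.mul' (hh.pd i)).cont c3
  rw [e1, integral_add i1 (li_mul (li_pd_fundE i) (hs.mul' hh).cont c1),
    fundE_ibp (hs.mul' hh) c1 i]
  simp_rw [fun z => pd_mul (hs.diff z) (hh.diff z) i, mul_add]
  rw [integral_add i1 i3]
  have : ∫ z, thetaE θ z * pd i h z = ∫ z, fundE z * (θ z * pd i h z) := by
    congr 1; funext z; simp only [thetaE]; ring
  rw [this]; ring

/-- Correlation `y ↦ ∫ k(z) h(y+z) dz` of a kernel with a test function. -/
def Cv (k h : E2 → ℝ) (y : E2) : ℝ := ∫ z, k z * h (y + z)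

lemma sm_shift {h : E2 → ℝ} (hh : Sm h) (y : E2) : Sm fun z => h (y + z) :=
  hh.comp (contDiff_const.add contDiff_id)

lemma hcs_shift {h : E2 → ℝ} (hc : HasCompactSupport h) (y : E2) :
    HasCompactSupport fun z => h (y + z) :=
  hc.comp_homeomorph (Homeomorph.addLeft y)

lemma pd_shift (h : E2 → ℝ) (y z : E2) (i : Fin 2) :
    pd i (fun z => h (y + z)) z = pd i h (y + z) := by
  simp only [pd]
  rw [fderiv_comp_add_left]

lemma Cv_sm {k h : E2 → ℝ} (hk : LocallyIntegrable k) (hh : Sm h) (hc : HasCompactSupport h) :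
    Sm (Cv k h) ∧ ∀ j, pd j (Cv k h) = Cv k (pd j h) := by
  have hG : ContDiff ℝ (⊤ : ℕ∞) (fun q : E2 × E2 => h (q.1 + q.2)) :=
    hh.comp (contDiff_fst.add contDiff_snd)
  obtain ⟨R, hR⟩ := hc.isCompact.isBounded.exists_norm_le
  have key := fun x => param_int hk (G := fun p z => h (p + z)) hG
    (isCompact_closedBall (0:E2) (R + ‖x‖ + 2)) x (fun p hp z hz => by
      refine image_eq_zero_of_notMem_tsupport fun hmem => ?_
      have h1 := hR _ hmem
      simp at hz
      have h2 : ‖z‖ ≤ ‖p + z‖ + ‖p‖ := by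
        have := norm_sub_le (p + z) p
        simpa using this
      have h3 : ‖p‖ ≤ ‖p - x‖ + ‖x‖ := by
        have := norm_add_le (p - x) x
        simpa using this
      linarith)
  refine ⟨contDiff_iff_contDiffAt.2 fun x => (key x).1, fun j => funext fun x => ?_⟩
  refine ((key x).2 j).trans ?_
  simp only [Cv]
  congr 1; funext z; congr 1
  simp only [pd]
  rw [fderiv_comp_add_right]

lemma Cv_ibp {N h : E2 → ℝ} (hN : Sm N) (hh : Sm h) (hc : HasCompactSupport h) (j : Fin 2) (y : E2) :
    Cv N (pd j h) y = - Cv (pd j N) h y := by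
  have := ibp hN (sm_shift hh y) (Or.inr (hcs_shift hc y)) j
  simp_rw [pd_shift] at this
  exact this

lemma Cv_thetaE_ibp {θ : E2 → ℝ} (hθ : IsCutoff θ) {h : E2 → ℝ} (hh : Sm h)
    (hc : HasCompactSupport h) (j : Fin 2) (y : E2) :
    Cv (thetaE θ) (pd j h) y = - Cv (pd j (thetaE θ)) h y := by
  have := thetaE_ibp hθ (sm_shift hh y) (hcs_shift hc y) j
  simp_rw [pd_shift] at this
  simp only [Cv]
  linarith

lemma Cv_split {θ : E2 → ℝ} (hθ : IsCutoff θ) {h : E2 → ℝ} (hh : Continuous h)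
    (hc : HasCompactSupport h) (y : E2) :
    Cv fundE h y = Cv (thetaE θ) h y + Cv (oneThetaE θ) h y := by
  have hs : Continuous fun z => h (y + z) := hh.comp (by fun_prop)
  simp only [Cv]
  rw [← integral_add (li_mul (int_thetaE hθ).locallyIntegrable hs (hcs_shift hc y))
    (li_mul (sm_N hθ).cont.locallyIntegrable hs (hcs_shift hc y))]
  congr 1; funext z; simp only [thetaE, oneThetaE]; ring

lemma Cv_add {k h g : E2 → ℝ} (hk : LocallyIntegrable k) (hh : Continuous h)
    (hc : HasCompactSupport h) (hg : Continuous g) (hgc : HasCompactSupport g) (y : E2) :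
    Cv k (fun z => h z + g z) y = Cv k h y + Cv k g y := by
  have h1 : Continuous fun z => h (y + z) := hh.comp (by fun_prop)
  have h2 : Continuous fun z => g (y + z) := hg.comp (by fun_prop)
  simp only [Cv]
  rw [← integral_add (li_mul hk h1 (hcs_shift hc y)) (li_mul hk h2 (hcs_shift hgc y))]
  congr 1; funext z; ring

/-! ### Dyadic summation, cut-offs and Fubini -/

/-- Dyadic summation: a mass growth bound `∫_{B_R} F ≤ A R^a` with `a < 3` controls the tail of `F`
against `|y|⁻³`. -/
lemma dyadic {a : ℝ} (ha : a < 3) : ∃ C, 0 ≤ C ∧ ∀ (F : E2 → ℝ) (A r : ℝ), 0 < r → 0 ≤ A →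
    Continuous F → (∀ x, 0 ≤ F x) → (∀ R, r ≤ R → ∫ x in ball (0:E2) R, F x ≤ A * R ^ a) →
    IntegrableOn (fun y => F y * (‖y‖⁻¹) ^ 3) {y | r ≤ ‖y‖} ∧
    ∫ y in {y : E2 | r ≤ ‖y‖}, F y * (‖y‖⁻¹) ^ 3 ≤ C * A * r ^ (a - 3) := by
  set ρ : ℝ := 2 ^ (a - 3) with hρ
  have ρ0 : 0 < ρ := by positivity
  have ρ1 : ρ < 1 := Real.rpow_lt_one_of_one_lt_of_neg one_lt_two (by linarith)
  have hC : 0 ≤ (2:ℝ) ^ a * (1 - ρ)⁻¹ := mul_nonneg (by positivity) (inv_nonneg.2 (by linarith))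
  refine ⟨2 ^ a * (1 - ρ)⁻¹, hC, fun F A r hr hA hF hF0 hg => ?_⟩
  set S : ℕ → Set E2 := fun n => {y | 2 ^ n * r ≤ ‖y‖ ∧ ‖y‖ < 2 ^ (n + 1) * r} with hS
  have hsub : {y : E2 | r ≤ ‖y‖} ⊆ ⋃ n, S n := by
    intro y hy
    have hy' : 1 ≤ ‖y‖ / r := by rw [le_div_iff₀ hr, one_mul]; exact hy
    obtain ⟨n, h1, h2⟩ := exists_nat_pow_near hy' one_lt_two
    rw [le_div_iff₀ hr] at h1
    rw [div_lt_iff₀ hr] at h2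
    exact Set.mem_iUnion.2 ⟨n, h1, h2⟩
  have hann : ∀ n, ∫⁻ y in S n, ENNReal.ofReal (F y * (‖y‖⁻¹) ^ 3) ≤
      ENNReal.ofReal (2 ^ a * A * r ^ (a - 3) * ρ ^ n) := by
    intro n
    have hp : 0 < 2 ^ n * r := by positivity
    have hSm : MeasurableSet (S n) :=
      (measurableSet_le measurable_const measurable_norm).inter
        (measurableSet_lt measurable_norm measurable_const)
    have hi : IntegrableOn F (ball (0:E2) (2 ^ (n + 1) * r)) :=
      (hF.continuousOn.integrableOn_compact (isCompact_closedBall (0:E2) _)).mono_set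
        ball_subset_closedBall
    calc ∫⁻ y in S n, ENNReal.ofReal (F y * (‖y‖⁻¹) ^ 3)
        ≤ ∫⁻ y in S n, ENNReal.ofReal (((2 ^ n * r)⁻¹) ^ 3) * ENNReal.ofReal (F y) := by
          refine setLIntegral_mono' hSm fun y hy => ?_
          rw [← ENNReal.ofReal_mul (by positivity), mul_comm]
          refine ENNReal.ofReal_le_ofReal (mul_le_mul_of_nonneg_right ?_ (hF0 y))
          have := inv_anti₀ hp hy.1
          gcongr
      _ = ENNReal.ofReal (((2 ^ n * r)⁻¹) ^ 3) * ∫⁻ y in S n, ENNReal.ofReal (F y) :=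
          lintegral_const_mul _ (by fun_prop)
      _ ≤ ENNReal.ofReal (((2 ^ n * r)⁻¹) ^ 3) *
            ∫⁻ y in ball (0:E2) (2 ^ (n + 1) * r), ENNReal.ofReal (F y) := by
          gcongr
          intro y hy; simpa using hy.2
      _ = ENNReal.ofReal (((2 ^ n * r)⁻¹) ^ 3 * ∫ y in ball (0:E2) (2 ^ (n + 1) * r), F y) := by
          rw [ENNReal.ofReal_mul (by positivity), ofReal_integral_eq_lintegral_ofReal hi
            (Filter.Eventually.of_forall hF0)]
      _ ≤ _ := by
          refine ENNReal.ofReal_le_ofReal ?_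
          have h1 : r ≤ 2 ^ (n + 1) * r := by
            have : (1:ℝ) ≤ 2 ^ (n + 1) := one_le_pow₀ one_le_two
            nlinarith
          refine (mul_le_mul_of_nonneg_left (hg _ h1) (by positivity)).trans (le_of_eq ?_)
          have e1 : ((2 ^ n * r)⁻¹) ^ 3 = (2 ^ n * r) ^ (-3 : ℝ) := by
            rw [Real.rpow_neg hp.le, inv_pow]; norm_cast
          have e2 : (2 : ℝ) ^ (n + 1) * r = 2 * (2 ^ n * r) := by ring
          have e3 : (2 : ℝ) ^ n * r = 2 ^ (n:ℝ) * r := by rw [Real.rpow_natCast]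
          rw [e1, e2, Real.mul_rpow zero_le_two hp.le, hρ, ← Real.rpow_natCast (2 ^ (a - 3)) n,
            ← Real.rpow_mul zero_le_two, mul_comm (a - 3) (n : ℝ), Real.rpow_mul zero_le_two,
            Real.rpow_natCast]
          rw [show (2 ^ n * r) ^ (-3:ℝ) * (A * (2 ^ a * (2 ^ n * r) ^ a))
            = 2 ^ a * A * ((2 ^ n * r) ^ (-3:ℝ) * (2 ^ n * r) ^ a) by ring, ← Real.rpow_add hp,
            show -3 + a = a - 3 by ring, Real.mul_rpow (by positivity) hr.le]
          ring
  have htot : ∫⁻ y in {y : E2 | r ≤ ‖y‖}, ENNReal.ofReal (F y * (‖y‖⁻¹) ^ 3) ≤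
      ENNReal.ofReal (2 ^ a * (1 - ρ)⁻¹ * A * r ^ (a - 3)) := by
    have hcoef : 0 ≤ 2 ^ a * A * r ^ (a - 3) := by positivity
    calc _ ≤ ∫⁻ y in ⋃ n, S n, ENNReal.ofReal (F y * (‖y‖⁻¹) ^ 3) := lintegral_mono_set hsub
      _ ≤ ∑' n, ∫⁻ y in S n, ENNReal.ofReal (F y * (‖y‖⁻¹) ^ 3) := lintegral_iUnion_le _ _
      _ ≤ ∑' n, ENNReal.ofReal (2 ^ a * A * r ^ (a - 3) * ρ ^ n) := ENNReal.tsum_le_tsum hann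
      _ = ENNReal.ofReal (∑' n, 2 ^ a * A * r ^ (a - 3) * ρ ^ n) :=
          (ENNReal.ofReal_tsum_of_nonneg (fun n => by positivity)
            ((summable_geometric_of_lt_one ρ0.le ρ1).mul_left _)).symm
      _ = _ := by
          rw [tsum_mul_left, tsum_geometric_of_lt_one ρ0.le ρ1]
          congr 1; ring
  have hnn : ∀ y : E2, 0 ≤ F y * (‖y‖⁻¹) ^ 3 := fun y => mul_nonneg (hF0 y) (by positivity)
  have hmeas : Measurable fun y : E2 => F y * (‖y‖⁻¹) ^ 3 := by
    have := hF.measurable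
    fun_prop
  refine ⟨⟨hmeas.aestronglyMeasurable, ?_⟩, ?_⟩
  · rw [hasFiniteIntegral_iff_ofReal (Filter.Eventually.of_forall hnn)]
    exact htot.trans_lt ENNReal.ofReal_lt_top
  · rw [integral_eq_lintegral_of_nonneg_ae (Filter.Eventually.of_forall hnn)
      hmeas.aestronglyMeasurable]
    refine ENNReal.toReal_le_of_le_ofReal ?_ htot
    exact mul_nonneg (mul_nonneg hC hA) (by positivity)

/-- Cut-offs adapted to the ball of radius `r`, with gradient `O(1/r)`; dilates of one fixed bump. -/
lemma exists_cut : ∃ C, 0 ≤ C ∧ ∀ r : ℝ, 0 < r → ∃ η : E2 → ℝ, Sm η ∧ (∀ x, 0 ≤ η x) ∧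
    (∀ x, η x ≤ 1) ∧ (∀ x, ‖x‖ ≤ r → η x = 1) ∧ (∀ x, 2 * r ≤ ‖x‖ → η x = 0) ∧
    (∀ i x, |pd i η x| ≤ C / r) ∧ (∀ i x, ‖x‖ ≤ r → pd i η x = 0) ∧
    (∀ i x, 2 * r ≤ ‖x‖ → pd i η x = 0) := by
  let b : ContDiffBump (0 : E2) := ⟨1, 2, one_pos, one_lt_two⟩
  have hb : Sm b := b.contDiff
  have hcs : HasCompactSupport b := b.hasCompactSupport
  choose M hM using fun i : Fin 2 => (hcs_pd hcs i).exists_bound_of_continuous (hb.pd i).cont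
  have M0 : ∀ i, 0 ≤ M i := fun i => (norm_nonneg _).trans (hM i 0)
  refine ⟨M 0 + M 1, add_nonneg (M0 0) (M0 1), fun r hr => ?_⟩
  have hsc : ∀ x : E2, ‖r⁻¹ • x‖ = ‖x‖ / r := fun x => by
    rw [norm_smul, Real.norm_of_nonneg (by positivity)]; ring
  have hη : Sm fun x => b (r⁻¹ • x) := hb.comp (contDiff_id.const_smul _)
  have h1 : ∀ x : E2, ‖x‖ ≤ r → b (r⁻¹ • x) = 1 := fun x hx =>
    b.one_of_mem_closedBall (by
      rw [mem_closedBall_zero_iff, hsc]; exact (div_le_one hr).2 hx)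
  have h0 : ∀ x : E2, 2 * r ≤ ‖x‖ → b (r⁻¹ • x) = 0 := fun x hx =>
    b.zero_of_le_dist (by
      rw [dist_zero_right, hsc]; exact (le_div_iff₀ hr).2 hx)
  refine ⟨fun x => b (r⁻¹ • x), hη, fun x => b.nonneg, fun x => b.le_one, h1, h0, fun i x => ?_,
    fun i x hx => ?_, fun i x hx => ?_⟩
  · rw [pd_scale, abs_mul, abs_of_pos (by positivity), div_eq_inv_mul]
    refine mul_le_mul_of_nonneg_left ((hM i _).trans ?_) (by positivity)
    fin_cases i <;> simp [M0]
  · have : IsLocalMax (fun x => b (r⁻¹ • x)) x := Filter.Eventually.of_forall fun y => by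
      show b (r⁻¹ • y) ≤ b (r⁻¹ • x)
      rw [h1 x hx]; exact b.le_one
    simp [pd, this.fderiv_eq_zero]
  · have : IsLocalMin (fun x => b (r⁻¹ • x)) x := Filter.Eventually.of_forall fun y => by
      show b (r⁻¹ • x) ≤ b (r⁻¹ • y)
      rw [h0 x hx]; exact b.nonneg
    simp [pd, this.fderiv_eq_zero]

/-- Fubini for a kernel tested against `g` and a density `q`. -/
lemma fub {k g q : E2 → ℝ}
    (hInt : Integrable (fun p : E2 × E2 => g p.1 * (k (p.1 - p.2) * q p.2)) (volume.prod volume)) :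
    Integrable (fun x => g x * ∫ y, k (x - y) * q y) ∧ Integrable (fun y => q y * Cv k g y) ∧
    ∫ x, g x * ∫ y, k (x - y) * q y = ∫ y, q y * Cv k g y := by
  have e1 : ∀ x, ∫ y, g x * (k (x - y) * q y) = g x * ∫ y, k (x - y) * q y := fun x =>
    integral_const_mul _ _
  have e2 : ∀ y, ∫ x, g x * (k (x - y) * q y) = q y * Cv k g y := fun y => by
    have := integral_add_left_eq_self (μ := volume) (fun x => g x * (k (x - y) * q y)) y
    rw [← this, Cv, ← integral_const_mul]
    congr 1; funext z
    simp only [add_sub_cancel_left]; ring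
  refine ⟨hInt.integral_prod_left.congr (Filter.Eventually.of_forall e1),
    hInt.integral_prod_right.congr (Filter.Eventually.of_forall e2), ?_⟩
  simp_rw [← e1, ← e2]
  exact integral_integral_swap hInt

/-- Joint integrability for a compactly supported integrable kernel. -/
lemma fub_near {k g q : E2 → ℝ} (hk : Integrable k) (hk0 : ∀ z, 2 ≤ ‖z‖ → k z = 0)
    (hg : Continuous g) (hgc : HasCompactSupport g) (hq : Continuous q) :
    Integrable (fun p : E2 × E2 => g p.1 * (k (p.1 - p.2) * q p.2)) (volume.prod volume) := by
  obtain ⟨M, hM⟩ := hgc.exists_bound_of_continuous hg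
  obtain ⟨R, hR⟩ := hgc.isCompact.isBounded.exists_norm_le
  have hq1 : Integrable ((closedBall (0:E2) (R + 2)).indicator q) :=
    (hq.continuousOn.integrableOn_compact (isCompact_closedBall (0:E2) _)).integrable_indicator
      measurableSet_closedBall
  have h1 := hq1.convolution_integrand (ContinuousLinearMap.mul ℝ ℝ) hk
  have h2 := h1.bdd_mul (f := fun p : E2 × E2 => g p.1) (c := M)
    (hg.comp continuous_fst).aestronglyMeasurable (Filter.Eventually.of_forall fun p => hM p.1)
  refine h2.congr (Filter.Eventually.of_forall fun p => ?_)
  simp only [ContinuousLinearMap.mul_apply']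
  by_cases hg0 : g p.1 = 0
  · simp [hg0]
  by_cases hk1 : k (p.1 - p.2) = 0
  · simp [hk1]
  have a1 : ‖p.1‖ ≤ R := hR _ (subset_tsupport _ hg0)
  have a2 : ‖p.1 - p.2‖ < 2 := not_le.1 fun h => hk1 (hk0 _ h)
  have a3 : p.2 ∈ closedBall (0:E2) (R + 2) := by
    rw [mem_closedBall_zero_iff]
    have := norm_sub_le p.1 (p.1 - p.2)
    have e : p.1 - (p.1 - p.2) = p.2 := by abel
    rw [e] at this
    linarith
  rw [Set.indicator_of_mem a3]; ring

/-- Joint integrability for a kernel decaying like `|z|⁻³`. -/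
lemma fub_far {k g q : E2 → ℝ} {C : ℝ} (hk : Continuous k)
    (hkC : ∀ z, |k z| ≤ C * ((1 + ‖z‖)⁻¹) ^ 3) (hC : 0 ≤ C)
    (hg : Continuous g) (hgc : HasCompactSupport g) (hq : Continuous q)
    (hqi : Integrable fun y => q y * ((1 + ‖y‖)⁻¹) ^ 3) :
    Integrable (fun p : E2 × E2 => g p.1 * (k (p.1 - p.2) * q p.2)) (volume.prod volume) := by
  obtain ⟨R, hR⟩ := hgc.isCompact.isBounded.exists_norm_le
  have h1 := ((int_cs hg hgc).mul_prod hqi).norm.const_mul (C * (1 + |R|) ^ 3)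
  refine h1.mono' (by fun_prop) (Filter.Eventually.of_forall fun p => ?_)
  by_cases hg0 : g p.1 = 0
  · simp [hg0]
  have a1 : ‖p.1‖ ≤ |R| := (hR _ (subset_tsupport _ hg0)).trans (le_abs_self R)
  have a2 : (1 + ‖p.1 - p.2‖)⁻¹ ≤ (1 + |R|) * (1 + ‖p.2‖)⁻¹ := by
    rw [← div_eq_mul_inv, inv_eq_one_div, div_le_div_iff₀ (by positivity) (by positivity)]
    have := norm_sub_le p.1 (p.1 - p.2)
    have e : p.1 - (p.1 - p.2) = p.2 := by abel
    rw [e] at this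
    nlinarith [norm_nonneg (p.1 - p.2), abs_nonneg R]
  have a3 : ((1 + ‖p.1 - p.2‖)⁻¹) ^ 3 ≤ ((1 + |R|) * (1 + ‖p.2‖)⁻¹) ^ 3 := by gcongr
  rw [norm_mul, norm_mul]
  simp only [norm_mul, Real.norm_eq_abs, abs_pow]
  rw [abs_of_pos (a := (1 + ‖p.2‖)⁻¹) (by positivity)]
  calc |g p.1| * (|k (p.1 - p.2)| * |q p.2|)
      ≤ |g p.1| * ((C * ((1 + |R|) * (1 + ‖p.2‖)⁻¹) ^ 3) * |q p.2|) := by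
        gcongr
        exact (hkC _).trans (by gcongr)
    _ = _ := by ring

/-! ### The pressure force tested against a vector field -/

lemma Cv_hcs {k h : E2 → ℝ} (hk0 : ∀ z, 2 ≤ ‖z‖ → k z = 0) (hc : HasCompactSupport h) :
    HasCompactSupport (Cv k h) := by
  obtain ⟨R, hR⟩ := hc.isCompact.isBounded.exists_norm_le
  refine hcs_of_zero (R + 2) fun y hy => ?_
  have : ∀ z, k z * h (y + z) = 0 := fun z => by
    by_cases hz : 2 ≤ ‖z‖
    · rw [hk0 z hz, zero_mul]
    · by_cases hh : h (y + z) = 0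
      · rw [hh, mul_zero]
      · have a := hR _ (subset_tsupport _ hh)
        have b := norm_sub_le (y + z) z
        rw [add_sub_cancel_right] at b
        linarith
  simp [Cv, this]

lemma thetaE_zero {θ : E2 → ℝ} (hθ : IsCutoff θ) (z : E2) (hz : 2 ≤ ‖z‖) : thetaE θ z = 0 := by
  simp [thetaE, hθ.2.2.2 z hz]

lemma pd_thetaE_zero {θ : E2 → ℝ} (hθ : IsCutoff θ) (i : Fin 2) (z : E2) (hz : 2 ≤ ‖z‖) :
    pd i (thetaE θ) z = 0 := by
  have h0 : z ≠ 0 := norm_pos_iff.1 (by linarith)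
  have : IsLocalMin θ z := Filter.Eventually.of_forall fun y => by
    rw [hθ.2.2.2 z hz]; exact (hθ.2.1 y).1
  rw [pd_thetaE hθ i h0, hθ.2.2.2 z hz]
  simp [pd, this.fderiv_eq_zero]

/-- For divergence-free `u`, `Σ ∂ⱼu_k ∂_k uⱼ = Σ ∂ⱼ∂_k(uⱼ u_k)` in the sense of distributions. -/
lemma divfree_ibp {a : Fin 2 → E2 → ℝ} (ha : ∀ i, Sm (a i))
    (hdiv : ∀ x, pd 0 (a 0) x + pd 1 (a 1) x = 0) {Ψ : E2 → ℝ} (hΨ : Sm Ψ)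
    (hc : HasCompactSupport Ψ) :
    ∫ y, (∑ j, ∑ k, pd j (a k) y * pd k (a j) y) * Ψ y =
      ∑ j, ∑ k, ∫ y, (a j y * a k y) * pd k (pd j Ψ) y := by
  have i1 : ∀ j k, Sm (fun y => (a k y * pd k (a j) y) * Ψ y) := fun j k =>
    ((ha k).mul' ((ha j).pd k)).mul' hΨ
  have i2 : ∀ j k, Sm (fun y => (a k y * a j y) * pd j Ψ y) := fun j k =>
    ((ha k).mul' (ha j)).mul' (hΨ.pd j)
  have z1 : ∀ j k, Integrable (pd j (fun y => (a k y * pd k (a j) y) * Ψ y)) ∧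
      ∫ y, pd j (fun y => (a k y * pd k (a j) y) * Ψ y) y = 0 := fun j k =>
    ⟨int_cs ((i1 j k).pd j).cont (hcs_pd hc.mul_left j), int_pd_zero (i1 j k) hc.mul_left j⟩
  have z2 : ∀ j k, Integrable (pd k (fun y => (a k y * a j y) * pd j Ψ y)) ∧
      ∫ y, pd k (fun y => (a k y * a j y) * pd j Ψ y) y = 0 := fun j k =>
    ⟨int_cs ((i2 j k).pd k).cont (hcs_pd (hcs_pd hc j).mul_left k),
      int_pd_zero (i2 j k) (hcs_pd hc j).mul_left k⟩
  have i3 : ∀ j k, Integrable (fun y => (a j y * a k y) * pd k (pd j Ψ) y) := fun j k =>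
    int_cs (((ha j).mul' (ha k)).mul' ((hΨ.pd j).pd k)).cont (hcs_pd (hcs_pd hc j) k).mul_left
  have e1 : ∀ j k y, pd j (fun y => (a k y * pd k (a j) y) * Ψ y) y =
      pd j (a k) y * pd k (a j) y * Ψ y + a k y * pd k (pd j (a j)) y * Ψ y
        + a k y * pd k (a j) y * pd j Ψ y := by
    intro j k y
    rw [pd_mul (((ha k).mul' ((ha j).pd k)).diff y) (hΨ.diff y),
      pd_mul ((ha k).diff y) (((ha j).pd k).diff y), pd_comm (ha j) k j]
    ring
  have e2 : ∀ j k y, pd k (fun y => (a k y * a j y) * pd j Ψ y) y =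
      pd k (a k) y * a j y * pd j Ψ y + a k y * pd k (a j) y * pd j Ψ y
        + a k y * a j y * pd k (pd j Ψ) y := by
    intro j k y
    rw [pd_mul (((ha k).mul' (ha j)).diff y) ((hΨ.pd j).diff y),
      pd_mul ((ha k).diff y) ((ha j).diff y)]
    ring
  have hd' : ∀ k y, pd k (pd 0 (a 0)) y + pd k (pd 1 (a 1)) y = 0 := fun k y => by
    rw [← pd_add (((ha 0).pd 0).diff y) (((ha 1).pd 1).diff y)]
    have : (fun y => pd 0 (a 0) y + pd 1 (a 1) y) = fun _ => 0 := funext hdiv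
    rw [this]; simp [pd]
  have key : ∀ y, (∑ j, ∑ k, pd j (a k) y * pd k (a j) y) * Ψ y =
      ∑ j, ∑ k, ((pd j (fun y => (a k y * pd k (a j) y) * Ψ y) y
        - pd k (fun y => (a k y * a j y) * pd j Ψ y) y) + (a j y * a k y) * pd k (pd j Ψ) y) := by
    intro y
    simp only [e1, e2, Fin.sum_univ_two]
    linear_combination (-a 0 y * Ψ y) * hd' 0 y + (-a 1 y * Ψ y) * hd' 1 y
      + (a 0 y * pd 0 Ψ y + a 1 y * pd 1 Ψ y) * hdiv y
  simp_rw [key]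
  rw [integral_finsetSum _ fun j _ => integrable_finsetSum _ fun k _ =>
    iadd (isub (z1 j k).1 (z2 j k).1) (i3 j k)]
  refine Finset.sum_congr rfl fun j _ => ?_
  rw [integral_finsetSum _ fun k _ => iadd (isub (z1 j k).1 (z2 j k).1) (i3 j k)]
  refine Finset.sum_congr rfl fun k _ => ?_
  rw [integral_add (isub (z1 j k).1 (z2 j k).1) (i3 j k), integral_sub (z1 j k).1 (z2 j k).1,
    (z1 j k).2, (z2 j k).2]
  ring

/-- The near-field part of the pressure force, tested against `g` with `f = div g`. -/
lemma press_near {θ : E2 → ℝ} (hθ : IsCutoff θ) {a : Fin 2 → E2 → ℝ} (ha : ∀ i, Sm (a i))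
    (hdiv : ∀ x, pd 0 (a 0) x + pd 1 (a 1) x = 0) {g : Fin 2 → E2 → ℝ} (hg : ∀ i, Sm (g i))
    (hgc : ∀ i, HasCompactSupport (g i)) {f : E2 → ℝ} (hf : Sm f) (hfc : HasCompactSupport f)
    (hfg : ∀ x, f x = pd 0 (g 0) x + pd 1 (g 1) x) :
    (∀ i, Integrable fun x => g i x *
      ∫ y, pd i (thetaE θ) (x - y) * ∑ j, ∑ k, pd j (a k) y * pd k (a j) y) ∧
    ∑ i, ∫ x, g i x * ∫ y, pd i (thetaE θ) (x - y) * (∑ j, ∑ k, pd j (a k) y * pd k (a j) y)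
      = - ∑ j, ∑ k, ∫ y, (a j y * a k y) * Cv (thetaE θ) (pd k (pd j f)) y := by
  have hk := (int_thetaE hθ).locallyIntegrable
  have hq : Continuous fun y => ∑ j, ∑ k, pd j (a k) y * pd k (a j) y :=
    continuous_finsetSum _ fun j _ => continuous_finsetSum _ fun k _ =>
      ((ha k).pd j).cont.mul ((ha j).pd k).cont
  have F := fun i => fub (fub_near (int_pd_thetaE hθ i) (pd_thetaE_zero hθ i) (hg i).cont (hgc i) hq)
  refine ⟨fun i => (F i).1, ?_⟩
  have hfe : f = fun x => pd 0 (g 0) x + pd 1 (g 1) x := funext hfg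
  have hΨ := Cv_sm hk hf hfc
  have hΨc := Cv_hcs (thetaE_zero hθ) hfc
  have J : ∀ i, Integrable fun y => (∑ j, ∑ k, pd j (a k) y * pd k (a j) y) *
      Cv (thetaE θ) (pd i (g i)) y := fun i =>
    int_cs (hq.mul (Cv_sm hk ((hg i).pd i) (hcs_pd (hgc i) i)).1.cont)
      (Cv_hcs (thetaE_zero hθ) (hcs_pd (hgc i) i)).mul_left
  have e : ∀ i, ∫ x, g i x * ∫ y, pd i (thetaE θ) (x - y) *
      (∑ j, ∑ k, pd j (a k) y * pd k (a j) y) =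
      - ∫ y, (∑ j, ∑ k, pd j (a k) y * pd k (a j) y) * Cv (thetaE θ) (pd i (g i)) y := by
    intro i
    rw [(F i).2.2, ← integral_neg]
    congr 1; funext y
    rw [Cv_thetaE_ibp hθ (hg i) (hgc i)]; ring
  have e' : ∑ j, ∑ k, ∫ y, (a j y * a k y) * Cv (thetaE θ) (pd k (pd j f)) y =
      ∑ j, ∑ k, ∫ y, (a j y * a k y) * pd k (pd j (Cv (thetaE θ) f)) y := by
    refine Finset.sum_congr rfl fun j _ => Finset.sum_congr rfl fun k _ => ?_
    rw [hΨ.2 j, (Cv_sm hk (hf.pd j) (hcs_pd hfc j)).2 k]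
  rw [e', ← divfree_ibp ha hdiv hΨ.1 hΨc, Fin.sum_univ_two, e, e, ← neg_add,
    ← integral_add (J 0) (J 1)]
  congr 2; funext y
  rw [← mul_add, ← Cv_add hk ((hg 0).pd 0).cont (hcs_pd (hgc 0) 0) ((hg 1).pd 1).cont
    (hcs_pd (hgc 1) 1), ← hfe]

/-- The far-field part of the pressure force, tested against `g` with `f = div g`. -/
lemma press_far {θ : E2 → ℝ} (hθ : IsCutoff θ) {a : Fin 2 → E2 → ℝ} (ha : ∀ i, Sm (a i))
    (hInt : ∀ j k, Integrable fun y => (a j y * a k y) * ((1 + ‖y‖)⁻¹) ^ 3)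
    {g : Fin 2 → E2 → ℝ} (hg : ∀ i, Sm (g i))
    (hgc : ∀ i, HasCompactSupport (g i)) {f : E2 → ℝ}
    (hfg : ∀ x, f x = pd 0 (g 0) x + pd 1 (g 1) x) :
    (∀ i, Integrable fun x => g i x *
      ∑ j, ∑ k, ∫ y, pd i (pd j (pd k (oneThetaE θ))) (x - y) * (a j y * a k y)) ∧
    (∀ j k, Integrable fun y => (a j y * a k y) * Cv (oneThetaE θ) (pd k (pd j f)) y) ∧
    ∑ i, ∫ x, g i x * ∑ j, ∑ k, ∫ y, pd i (pd j (pd k (oneThetaE θ))) (x - y) * (a j y * a k y)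
      = - ∑ j, ∑ k, ∫ y, (a j y * a k y) * Cv (oneThetaE θ) (pd k (pd j f)) y := by
  obtain ⟨C, hC0, hC⟩ := N3_bound hθ
  have hN := sm_N hθ
  have F := fun i j k => fub (fub_far ((((hN.pd k).pd j).pd i).cont) (hC i j k) hC0 (hg i).cont
    (hgc i) ((ha j).mul' (ha k)).cont (hInt j k))
  have e : ∀ i j k y, Cv (pd i (pd j (pd k (oneThetaE θ)))) (g i) y =
      - Cv (oneThetaE θ) (pd k (pd j (pd i (g i)))) y := by
    intro i j k y
    rw [Cv_ibp hN (((hg i).pd i).pd j) (hcs_pd (hcs_pd (hgc i) i) j) k,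
      Cv_ibp (hN.pd k) ((hg i).pd i) (hcs_pd (hgc i) i) j,
      Cv_ibp ((hN.pd k).pd j) (hg i) (hgc i) i]
    ring
  have hfe : f = fun x => pd 0 (g 0) x + pd 1 (g 1) x := funext hfg
  have hf2 : ∀ j k, pd k (pd j f) =
      fun x => pd k (pd j (pd 0 (g 0))) x + pd k (pd j (pd 1 (g 1))) x := by
    intro j k
    have h1 : pd j f = fun x => pd j (pd 0 (g 0)) x + pd j (pd 1 (g 1)) x := by
      funext x; rw [hfe, pd_add (((hg 0).pd 0).diff x) (((hg 1).pd 1).diff x)]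
    funext x
    rw [h1, pd_add ((((hg 0).pd 0).pd j).diff x) ((((hg 1).pd 1).pd j).diff x)]
  have e2 : ∀ j k y, (a j y * a k y) * Cv (oneThetaE θ) (pd k (pd j f)) y =
      -((a j y * a k y) * Cv (pd 0 (pd j (pd k (oneThetaE θ)))) (g 0) y +
        (a j y * a k y) * Cv (pd 1 (pd j (pd k (oneThetaE θ)))) (g 1) y) := by
    intro j k y
    rw [hf2, Cv_add hN.cont.locallyIntegrable (((((hg 0).pd 0).pd j).pd k)).cont
      (hcs_pd (hcs_pd (hcs_pd (hgc 0) 0) j) k) (((((hg 1).pd 1).pd j).pd k)).cont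
      (hcs_pd (hcs_pd (hcs_pd (hgc 1) 1) j) k), e, e]
    ring
  have I : ∀ i, Integrable fun x => g i x *
      ∑ j, ∑ k, ∫ y, pd i (pd j (pd k (oneThetaE θ))) (x - y) * (a j y * a k y) := by
    intro i
    simp_rw [Finset.mul_sum]
    exact integrable_finsetSum _ fun j _ => integrable_finsetSum _ fun k _ => (F i j k).1
  have E : ∀ i, ∫ x, g i x *
      ∑ j, ∑ k, ∫ y, pd i (pd j (pd k (oneThetaE θ))) (x - y) * (a j y * a k y) =
      ∑ j, ∑ k, ∫ y, (a j y * a k y) * Cv (pd i (pd j (pd k (oneThetaE θ)))) (g i) y := by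
    intro i
    simp_rw [Finset.mul_sum]
    rw [integral_finsetSum _ fun j _ => integrable_finsetSum _ fun k _ => (F i j k).1]
    refine Finset.sum_congr rfl fun j _ => ?_
    rw [integral_finsetSum _ fun k _ => (F i j k).1]
    exact Finset.sum_congr rfl fun k _ => (F i j k).2.2
  refine ⟨I, fun j k => ?_, ?_⟩
  · simp_rw [e2]
    exact (iadd (F 0 j k).2.1 (F 1 j k).2.1).neg
  · rw [Fin.sum_univ_two, E, E, ← Finset.sum_add_distrib, ← Finset.sum_neg_distrib]
    refine Finset.sum_congr rfl fun j _ => ?_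
    rw [← Finset.sum_add_distrib, ← Finset.sum_neg_distrib]
    refine Finset.sum_congr rfl fun k _ => ?_
    simp_rw [e2]
    rw [integral_neg, integral_add (F 0 j k).2.1 (F 1 j k).2.1]
    ring

lemma hcs_add {f g : E2 → ℝ} (hf : HasCompactSupport f) (hg : HasCompactSupport g) :
    HasCompactSupport fun x => f x + g x := HasCompactSupport.add hf hg

/-- The weak form of the pressure force: tested against `g` it only sees `Δ⁻¹ div g`, and the
cut-off `θ` disappears. -/
lemma press_id {θ : E2 → ℝ} (hθ : IsCutoff θ) {u : E2 → E2} (hu : ContDiff ℝ (⊤ : ℕ∞) u)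
    (hdiv : ∀ x, div2 u x = 0)
    (hInt : Integrable fun y => ‖u y‖ ^ 2 * ((1 + ‖y‖)⁻¹) ^ 3) {g : Fin 2 → E2 → ℝ}
    (hg : ∀ i, Sm (g i)) (hgc : ∀ i, HasCompactSupport (g i)) {f : E2 → ℝ}
    (hfg : ∀ x, f x = pd 0 (g 0) x + pd 1 (g 1) x) :
    (∀ i, Integrable fun x => g i x * pressureForce θ u i x) ∧
    (∀ j k, Integrable fun y => (u y j * u y k) * Cv fundE (pd k (pd j f)) y) ∧
    ∑ i, ∫ x, g i x * pressureForce θ u i x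
      = - ∑ j, ∑ k, ∫ y, (u y j * u y k) * Cv fundE (pd k (pd j f)) y := by
  set a : Fin 2 → E2 → ℝ := fun i y => u y i with hadef
  have ha : ∀ i, Sm (a i) := fun i => sm_comp hu i
  have hud : ∀ x, DifferentiableAt ℝ u x := fun x => hu.differentiable (by simp) x
  have hdiv' : ∀ x, pd 0 (a 0) x + pd 1 (a 1) x = 0 := fun x => by
    have := hdiv x
    rw [div2, Fin.sum_univ_two, pdv_eq (hud x), pdv_eq (hud x)] at this
    exact this
  have hInt' : ∀ j k, Integrable fun y => (a j y * a k y) * ((1 + ‖y‖)⁻¹) ^ 3 := fun j k => by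
    refine hInt.mono' ?_ (Filter.Eventually.of_forall fun y => ?_)
    · have := (ha j).cont; have := (ha k).cont
      have h : Continuous fun y : E2 => (1 + ‖y‖)⁻¹ :=
        (by fun_prop : Continuous fun y : E2 => 1 + ‖y‖).inv₀ fun y => by positivity
      exact (((ha j).cont.mul (ha k).cont).mul (h.pow 3)).aestronglyMeasurable
    · rw [norm_mul, norm_mul, Real.norm_of_nonneg (r := ((1 + ‖y‖)⁻¹) ^ 3) (by positivity)]
      refine mul_le_mul_of_nonneg_right ?_ (by positivity)
      rw [sq]
      exact mul_le_mul (abs_le_norm2 _ _) (abs_le_norm2 _ _) (abs_nonneg _) (norm_nonneg _)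
  have hfe : f = fun x => pd 0 (g 0) x + pd 1 (g 1) x := funext hfg
  have hf : Sm f := hfe ▸ (((hg 0).pd 0).add' ((hg 1).pd 1))
  have hfc : HasCompactSupport f := hfe ▸ (hcs_add (hcs_pd (hgc 0) 0) (hcs_pd (hgc 1) 1))
  obtain ⟨n1, n2⟩ := press_near hθ ha hdiv' hg hgc hf hfc hfg
  obtain ⟨f1, f2, f3⟩ := press_far hθ ha hInt' hg hgc hfg
  have hk := (int_thetaE hθ).locallyIntegrable
  have hP : ∀ i x, g i x * pressureForce θ u i x =
      g i x * (∫ y, pd i (thetaE θ) (x - y) * ∑ j, ∑ k, pd j (a k) y * pd k (a j) y) +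
      g i x * ∑ j, ∑ k, ∫ y, pd i (pd j (pd k (oneThetaE θ))) (x - y) * (a j y * a k y) := by
    intro i x
    simp only [pressureForce, mul_add, fun y j k => pdv_eq (hud y) j k, hadef]
  have hs : ∀ j k y, (a j y * a k y) * Cv fundE (pd k (pd j f)) y =
      (a j y * a k y) * Cv (thetaE θ) (pd k (pd j f)) y +
        (a j y * a k y) * Cv (oneThetaE θ) (pd k (pd j f)) y := fun j k y => by
    rw [Cv_split hθ ((hf.pd j).pd k).cont (hcs_pd (hcs_pd hfc j) k), mul_add]
  have nI : ∀ j k, Integrable fun y => (a j y * a k y) * Cv (thetaE θ) (pd k (pd j f)) y :=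
    fun j k => int_cs (((ha j).mul' (ha k)).cont.mul
      (Cv_sm hk ((hf.pd j).pd k) (hcs_pd (hcs_pd hfc j) k)).1.cont)
      (Cv_hcs (thetaE_zero hθ) (hcs_pd (hcs_pd hfc j) k)).mul_left
  refine ⟨fun i => ?_, fun j k => ?_, ?_⟩
  · simp_rw [hP]; exact iadd (n1 i) (f1 i)
  · show Integrable fun y => (a j y * a k y) * Cv fundE (pd k (pd j f)) y
    simp_rw [hs]; exact iadd (nI j k) (f2 j k)
  · have h1 : ∑ i, ∫ x, g i x * pressureForce θ u i x =
        ∑ i, ((∫ x, g i x * ∫ y, pd i (thetaE θ) (x - y) *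
          ∑ j, ∑ k, pd j (a k) y * pd k (a j) y) +
        ∫ x, g i x * ∑ j, ∑ k, ∫ y, pd i (pd j (pd k (oneThetaE θ))) (x - y) * (a j y * a k y)) := by
      refine Finset.sum_congr rfl fun i _ => ?_
      simp_rw [hP]
      rw [integral_add (n1 i) (f1 i)]
    rw [h1, Finset.sum_add_distrib, n2, f3, ← neg_add, ← Finset.sum_add_distrib]
    congr 1
    refine Finset.sum_congr rfl fun j _ => ?_
    rw [← Finset.sum_add_distrib]
    refine Finset.sum_congr rfl fun k _ => ?_
    show _ = ∫ y, (a j y * a k y) * Cv fundE (pd k (pd j f)) y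
    simp_rw [hs]
    rw [integral_add (nI j k) (f2 j k)]

/-! ### Bounds for the Hessian of the potential -/

lemma Cv_le {k g : E2 → ℝ} {B : ℝ} {y : E2} (hB : ∀ z, g (y + z) ≠ 0 → |k z| ≤ B)
    (hg : Continuous g) (hgc : HasCompactSupport g) : |Cv k g y| ≤ B * ∫ z, |g z| := by
  have e : ∫ z, |g z| = ∫ z, |g (y + z)| :=
    (integral_add_left_eq_self (μ := volume) (fun z => |g z|) y).symm
  rw [e, ← integral_const_mul]
  have hs : Continuous fun z => g (y + z) := hg.comp (by fun_prop)
  refine norm_integral_le_of_norm_le (f := fun z => k z * g (y + z)) (((int_cs hs (hcs_shift hgc y)).abs).const_mul B)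
    (Filter.Eventually.of_forall fun z => ?_)
  by_cases h : g (y + z) = 0
  · simp [h]
  · rw [norm_mul]
    exact mul_le_mul_of_nonneg_right (hB z h) (abs_nonneg _)

/-- At distance at least `2` from the support of the test function, the kernel `E` may be replaced by
the smooth kernel `(1-θ)E`. -/
lemma Cv_fundE_far {θ : E2 → ℝ} (hθ : IsCutoff θ) {h : E2 → ℝ} {r : ℝ} (hr : 1 ≤ r)
    (h0 : ∀ x, 2 * r < ‖x‖ → h x = 0) {y : E2} (hy : 4 * r ≤ ‖y‖) :
    Cv fundE h y = Cv (oneThetaE θ) h y := by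
  simp only [Cv]
  congr 1; funext z
  by_cases hz : h (y + z) = 0
  · simp [hz]
  · have h1 : ‖y + z‖ ≤ 2 * r := not_lt.1 fun h => hz (h0 _ h)
    have h2 := norm_sub_le (y + z) z
    rw [add_sub_cancel_right] at h2
    simp [oneThetaE, hθ.2.2.2 z (by linarith)]

lemma pd_out {g : E2 → ℝ} {R : ℝ} (h0 : ∀ x, R < ‖x‖ → g x = 0) (i : Fin 2) :
    ∀ x, R < ‖x‖ → pd i g x = 0 := fun x hx => by
  have : g =ᶠ[nhds x] fun _ => 0 := by
    filter_upwards [continuous_norm.continuousAt.preimage_mem_nhds (Ioi_mem_nhds hx)] with y hy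
    exact h0 y hy
  rw [(pd_eve this i).eq_of_nhds]; simp [pd]

/-- Decay of `∇²E` and `∇³E` convolved with a function supported in `B(0,2r)`, away from the
support; the constant is independent of the cut-off. -/
lemma far_decay : ∃ C, 0 ≤ C ∧ ∀ θ, IsCutoff θ → ∀ (g : E2 → ℝ) (r : ℝ), 1 ≤ r → Sm g →
    (∀ x, 2 * r ≤ ‖x‖ → g x = 0) → ∀ i j y, 4 * r ≤ ‖y‖ →
      |Cv fundE (pd j (pd i g)) y| ≤ C * (‖y‖⁻¹) ^ 2 * ∫ z, |g z| ∧
      ∀ k, |Cv fundE (pd k (pd j (pd i g))) y| ≤ C * (‖y‖⁻¹) ^ 3 * ∫ z, |g z| := by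
  obtain ⟨C, hC0, hC2, hC3⟩ := fundE_bounds
  refine ⟨8 * C, by positivity, fun θ hθ g r hr hg h0 i j y hy => ?_⟩
  have hN := sm_N hθ
  have hgc : HasCompactSupport g := hcs_of_zero (2 * r) fun z hz => h0 z hz.le
  have hz : ∀ z, g (y + z) ≠ 0 → 2 < ‖z‖ ∧ ‖z‖⁻¹ ≤ 2 * ‖y‖⁻¹ := fun z hz => by
    have h1 : ‖y + z‖ < 2 * r := not_le.1 fun h => hz (h0 _ h)
    have h2 := norm_sub_le (y + z) z
    rw [add_sub_cancel_right] at h2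
    refine ⟨by linarith, ?_⟩
    rw [← div_eq_mul_inv, inv_eq_one_div, div_le_div_iff₀ (by linarith) (by linarith)]
    linarith
  have hne : ∀ z : E2, 2 < ‖z‖ → z ≠ 0 := fun z h => norm_pos_iff.1 (by linarith)
  have p0 : ∀ x, 2 * r < ‖x‖ → g x = 0 := fun x hx => h0 x hx.le
  refine ⟨?_, fun k => ?_⟩
  · rw [Cv_fundE_far hθ hr (pd_out (pd_out p0 i) j) hy, Cv_ibp hN (hg.pd i) (hcs_pd hgc i) j,
      Cv_ibp (hN.pd j) hg hgc i, neg_neg]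
    refine Cv_le (fun z h => ?_) hg.cont hgc
    obtain ⟨a, b⟩ := hz z h
    rw [(pd_eve (pd_eve (N_far hθ a) j) i).eq_of_nhds]
    have h1 : (‖z‖⁻¹) ^ 2 ≤ (2 * ‖y‖⁻¹) ^ 2 := by gcongr
    have h2 := hC2 i j z (hne z a)
    have h3 := mul_le_mul_of_nonneg_left h1 hC0
    have h4 : 0 ≤ C * (‖y‖⁻¹) ^ 2 := by positivity
    rw [mul_pow] at h3
    linarith
  · rw [Cv_fundE_far hθ hr (pd_out (pd_out (pd_out p0 i) j) k) hy,
      Cv_ibp hN ((hg.pd i).pd j) (hcs_pd (hcs_pd hgc i) j) k,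
      Cv_ibp (hN.pd k) (hg.pd i) (hcs_pd hgc i) j, Cv_ibp ((hN.pd k).pd j) hg hgc i, neg_neg,
      abs_neg]
    refine Cv_le (fun z h => ?_) hg.cont hgc
    obtain ⟨a, b⟩ := hz z h
    rw [(pd_eve (pd_eve (pd_eve (N_far hθ a) k) j) i).eq_of_nhds]
    have h1 : (‖z‖⁻¹) ^ 3 ≤ (2 * ‖y‖⁻¹) ^ 3 := by gcongr
    have h2 := hC3 i j k z (hne z a)
    have h3 := mul_le_mul_of_nonneg_left h1 hC0
    rw [mul_pow] at h3
    linarith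

lemma ball_vol {R : ℝ} (hR : 0 ≤ R) : (volume (ball (0:E2) R)).toReal ≤ 4 * R ^ 2 := by
  rw [EuclideanSpace.volume_ball_fin_two, ENNReal.toReal_mul, ENNReal.toReal_pow,
    ENNReal.toReal_ofReal hR, ENNReal.toReal_ofReal Real.pi_pos.le]
  nlinarith [Real.pi_le_four, sq_nonneg R]

/-- Bounds for the second derivatives of `E * div g`: an `L²` bound on `B(0,4r)` and pointwise decay
outside, for `g` supported in `B(0,2r)`. -/
lemma H_bounds : ∃ C, 0 ≤ C ∧ ∀ θ, IsCutoff θ → ∀ (g : Fin 2 → E2 → ℝ) (f : E2 → ℝ) (r : ℝ), 1 ≤ r →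
    (∀ i, Sm (g i)) → (∀ i x, 2 * r ≤ ‖x‖ → g i x = 0) →
    (∀ x, f x = pd 0 (g 0) x + pd 1 (g 1) x) →
    (∀ j k y, 4 * r ≤ ‖y‖ → |Cv fundE (pd k (pd j f)) y| ≤
      C * (‖y‖⁻¹) ^ 3 * ((∫ z, |g 0 z|) + ∫ z, |g 1 z|)) ∧
    ∀ j k, ∫ y in ball 0 (4 * r), Cv fundE (pd k (pd j f)) y ^ 2 ≤
      C * ((∫ z, f z ^ 2) + (r⁻¹) ^ 4 * ((∫ z, |g 0 z|) + ∫ z, |g 1 z|) ^ 2) := by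
  obtain ⟨C, hC0, hC⟩ := far_decay
  obtain ⟨c, hc⟩ := fundE_lap
  obtain ⟨Ce, hCe0, hCe⟩ := exists_cut
  refine ⟨C + 2 * c ^ 2 + 16 * (Ce ^ 2 * C ^ 2), by positivity, fun θ hθ g f r hr hg h0 hfg => ?_⟩
  have hr0 : 0 < r := by linarith
  have hgc : ∀ i, HasCompactSupport (g i) := fun i => hcs_of_zero (2 * r) fun z hz => h0 i z hz.le
  have hfe : f = fun x => pd 0 (g 0) x + pd 1 (g 1) x := funext hfg
  have hf : Sm f := hfe ▸ (((hg 0).pd 0).add' ((hg 1).pd 1))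
  have hfc : HasCompactSupport f := hfe ▸ (hcs_add (hcs_pd (hgc 0) 0) (hcs_pd (hgc 1) 1))
  have hf1 : ∀ j, pd j f = fun x => pd j (pd 0 (g 0)) x + pd j (pd 1 (g 1)) x := fun j => by
    funext x; rw [hfe, pd_add (((hg 0).pd 0).diff x) (((hg 1).pd 1).diff x)]
  have hf2 : ∀ j k, pd k (pd j f) =
      fun x => pd k (pd j (pd 0 (g 0))) x + pd k (pd j (pd 1 (g 1))) x := fun j k => by
    funext x
    rw [hf1, pd_add ((((hg 0).pd 0).pd j).diff x) ((((hg 1).pd 1).pd j).diff x)]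
  set G := (∫ z, |g 0 z|) + ∫ z, |g 1 z| with hGdef
  have hG0 : 0 ≤ G := add_nonneg (integral_nonneg fun _ => abs_nonneg _)
    (integral_nonneg fun _ => abs_nonneg _)
  have B1 : ∀ j y, 4 * r ≤ ‖y‖ → |Cv fundE (pd j f) y| ≤ C * (‖y‖⁻¹) ^ 2 * G := fun j y hy => by
    rw [hf1, Cv_add li_fundE (((hg 0).pd 0).pd j).cont (hcs_pd (hcs_pd (hgc 0) 0) j)
      (((hg 1).pd 1).pd j).cont (hcs_pd (hcs_pd (hgc 1) 1) j), hGdef, mul_add]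
    exact (abs_add_le _ _).trans (add_le_add (hC θ hθ (g 0) r hr (hg 0) (h0 0) 0 j y hy).1
      (hC θ hθ (g 1) r hr (hg 1) (h0 1) 1 j y hy).1)
  have B2 : ∀ j k y, 4 * r ≤ ‖y‖ → |Cv fundE (pd k (pd j f)) y| ≤ C * (‖y‖⁻¹) ^ 3 * G :=
    fun j k y hy => by
    rw [hf2, Cv_add li_fundE ((((hg 0).pd 0).pd j).pd k).cont
      (hcs_pd (hcs_pd (hcs_pd (hgc 0) 0) j) k) ((((hg 1).pd 1).pd j).pd k).cont
      (hcs_pd (hcs_pd (hcs_pd (hgc 1) 1) j) k), hGdef, mul_add]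
    exact (abs_add_le _ _).trans (add_le_add ((hC θ hθ (g 0) r hr (hg 0) (h0 0) 0 j y hy).2 k)
      ((hC θ hθ (g 1) r hr (hg 1) (h0 1) 1 j y hy).2 k))
  refine ⟨fun j k y hy => (B2 j k y hy).trans ?_, fun j k => ?_⟩
  · gcongr
    nlinarith [sq_nonneg c, mul_nonneg (sq_nonneg Ce) (sq_nonneg C)]
  have Φs := fun j => Cv_sm li_fundE (hf.pd j) (hcs_pd hfc j)
  obtain ⟨η, hη, e0, e1, e2, e3, e4, e5, e6⟩ := hCe (4 * r) (by positivity)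
  have hηc : HasCompactSupport η := hcs_of_zero (2 * (4 * r)) fun z hz => e3 z hz.le
  have key := ell (Φs 0).1 (Φs 1).1 hη hηc
  simp only [(Φs _).2] at key
  have lap : ∀ y, Cv fundE (pd 0 (pd 0 f)) y + Cv fundE (pd 1 (pd 1 f)) y = c * f y := fun y => by
    rw [← Cv_add li_fundE ((hf.pd 0).pd 0).cont (hcs_pd (hcs_pd hfc 0) 0) ((hf.pd 1).pd 1).cont
      (hcs_pd (hcs_pd hfc 1) 1)]
    have := hc (fun z => f (y + z)) (sm_shift hf y) (hcs_shift hfc y)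
    rw [add_zero] at this
    rw [← this, Cv]
    congr 1; funext z
    have s : ∀ i, pd i (fun z => f (y + z)) = fun z => pd i f (y + z) := fun i => by
      funext z; exact pd_shift f y z i
    rw [s, s, pd_shift, pd_shift]
  have H2 : ∀ j k, Continuous (Cv fundE (pd k (pd j f))) := fun j k =>
    (Cv_sm li_fundE ((hf.pd j).pd k) (hcs_pd (hcs_pd hfc j) k)).1.cont
  have hη2 : HasCompactSupport fun x => η x ^ 2 := by simp_rw [sq]; exact hηc.mul_left
  -- the potential solves `Δφ = cf`, and `∂₀∂₁φ = ∂₁∂₀φ`, so `ell` applied to the gradient of the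
  -- potential bounds all second derivatives, up to a boundary layer `4r ≤ |x| ≤ 8r` where the far-field
  -- decay of the gradient is available
  have L : ∫ y in ball 0 (4 * r), Cv fundE (pd k (pd j f)) y ^ 2 ≤
      ∫ x, η x ^ 2 * (Cv fundE (pd 0 (pd 0 f)) x ^ 2 + Cv fundE (pd 1 (pd 0 f)) x ^ 2 +
        Cv fundE (pd 0 (pd 1 f)) x ^ 2 + Cv fundE (pd 1 (pd 1 f)) x ^ 2) := by
    rw [← integral_indicator measurableSet_ball]
    refine integral_mono_of_nonneg (Filter.Eventually.of_forall fun x => ?_)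
      (int_cs ?_ hη2.mul_right) (Filter.Eventually.of_forall fun x => ?_)
    · exact Set.indicator_nonneg (fun _ _ => sq_nonneg _) _
    · have a := H2 0 0; have b := H2 0 1; have c := H2 1 0; have d := H2 1 1; have e := hη.cont
      fun_prop
    · by_cases hx : x ∈ ball (0:E2) (4 * r)
      · rw [Set.indicator_of_mem hx]
        show _ ≤ η x ^ 2 * _
        rw [e2 x (mem_ball_zero_iff.1 hx).le]
        have a := sq_nonneg (Cv fundE (pd 0 (pd 0 f)) x)
        have b := sq_nonneg (Cv fundE (pd 1 (pd 0 f)) x)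
        have c := sq_nonneg (Cv fundE (pd 0 (pd 1 f)) x)
        have d := sq_nonneg (Cv fundE (pd 1 (pd 1 f)) x)
        fin_cases j <;> fin_cases k <;> simp only [Fin.zero_eta, Fin.mk_one] <;> linarith
      · rw [Set.indicator_of_notMem hx]
        show 0 ≤ η x ^ 2 * _
        positivity
  have R1 : ∫ x, η x ^ 2 * ((Cv fundE (pd 0 (pd 0 f)) x + Cv fundE (pd 1 (pd 1 f)) x) ^ 2 +
      (Cv fundE (pd 0 (pd 1 f)) x - Cv fundE (pd 1 (pd 0 f)) x) ^ 2) ≤ c ^ 2 * ∫ z, f z ^ 2 := by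
    rw [← integral_const_mul]
    have hf2c : HasCompactSupport fun x => f x ^ 2 := by simp_rw [sq]; exact hfc.mul_left
    refine integral_mono_of_nonneg (Filter.Eventually.of_forall fun x => by positivity)
      ((int_cs (hf.cont.pow 2) hf2c).const_mul _) (Filter.Eventually.of_forall fun x => ?_)
    show η x ^ 2 * _ ≤ _
    rw [lap, pd_comm hf, sub_self]
    have h1 : η x ^ 2 ≤ 1 := pow_le_one₀ (e0 x) (e1 x)
    have h2 := mul_le_mul_of_nonneg_right h1 (sq_nonneg (c * f x))
    show η x ^ 2 * ((c * f x) ^ 2 + 0 ^ 2) ≤ c ^ 2 * f x ^ 2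
    nlinarith
  have R2 : ∫ x, (pd 0 η x ^ 2 + pd 1 η x ^ 2) *
      (Cv fundE (pd 0 f) x ^ 2 + Cv fundE (pd 1 f) x ^ 2) ≤
      Ce ^ 2 * C ^ 2 * ((r⁻¹) ^ 4 * G ^ 2) := by
    set b := 2 * (Ce / (4 * r)) ^ 2 * (2 * (C * ((4 * r)⁻¹) ^ 2 * G) ^ 2) with hb
    have hb0 : 0 ≤ b := by positivity
    calc _ ≤ ∫ x, (ball (0:E2) (8 * r)).indicator (fun _ => b) x := by
          refine integral_mono_of_nonneg (Filter.Eventually.of_forall fun x => by positivity)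
            ((integrable_indicator_iff measurableSet_ball).2
              (integrableOn_const (hs := measure_ball_lt_top.ne)))
            (Filter.Eventually.of_forall fun x => ?_)
          show (pd 0 η x ^ 2 + pd 1 η x ^ 2) * _ ≤ _
          by_cases hx : 4 * r ≤ ‖x‖
          · by_cases hx2 : x ∈ ball (0:E2) (8 * r)
            · rw [Set.indicator_of_mem hx2, hb]
              have q1 : ∀ i, pd i η x ^ 2 ≤ (Ce / (4 * r)) ^ 2 := fun i => by
                rw [← sq_abs]; gcongr; exact e4 i x
              have q2 : ∀ i, Cv fundE (pd i f) x ^ 2 ≤ (C * ((4 * r)⁻¹) ^ 2 * G) ^ 2 := fun i => by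
                rw [← sq_abs]; gcongr
                refine (B1 i x hx).trans ?_
                gcongr
              refine mul_le_mul ?_ ?_ (by positivity) (by positivity)
              · linarith [q1 0, q1 1]
              · linarith [q2 0, q2 1]
            · rw [Set.indicator_of_notMem hx2]
              rw [mem_ball_zero_iff, not_lt] at hx2
              rw [e6 0 x (by linarith), e6 1 x (by linarith)]; simp
          · rw [e5 0 x (by linarith), e5 1 x (by linarith)]
            simp only [ne_eq, OfNat.ofNat_ne_zero, not_false_eq_true, zero_pow, add_zero, zero_mul]
            exact Set.indicator_nonneg (fun _ _ => hb0) _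
      _ = (volume (ball (0:E2) (8 * r))).toReal * b := by
          rw [integral_indicator measurableSet_ball, setIntegral_const, smul_eq_mul]; rfl
      _ ≤ 4 * (8 * r) ^ 2 * b := by
          gcongr; exact ball_vol (by positivity)
      _ = Ce ^ 2 * C ^ 2 * ((r⁻¹) ^ 4 * G ^ 2) / 4 := by
          rw [hb]; field_simp; norm_num
      _ ≤ _ := by
          have : 0 ≤ Ce ^ 2 * C ^ 2 * ((r⁻¹) ^ 4 * G ^ 2) := by positivity
          linarith
  have hF0 : 0 ≤ ∫ z, f z ^ 2 := integral_nonneg fun _ => sq_nonneg _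
  have hGr : 0 ≤ (r⁻¹) ^ 4 * G ^ 2 := by positivity
  have t1 := mul_nonneg (add_nonneg hC0 (by positivity : 0 ≤ 2 * c ^ 2)) hGr
  have t2 := mul_nonneg (add_nonneg hC0 (by positivity : 0 ≤ 16 * (Ce ^ 2 * C ^ 2))) hF0
  nlinarith

/-! ### Admissible fields -/

/-- Real-valued form of `‖f‖_{L²_α} ≤ K`. -/
def MB (α K : ℝ) (f : E2 → E2) : Prop :=
  ∀ r : ℝ, 1 ≤ r → ∫ y in ball 0 r, ‖f y‖ ^ 2 ≤ K ^ 2 * r ^ (2 + 2 * α)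

/-- A smooth divergence-free field with vorticity bounded by `K` and `‖u‖_{L²_α} ≤ K`. -/
structure Adm (α K : ℝ) (u : E2 → E2) : Prop where
  sm : ContDiff ℝ (⊤ : ℕ∞) u
  div : ∀ x, div2 u x = 0
  curl : ∀ x, |curl2 u x| ≤ K
  mb : MB α K u

lemma Adm.co {α K : ℝ} {u : E2 → E2} (h : Adm α K u) (i : Fin 2) : Sm fun y => u y i :=
  sm_comp h.sm i

lemma Adm.divc {α K : ℝ} {u : E2 → E2} (h : Adm α K u) (x : E2) :
    pd 0 (fun y => u y 0) x + pd 1 (fun y => u y 1) x = 0 := by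
  have hud : DifferentiableAt ℝ u x := h.sm.differentiable (by simp) x
  have := h.div x
  rwa [div2, Fin.sum_univ_two, pdv_eq hud, pdv_eq hud] at this

lemma Adm.curlc {α K : ℝ} {u : E2 → E2} (h : Adm α K u) (x : E2) :
    |pd 0 (fun y => u y 1) x - pd 1 (fun y => u y 0) x| ≤ K := by
  have hud : DifferentiableAt ℝ u x := h.sm.differentiable (by simp) x
  have := h.curl x
  rwa [curl2, pdv_eq hud, pdv_eq hud] at this

lemma ioball {F : E2 → ℝ} (hF : Continuous F) (x : E2) (R : ℝ) : IntegrableOn F (ball x R) :=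
  (hF.continuousOn.integrableOn_compact (isCompact_closedBall x R)).mono_set ball_subset_closedBall

lemma ball_le {F : E2 → ℝ} (hF : Continuous F) (h0 : ∀ x, 0 ≤ F x) {x x' : E2} {R R' : ℝ}
    (h : ball x R ⊆ ball x' R') : ∫ y in ball x R, F y ≤ ∫ y in ball x' R', F y :=
  setIntegral_mono_set (ioball hF _ _) (Filter.Eventually.of_forall h0) (Filter.Eventually.of_forall h)

lemma co_sq (v : E2) (i : Fin 2) : v i ^ 2 ≤ ‖v‖ ^ 2 := by
  rw [← sq_abs]; gcongr; exact abs_le_norm2 v i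

/-- `(cr)^s ≤ c^n r^s` for `s ≤ n`: dilating a ball costs a constant independent of the exponent. -/
lemma rp_mul {c r s : ℝ} (hc : 1 ≤ c) (hr : 0 ≤ r) (n : ℕ) (hs : s ≤ n) :
    (c * r) ^ s ≤ c ^ n * r ^ s := by
  rw [Real.mul_rpow (by linarith) hr]
  gcongr
  rw [← Real.rpow_natCast]
  exact Real.rpow_le_rpow_of_exponent_le hc hs

/-- Decomposition of an admissible field at scale `ε`: a smooth part with logarithmically growing
gradient plus a remainder of size `ε`. -/
lemma split_vel : ∃ C, 0 < C ∧ ∀ (α K : ℝ) (u : E2 → E2), 0 ≤ α → α ≤ 1 → 0 ≤ K → Adm α K u →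
    ∀ r, 1 ≤ r →
    (∀ i x, ‖x‖ ≤ 4 * r → |u x i| ≤ C * K * r) ∧
    ∀ ε, 0 < ε → ε ≤ r → ∃ U : Fin 2 → E2 → ℝ, ∀ i, Sm (U i) ∧
      ∀ x, ‖x‖ ≤ 4 * r → |u x i - U i x| ≤ C * ε * K ∧
        ∀ k, |pd k (U i) x| ≤ C * K * (1 + Real.log (r / ε)) := by
  obtain ⟨ρ, C, hC, hρ, hρ0, H⟩ := moll_bounds
  refine ⟨37 * C, by positivity, fun α K u hα0 hα hK hu r hr => ?_⟩
  have hr0 : 0 < r := by linarith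
  have H' : ∀ i : Fin 2, ∃ (j : Fin 2) (ω : E2 → ℝ), i ≠ j ∧ Sm ω ∧
      (∀ y, pd i (fun y => u y i) y = - pd j (fun y => u y j) y) ∧
      (∀ y, pd j (fun y => u y i) y = pd i (fun y => u y j) y + ω y) ∧
      (∀ y, |ω y| ≤ K) := by
      intro i
      fin_cases i
      · refine ⟨1, fun y => pd 1 (fun y => u y 0) y - pd 0 (fun y => u y 1) y, by decide,
          ((hu.co 0).pd 1).sub' ((hu.co 1).pd 0), fun y => ?_, fun y => ?_, fun y => ?_⟩
        · have := hu.divc y; simp only [Fin.zero_eta]; linarith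
        · simp only [Fin.zero_eta]; ring
        · rw [abs_sub_comm]; exact hu.curlc y
      · refine ⟨0, fun y => pd 0 (fun y => u y 1) y - pd 1 (fun y => u y 0) y, by decide,
          ((hu.co 1).pd 0).sub' ((hu.co 0).pd 1), fun y => ?_, fun y => ?_, fun y => ?_⟩
        · have := hu.divc y; simp only [Fin.mk_one]; linarith
        · simp only [Fin.mk_one]; ring
        · exact hu.curlc y
  have H2 : ∀ i : Fin 2,
      (∀ x c, 0 ≤ c → |mo ρ c (fun y => u y i) x - u x i| ≤ C * c * K) ∧
      (∀ x c r k, 0 < c → c ≤ r → |pd k (mo ρ c (fun y => u y i)) x| ≤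
        |pd k (mo ρ r (fun y => u y i)) x| + C * K * Real.log (r / c)) ∧
      (∀ x r, 0 < r → |mo ρ r (fun y => u y i) x| ≤ C / r * √(∫ y in ball x (2 * r), (u y i) ^ 2)) ∧
      (∀ x r k, 0 < r → |pd k (mo ρ r (fun y => u y i)) x| ≤
        C / r ^ 2 * √(∫ y in ball x (2 * r), (u y i) ^ 2)) := fun i => by
    obtain ⟨j, ω, hij, hω, h1, h2, h3⟩ := H' i
    exact H i j hij _ _ ω K hK (hu.co i) (hu.co j) hω h1 h2 h3
  have L2 : ∀ (i : Fin 2) x, ‖x‖ ≤ 4 * r → √(∫ y in ball x (2 * r), (u y i) ^ 2) ≤ 36 * K * r ^ 2 := by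
    intro i x hx
    refine Real.sqrt_le_iff.2 ⟨by positivity, ?_⟩
    calc ∫ y in ball x (2 * r), (u y i) ^ 2 ≤ ∫ y in ball 0 (6 * r), (u y i) ^ 2 := by
          refine ball_le ((hu.co i).cont.pow 2) (fun _ => sq_nonneg _) (ball_subset_ball' ?_)
          rw [dist_zero_right]; linarith
      _ ≤ ∫ y in ball 0 (6 * r), ‖u y‖ ^ 2 := by
          refine setIntegral_mono (ioball ((hu.co i).cont.pow 2) _ _)
            (ioball (hu.sm.continuous.norm.pow 2) _ _) fun y => co_sq _ _
      _ ≤ K ^ 2 * (6 * r) ^ (2 + 2 * α) := hu.mb _ (by linarith)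
      _ ≤ K ^ 2 * (6 ^ 4 * r ^ (4:ℝ)) := by
          gcongr
          refine (rp_mul (by norm_num) hr0.le 4 (by norm_num; linarith)).trans ?_
          gcongr
          · linarith
      _ = _ := by
          rw [show (4:ℝ) = ((4:ℕ):ℝ) by norm_num, Real.rpow_natCast]; ring
  refine ⟨fun i x hx => ?_, fun ε hε hεr => ⟨fun i => mo ρ ε (fun y => u y i), fun i =>
    ⟨(mo_param hρ hρ0 (hu.co i) ε).1, fun x hx => ⟨?_, fun k => ?_⟩⟩⟩⟩
  · obtain ⟨a, -, c, -⟩ := H2 i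
    have h1 := a x r hr0.le
    have h2 := (c x r hr0).trans (mul_le_mul_of_nonneg_left (L2 i x hx) (by positivity))
    have h3 : C / r * (36 * K * r ^ 2) = 36 * C * K * r := by field_simp
    rw [h3] at h2
    have := abs_sub_abs_le_abs_sub (u x i) (mo ρ r (fun y => u y i) x)
    rw [abs_sub_comm] at this
    nlinarith
  · have h1 := (H2 i).1 x ε hε.le
    rw [abs_sub_comm]
    have : 0 ≤ C * ε * K := by positivity
    nlinarith
  · obtain ⟨-, b, -, d⟩ := H2 i
    have h2 := (d x r k hr0).trans (mul_le_mul_of_nonneg_left (L2 i x hx) (by positivity))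
    have h3 : C / r ^ 2 * (36 * K * r ^ 2) = 36 * C * K := by field_simp
    have h1 := b x ε r k hε hεr
    have hl : 0 ≤ Real.log (r / ε) := Real.log_nonneg ((one_le_div hε).2 hεr)
    have : 0 ≤ C * K * Real.log (r / ε) := by positivity
    have : 0 ≤ C * K := by positivity
    nlinarith

/-- `η` is a smooth cut-off equal to one on `B(0,r)` and supported in `B(0,2r)`, with gradient of
size `C/r`. -/
structure IsCut (C r : ℝ) (η : E2 → ℝ) : Prop where
  sm : Sm η
  nn : ∀ x, 0 ≤ η x
  le1 : ∀ x, η x ≤ 1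
  one : ∀ x, ‖x‖ ≤ r → η x = 1
  zero : ∀ x, 2 * r ≤ ‖x‖ → η x = 0
  dle : ∀ i x, |pd i η x| ≤ C / r
  dzero : ∀ i x, 2 * r ≤ ‖x‖ → pd i η x = 0

lemma IsCut.hcs {C r : ℝ} {η : E2 → ℝ} (h : IsCut C r η) : HasCompactSupport η :=
  hcs_of_zero (2 * r) fun z hz => h.zero z hz.le

lemma exists_IsCut : ∃ C, 0 ≤ C ∧ ∀ r : ℝ, 0 < r → ∃ η, IsCut C r η := by
  obtain ⟨C, hC, H⟩ := exists_cut
  refine ⟨C, hC, fun r hr => ?_⟩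
  obtain ⟨η, a, b, c, d, e, f, -, g⟩ := H r hr
  exact ⟨η, a, b, c, d, e, f, g⟩

lemma int_ball_le {F G : E2 → ℝ} {R : ℝ} (hG : Continuous G)
    (hFG : ∀ x, ‖x‖ < R → |F x| ≤ G x) (h0 : ∀ x, R ≤ ‖x‖ → F x = 0) :
    |∫ x, F x| ≤ ∫ x in ball 0 R, G x := by
  rw [← integral_indicator measurableSet_ball]
  refine norm_integral_le_of_norm_le (f := F)
    ((integrable_indicator_iff measurableSet_ball).2 (ioball hG _ _))
    (Filter.Eventually.of_forall fun x => ?_)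
  by_cases hx : x ∈ ball (0:E2) R
  · rw [Set.indicator_of_mem hx]; exact hFG x (mem_ball_zero_iff.1 hx)
  · rw [Set.indicator_of_notMem hx, h0 x (not_lt.1 fun h => hx (mem_ball_zero_iff.2 h))]; simp

/-- Local `L²` bound for the full gradient of an admissible field. -/
lemma grad_L2 : ∃ C, 0 ≤ C ∧ ∀ (α K : ℝ) (u : E2 → E2), α ≤ 1 → 0 ≤ K → Adm α K u →
    ∀ r, 1 ≤ r → ∀ i k, ∫ x in ball 0 (2 * r), pd k (fun y => u y i) x ^ 2 ≤ C * (K * r) ^ 2 := by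
  obtain ⟨C, hC, H⟩ := exists_IsCut
  refine ⟨128 + 2048 * C ^ 2, by positivity, fun α K u hα hK hu r hr i k => ?_⟩
  have hr0 : 0 < r := by linarith
  obtain ⟨η, h⟩ := H (2 * r) (by positivity)
  have key := ell (hu.co 0) (hu.co 1) h.sm h.hcs
  have hηc := h.hcs
  have hη2 : HasCompactSupport fun x => η x ^ 2 := by simp_rw [sq]; exact hηc.mul_left
  have c1 := fun i j => ((hu.co i).pd j).cont
  have c2 := h.sm.cont
  have L : ∫ x in ball 0 (2 * r), pd k (fun y => u y i) x ^ 2 ≤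
      ∫ x, η x ^ 2 * (pd 0 (fun y => u y 0) x ^ 2 + pd 1 (fun y => u y 0) x ^ 2 +
        pd 0 (fun y => u y 1) x ^ 2 + pd 1 (fun y => u y 1) x ^ 2) := by
    rw [← integral_indicator measurableSet_ball]
    refine integral_mono_of_nonneg (Filter.Eventually.of_forall fun x => ?_)
      (int_cs ?_ hη2.mul_right) (Filter.Eventually.of_forall fun x => ?_)
    · exact Set.indicator_nonneg (fun _ _ => sq_nonneg _) _
    · have a := c1 0 0; have b := c1 0 1; have c := c1 1 0; have d := c1 1 1
      fun_prop
    · by_cases hx : x ∈ ball (0:E2) (2 * r)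
      · rw [Set.indicator_of_mem hx]
        show _ ≤ η x ^ 2 * _
        rw [h.one x (mem_ball_zero_iff.1 hx).le]
        have a := sq_nonneg (pd 0 (fun y => u y 0) x)
        have b := sq_nonneg (pd 1 (fun y => u y 0) x)
        have c := sq_nonneg (pd 0 (fun y => u y 1) x)
        have d := sq_nonneg (pd 1 (fun y => u y 1) x)
        fin_cases i <;> fin_cases k <;> simp only [Fin.zero_eta, Fin.mk_one] <;> linarith
      · rw [Set.indicator_of_notMem hx]
        show 0 ≤ η x ^ 2 * _
        positivity
  have R1 : ∫ x, η x ^ 2 * ((pd 0 (fun y => u y 0) x + pd 1 (fun y => u y 1) x) ^ 2 +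
      (pd 0 (fun y => u y 1) x - pd 1 (fun y => u y 0) x) ^ 2) ≤ 64 * (K * r) ^ 2 := by
    refine (le_abs_self _).trans ((int_ball_le (R := 2 * (2 * r)) (G := fun _ => K ^ 2)
      continuous_const (fun x hx => ?_) fun x hx => by rw [h.zero x hx]; simp).trans ?_)
    · rw [hu.divc, abs_of_nonneg (by positivity)]
      have h1 : η x ^ 2 ≤ 1 := pow_le_one₀ (h.nn x) (h.le1 x)
      have h2 : (pd 0 (fun y => u y 1) x - pd 1 (fun y => u y 0) x) ^ 2 ≤ K ^ 2 := by
        rw [← sq_abs]; gcongr; exact hu.curlc x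
      nlinarith [sq_nonneg (pd 0 (fun y => u y 1) x - pd 1 (fun y => u y 0) x)]
    · rw [setIntegral_const, smul_eq_mul]
      calc _ ≤ 4 * (2 * (2 * r)) ^ 2 * K ^ 2 := by
            gcongr; exact ball_vol (by positivity)
        _ = _ := by ring
  have R2 : ∫ x, (pd 0 η x ^ 2 + pd 1 η x ^ 2) * ((u x 0) ^ 2 + (u x 1) ^ 2) ≤
      128 * C ^ 2 * (K * r) ^ 2 := by
    refine (le_abs_self _).trans ((int_ball_le (R := 2 * (2 * r))
      (G := fun x => 2 * (C / (2 * r)) ^ 2 * ‖u x‖ ^ 2)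
      (by have := hu.sm.continuous; fun_prop) (fun x hx => ?_) fun x hx => by
        rw [h.dzero 0 x hx, h.dzero 1 x hx]; simp).trans ?_)
    · rw [← nsq, abs_of_nonneg (by positivity)]
      have q : ∀ i, pd i η x ^ 2 ≤ (C / (2 * r)) ^ 2 := fun i => by
        rw [← sq_abs]; gcongr; exact h.dle i x
      gcongr
      linarith [q 0, q 1]
    · rw [integral_const_mul]
      calc _ ≤ 2 * (C / (2 * r)) ^ 2 * (K ^ 2 * (4 ^ 4 * r ^ (4:ℝ))) := by
            gcongr
            refine (hu.mb _ (by linarith)).trans ?_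
            gcongr
            rw [show 2 * (2 * r) = 4 * r by ring]
            refine (rp_mul (by norm_num) hr0.le 4 (by norm_num; linarith)).trans ?_
            gcongr
            · linarith
        _ = _ := by
            rw [show (4:ℝ) = ((4:ℕ):ℝ) by norm_num, Real.rpow_natCast]; push_cast; field_simp
            ring
  nlinarith

/-! ### The transport term -/

/-- Integration by parts in the transport term: with `w = b − a` and any smooth splitting
`a = U + (a − U)`, no derivative falls on `a − U`. -/
lemma transport_ibp {a b U w : Fin 2 → E2 → ℝ} {χ : E2 → ℝ} (ha : ∀ i, Sm (a i)) (hb : ∀ i, Sm (b i))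
    (hU : ∀ i, Sm (U i)) (hw : ∀ i x, w i x = b i x - a i x) (hχ : Sm χ) (hc : HasCompactSupport χ)
    (hdb : ∀ x, pd 0 (b 0) x + pd 1 (b 1) x = 0) :
    ∫ x, χ x * ∑ i, w i x * ((∑ j, a j x * pd j (a i) x) - ∑ j, b j x * pd j (b i) x) =
    ∫ x, ((2⁻¹ * (w 0 x ^ 2 + w 1 x ^ 2) * ∑ j, b j x * pd j χ x)
      - (∑ i, ∑ j, χ x * (w i x * w j x) * pd j (U i) x)
      + ∑ i, ∑ j, (a i x - U i x) * (pd j χ x * (w i x * w j x) + χ x * (pd j (w i) x * w j x)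
          + χ x * (w i x * pd j (w j) x))) := by
  have hwe : ∀ i, w i = fun x => b i x - a i x := fun i => funext (hw i)
  have sw : ∀ i, Sm (w i) := fun i => hwe i ▸ (hb i).sub' (ha i)
  have sD : ∀ i, Sm fun x => a i x - U i x := fun i => (ha i).sub' (hU i)
  have sm1 : ∀ j, Sm fun x => (χ x * b j x) * (w 0 x * w 0 x + w 1 x * w 1 x) := fun j =>
    (hχ.mul' (hb j)).mul' (((sw 0).mul' (sw 0)).add' ((sw 1).mul' (sw 1)))
  have sm2 : ∀ i j, Sm fun x => (χ x * (w i x * w j x)) * (a i x - U i x) := fun i j =>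
    (hχ.mul' ((sw i).mul' (sw j))).mul' (sD i)
  have hc1 : ∀ j, HasCompactSupport fun x => (χ x * b j x) * (w 0 x * w 0 x + w 1 x * w 1 x) :=
    fun j => hc.mul_right.mul_right
  have hc2 : ∀ i j, HasCompactSupport fun x => (χ x * (w i x * w j x)) * (a i x - U i x) :=
    fun i j => hc.mul_right.mul_right
  have z1 := fun j => int_pd_zero (sm1 j) (hc1 j) j
  have z2 := fun i j => int_pd_zero (sm2 i j) (hc2 i j) j
  have i1 := fun j => int_cs ((sm1 j).pd j).cont (hcs_pd (hc1 j) j)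
  have i2 := fun i j => int_cs ((sm2 i j).pd j).cont (hcs_pd (hc2 i j) j)
  have e1 : ∀ j x, pd j (fun x => (χ x * b j x) * (w 0 x * w 0 x + w 1 x * w 1 x)) x =
      (pd j χ x * b j x + χ x * pd j (b j) x) * (w 0 x * w 0 x + w 1 x * w 1 x) +
      (χ x * b j x) * (2 * (w 0 x * pd j (w 0) x + w 1 x * pd j (w 1) x)) := by
    intro j x
    rw [pd_mul ((hχ.mul' (hb j)).diff x) ((((sw 0).mul' (sw 0)).add' ((sw 1).mul' (sw 1))).diff x),
      pd_mul (hχ.diff x) ((hb j).diff x), pd_add (((sw 0).mul' (sw 0)).diff x)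
      (((sw 1).mul' (sw 1)).diff x), pd_mul ((sw 0).diff x) ((sw 0).diff x),
      pd_mul ((sw 1).diff x) ((sw 1).diff x)]
    ring
  have e2 : ∀ i j x, pd j (fun x => (χ x * (w i x * w j x)) * (a i x - U i x)) x =
      (pd j χ x * (w i x * w j x) + χ x * (pd j (w i) x * w j x)
          + χ x * (w i x * pd j (w j) x)) * (a i x - U i x) +
      (χ x * (w i x * w j x)) * (pd j (a i) x - pd j (U i) x) := by
    intro i j x
    rw [pd_mul ((hχ.mul' ((sw i).mul' (sw j))).diff x) ((sD i).diff x),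
      pd_mul (hχ.diff x) (((sw i).mul' (sw j)).diff x), pd_mul ((sw i).diff x) ((sw j).diff x),
      pd_sub ((ha i).diff x) ((hU i).diff x)]
    ring
  have e3 : ∀ i j x, pd j (w i) x = pd j (b i) x - pd j (a i) x := fun i j x => by
    rw [hwe, pd_sub ((hb i).diff x) ((ha i).diff x)]
  set T : E2 → ℝ := fun x => χ x * ∑ i, w i x *
    ((∑ j, a j x * pd j (a i) x) - ∑ j, b j x * pd j (b i) x) with hT
  have sT : Continuous T := by
    have h1 := fun i => (ha i).cont
    have h2 := fun i => (hb i).cont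
    have h3 := fun i => (sw i).cont
    have h4 := fun i j => ((ha i).pd j).cont
    have h5 := fun i j => ((hb i).pd j).cont
    have h6 := hχ.cont
    rw [hT]; fun_prop
  have iT : Integrable T := int_cs sT hc.mul_right
  have key : ∀ x, ((2⁻¹ * (w 0 x ^ 2 + w 1 x ^ 2) * ∑ j, b j x * pd j χ x)
      - (∑ i, ∑ j, χ x * (w i x * w j x) * pd j (U i) x)
      + ∑ i, ∑ j, (a i x - U i x) * (pd j χ x * (w i x * w j x) + χ x * (pd j (w i) x * w j x)
          + χ x * (w i x * pd j (w j) x))) =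
      T x + (2⁻¹ * ∑ j, pd j (fun x => (χ x * b j x) * (w 0 x * w 0 x + w 1 x * w 1 x)) x +
        ∑ i, ∑ j, pd j (fun x => (χ x * (w i x * w j x)) * (a i x - U i x)) x) := by
    intro x
    simp only [e1, e2, hT, Fin.sum_univ_two]
    simp only [e3, hw]
    linear_combination
      (-2⁻¹ * χ x * ((b 0 x - a 0 x) * (b 0 x - a 0 x) + (b 1 x - a 1 x) * (b 1 x - a 1 x))) * hdb x
  simp_rw [key]
  have j1 : Integrable fun x => 2⁻¹ * ∑ j, pd j (fun x => (χ x * b j x) *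
      (w 0 x * w 0 x + w 1 x * w 1 x)) x := (integrable_finsetSum _ fun j _ => i1 j).const_mul _
  have j2 : Integrable fun x => ∑ i, ∑ j, pd j (fun x => (χ x * (w i x * w j x)) *
      (a i x - U i x)) x := integrable_finsetSum _ fun i _ => integrable_finsetSum _ fun j _ => i2 i j
  rw [integral_add iT (iadd j1 j2), integral_add j1 j2, integral_const_mul,
    integral_finsetSum _ fun j _ => i1 j,
    integral_finsetSum _ fun i _ => integrable_finsetSum _ fun j _ => i2 i j]
  have : ∀ i, ∫ x, ∑ j, pd j (fun x => (χ x * (w i x * w j x)) * (a i x - U i x)) x = 0 := fun i => by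
    rw [integral_finsetSum _ fun j _ => i2 i j]; simp [z2]
  simp only [this, z1, Finset.sum_const_zero, mul_zero, add_zero]

/-- Admissible fields form a vector space, with additive constants. -/
lemma Adm.sub {α K : ℝ} {a b : E2 → E2} (ha : Adm α K a) (hb : Adm α K b) :
    Adm α (2 * K) fun x => b x - a x := by
  have had : ∀ x, DifferentiableAt ℝ a x := fun x => ha.sm.differentiable (by simp) x
  have hbd : ∀ x, DifferentiableAt ℝ b x := fun x => hb.sm.differentiable (by simp) x
  have e : ∀ j i x, pdv j i (fun x => b x - a x) x = pdv j i b x - pdv j i a x := fun j i x => by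
    simp only [pdv]
    rw [fderiv_fun_sub (hbd x) (had x)]; simp
  refine ⟨hb.sm.sub ha.sm, fun x => ?_, fun x => ?_, fun r hr => ?_⟩
  · have h1 := ha.div x
    have h2 := hb.div x
    simp only [div2, Fin.sum_univ_two, e] at *
    linarith
  · have h1 := ha.curl x
    have h2 := hb.curl x
    simp only [curl2, e] at *
    have := abs_sub (pdv 0 1 b x - pdv 1 0 b x) (pdv 0 1 a x - pdv 1 0 a x)
    rw [show pdv 0 1 b x - pdv 0 1 a x - (pdv 1 0 b x - pdv 1 0 a x) =
      (pdv 0 1 b x - pdv 1 0 b x) - (pdv 0 1 a x - pdv 1 0 a x) by ring]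
    linarith
  · have h1 := ha.mb r hr
    have h2 := hb.mb r hr
    have c1 := ha.sm.continuous
    have c2 := hb.sm.continuous
    calc ∫ y in ball 0 r, ‖b y - a y‖ ^ 2
        ≤ ∫ y in ball 0 r, (2 * ‖b y‖ ^ 2 + 2 * ‖a y‖ ^ 2) := by
          refine setIntegral_mono (ioball (by fun_prop) _ _) (ioball (by fun_prop) _ _) fun y => ?_
          have := norm_sub_le (b y) (a y)
          show ‖b y - a y‖ ^ 2 ≤ 2 * ‖b y‖ ^ 2 + 2 * ‖a y‖ ^ 2
          nlinarith [norm_nonneg (b y - a y), sq_nonneg (‖b y‖ - ‖a y‖)]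
      _ = 2 * (∫ y in ball 0 r, ‖b y‖ ^ 2) + 2 * ∫ y in ball 0 r, ‖a y‖ ^ 2 := by
          rw [integral_add (ioball (by fun_prop) _ _) (ioball (by fun_prop) _ _), integral_const_mul,
            integral_const_mul]
      _ ≤ _ := by nlinarith

/-- The transport part of the energy estimate. The quadratic term `w·∇u·w` is handled by splitting
`u` at scale `ε`; only `‖w‖_{L²(B(0,2r))} ≲ Kεr` is used. -/
lemma transport (Cχ : ℝ) (hCχ : 0 ≤ Cχ) : ∃ C, 0 ≤ C ∧ ∀ (α K : ℝ) (a b : E2 → E2), 0 ≤ α → α ≤ 1 →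
    0 ≤ K → Adm α K a → Adm α K b → ∀ (r ε : ℝ) (χ : E2 → ℝ), 1 ≤ r → IsCut Cχ r χ → 0 < ε → ε ≤ r →
    ∫ x in ball 0 (2 * r), ‖b x - a x‖ ^ 2 ≤ 64 * (K * ε * r) ^ 2 →
    |∫ x, χ x * ∑ i, (b x i - a x i) * ((∑ j, a x j * pdv j i a x) - ∑ j, b x j * pdv j i b x)| ≤
      C * K ^ 3 * (ε * r) ^ 2 * (1 + Real.log (r / ε)) := by
  obtain ⟨C, hC, H⟩ := split_vel
  obtain ⟨Cg, hCg, Hg⟩ := grad_L2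
  refine ⟨(C * (5 * Cχ + 8) * 64 + 12 * C * (16 * Cg)), by positivity,
    fun α K a b hα0 hα hK ha hb r ε χ hr hχ hε hεr hW => ?_⟩
  have hr0 : 0 < r := by linarith
  obtain ⟨-, Ha⟩ := H α K a hα0 hα hK ha r hr
  obtain ⟨Hb, -⟩ := H α K b hα0 hα hK hb r hr
  obtain ⟨U, HU⟩ := Ha ε hε hεr
  have hab := ha.sub hb
  have Hw := Hg α (2 * K) _ hα (by positivity) hab r hr
  have had : ∀ x, DifferentiableAt ℝ a x := fun x => ha.sm.differentiable (by simp) x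
  have hbd : ∀ x, DifferentiableAt ℝ b x := fun x => hb.sm.differentiable (by simp) x
  have E := transport_ibp (a := fun i x => a x i) (b := fun i x => b x i) (U := U)
    (w := fun i x => b x i - a x i) ha.co hb.co (fun i => (HU i).1) (fun _ _ => rfl) hχ.sm hχ.hcs
    hb.divc
  simp only [fun x j i => pdv_eq (had x) j i, fun x j i => pdv_eq (hbd x) j i]
  rw [E]
  set w : Fin 2 → E2 → ℝ := fun i x => b x i - a x i with hw
  set n : E2 → ℝ := fun x => ‖b x - a x‖ with hn
  have hn0 : ∀ x, 0 ≤ n x := fun x => norm_nonneg _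
  have hwn : ∀ i x, |w i x| ≤ n x := fun i x => abs_le_norm2 (b x - a x) i
  have hn2 : ∀ x, w 0 x ^ 2 + w 1 x ^ 2 = n x ^ 2 := fun x => (nsq (b x - a x)).symm
  have sw : ∀ i, Sm (w i) := fun i => (hb.co i).sub' (ha.co i)
  set L := 1 + Real.log (r / ε) with hL
  have hL1 : 1 ≤ L := by
    have : 0 ≤ Real.log (r / ε) := Real.log_nonneg ((one_le_div hε).2 hεr)
    linarith
  have cn : Continuous n := (hb.sm.continuous.sub ha.sm.continuous).norm
  set G : E2 → ℝ := fun x => C * (5 * Cχ + 8) * K * L * n x ^ 2 + 12 * C * K * ε ^ 2 *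
    ((pd 0 (w 0) x ^ 2 + pd 1 (w 0) x ^ 2) + (pd 0 (w 1) x ^ 2 + pd 1 (w 1) x ^ 2)) with hG
  have cw := fun i j => ((sw i).pd j).cont
  have cG : Continuous G := by
    have a1 := cw 0 0; have a2 := cw 0 1; have a3 := cw 1 0; have a4 := cw 1 1
    rw [hG]; fun_prop
  refine (int_ball_le (R := 2 * r) cG (fun x hx => ?_) fun x hx => ?_).trans ?_
  · have hx4 : ‖x‖ ≤ 4 * r := by linarith
    have p1 : ∀ j, |b x j * pd j χ x| ≤ C * Cχ * K := fun j => by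
      rw [abs_mul]
      calc _ ≤ (C * K * r) * (Cχ / r) :=
            mul_le_mul (Hb j x hx4) (hχ.dle j x) (abs_nonneg _) (by positivity)
        _ = _ := by field_simp
    have pww : ∀ i j, |w i x * w j x| ≤ n x ^ 2 := fun i j => by
      rw [abs_mul, sq]; exact mul_le_mul (hwn i x) (hwn j x) (abs_nonneg _) (hn0 x)
    have hχa : |χ x| ≤ 1 := by rw [abs_of_nonneg (hχ.nn x)]; exact hχ.le1 x
    have p2 : ∀ i j, |χ x * (w i x * w j x) * pd j (U i) x| ≤ n x ^ 2 * (C * K * L) := fun i j => by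
      rw [abs_mul, abs_mul]
      refine mul_le_mul ?_ (((HU i).2 x hx4).2 j) (abs_nonneg _) (by positivity)
      calc _ ≤ 1 * n x ^ 2 := mul_le_mul hχa (pww i j) (abs_nonneg _) zero_le_one
        _ = _ := one_mul _
    set D : Fin 2 → Fin 2 → ℝ := fun i j => pd j (w i) x with hD
    have p3 : ∀ i j, |(a x i - U i x) * (pd j χ x * (w i x * w j x) + χ x * (pd j (w i) x * w j x)
          + χ x * (w i x * pd j (w j) x))| ≤
          C * K * (Cχ * n x ^ 2) + C * K * (n x ^ 2 + ε ^ 2 * ((D i j) ^ 2 + (D j j) ^ 2)) :=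
      fun i j => by
      rw [abs_mul]
      have q1 : |pd j χ x * (w i x * w j x)| ≤ Cχ / r * n x ^ 2 := by
        rw [abs_mul]; exact mul_le_mul (hχ.dle j x) (pww i j) (abs_nonneg _) (by positivity)
      have q2 : |χ x * (pd j (w i) x * w j x)| ≤ |D i j| * n x := by
        rw [abs_mul, abs_mul]
        calc _ ≤ 1 * (|D i j| * n x) := mul_le_mul hχa
              (mul_le_mul_of_nonneg_left (hwn j x) (abs_nonneg _)) (by positivity) zero_le_one
          _ = _ := one_mul _
      have q3 : |χ x * (w i x * pd j (w j) x)| ≤ |D j j| * n x := by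
        rw [abs_mul, abs_mul, mul_comm |w i x|]
        calc _ ≤ 1 * (|D j j| * n x) := mul_le_mul hχa
              (mul_le_mul_of_nonneg_left (hwn i x) (abs_nonneg _)) (by positivity) zero_le_one
          _ = _ := one_mul _
      calc _ ≤ (C * ε * K) * (Cχ / r * n x ^ 2 + |D i j| * n x + |D j j| * n x) := by
            refine mul_le_mul (((HU i).2 x hx4).1) ?_ (abs_nonneg _) (by positivity)
            refine (abs_add_le _ _).trans (add_le_add ((abs_add_le _ _).trans (add_le_add q1 q2)) q3)
        _ = C * K * ((ε / r) * (Cχ * n x ^ 2)) + C * K * ((ε * |D i j|) * n x + (ε * |D j j|) * n x) := by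
            field_simp
            ring
        _ ≤ _ := by
            have t1 : ε / r ≤ 1 := (div_le_one hr0).2 hεr
            have t2 : (ε / r) * (Cχ * n x ^ 2) ≤ Cχ * n x ^ 2 :=
              mul_le_of_le_one_left (by positivity) t1
            -- Young's inequality: the gradient of `w` is paid for by the factor `ε²`
            have t3 : (ε * |D i j|) * n x + (ε * |D j j|) * n x ≤
                n x ^ 2 + ε ^ 2 * ((D i j) ^ 2 + (D j j) ^ 2) := by
              rw [← sq_abs (D i j), ← sq_abs (D j j)]
              nlinarith [sq_nonneg (n x - ε * |D i j|), sq_nonneg (n x - ε * |D j j|),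
                sq_nonneg (ε * |D i j|), sq_nonneg (ε * |D j j|)]
            gcongr
    have P1 : |2⁻¹ * (w 0 x ^ 2 + w 1 x ^ 2) * ∑ j, b x j * pd j χ x| ≤ n x ^ 2 * (C * Cχ * K) := by
      rw [hn2, Fin.sum_univ_two, abs_mul, abs_of_nonneg (a := 2⁻¹ * n x ^ 2) (by positivity)]
      have h1 := (abs_add_le (b x 0 * pd 0 χ x) (b x 1 * pd 1 χ x)).trans (add_le_add (p1 0) (p1 1))
      have h2 := mul_le_mul_of_nonneg_left h1 (by positivity : 0 ≤ 2⁻¹ * n x ^ 2)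
      linarith
    have P2 : |∑ i, ∑ j, χ x * (w i x * w j x) * pd j (U i) x| ≤ 4 * (n x ^ 2 * (C * K * L)) := by
      refine (Finset.abs_sum_le_sum_abs _ _).trans ((Finset.sum_le_sum fun i _ =>
        (Finset.abs_sum_le_sum_abs _ _).trans (Finset.sum_le_sum fun j _ => p2 i j)).trans ?_)
      simp only [Finset.sum_const, Finset.card_univ, Fintype.card_fin, nsmul_eq_mul]
      push_cast
      linarith
    have P3 : |∑ i, ∑ j, (a x i - U i x) * (pd j χ x * (w i x * w j x) +
        χ x * (pd j (w i) x * w j x) + χ x * (w i x * pd j (w j) x))| ≤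
        4 * (C * K * (Cχ * n x ^ 2)) + C * K * (4 * n x ^ 2) + 3 * (C * K) * (ε ^ 2 *
          ((D 0 0 ^ 2 + D 0 1 ^ 2) + (D 1 0 ^ 2 + D 1 1 ^ 2))) := by
      refine (Finset.abs_sum_le_sum_abs _ _).trans ((Finset.sum_le_sum fun i _ =>
        (Finset.abs_sum_le_sum_abs _ _).trans (Finset.sum_le_sum fun j _ => p3 i j)).trans ?_)
      simp only [Fin.sum_univ_two]
      have t : 0 ≤ C * K * ε ^ 2 := by positivity
      nlinarith [mul_nonneg t (sq_nonneg (D 0 0)), mul_nonneg t (sq_nonneg (D 1 1)),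
        mul_nonneg t (sq_nonneg (D 0 1)), mul_nonneg t (sq_nonneg (D 1 0))]
    have P := (abs_add_le _ _).trans (add_le_add ((abs_sub _ _).trans (add_le_add P1 P2)) P3)
    refine P.trans ?_
    simp only [hG]
    have t : 0 ≤ C * K * n x ^ 2 := by positivity
    have t1 : C * K * n x ^ 2 * Cχ ≤ C * K * n x ^ 2 * Cχ * L := le_mul_of_one_le_right
      (by positivity) hL1
    have t2 : C * K * n x ^ 2 ≤ C * K * n x ^ 2 * L := le_mul_of_one_le_right (by positivity) hL1
    have t3 : 0 ≤ C * K * (ε ^ 2 * ((D 0 0 ^ 2 + D 0 1 ^ 2) + (D 1 0 ^ 2 + D 1 1 ^ 2))) := by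
      positivity
    simp only [hD] at t3 ⊢
    linarith
  · have hd : ∀ i, pd i χ x = 0 := fun i => hχ.dzero i x hx
    simp only [hχ.zero x hx, hd, Finset.sum_const_zero, mul_zero, zero_mul, add_zero, sub_zero]
  · have Hw' : ∀ i k, ∫ x in ball 0 (2 * r), pd k (w i) x ^ 2 ≤ Cg * (2 * K * r) ^ 2 := Hw
    have I : ∀ i k, IntegrableOn (fun x => pd k (w i) x ^ 2) (ball 0 (2 * r)) := fun i k =>
      ioball ((cw i k).pow 2) _ _
    simp only [hG]
    rw [integral_add (ioball (by fun_prop) _ _)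
        (((iadd (iadd (I 0 0) (I 0 1)) (iadd (I 1 0) (I 1 1)))).const_mul _),
      integral_const_mul, integral_const_mul,
      integral_add (iadd (I 0 0) (I 0 1)) (iadd (I 1 0) (I 1 1)),
      integral_add (I 0 0) (I 0 1), integral_add (I 1 0) (I 1 1)]
    have s1 := mul_le_mul_of_nonneg_left hW
      (by positivity : 0 ≤ C * (5 * Cχ + 8) * K * L)
    have s2 := mul_le_mul_of_nonneg_left (add_le_add (add_le_add (Hw' 0 0) (Hw' 0 1))
      (add_le_add (Hw' 1 0) (Hw' 1 1))) (by positivity : 0 ≤ 12 * C * K * ε ^ 2)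
    refine (add_le_add s1 s2).trans ?_
    have s3 : 12 * C * (16 * Cg) * K ^ 3 * (ε * r) ^ 2 ≤ 12 * C * (16 * Cg) * K ^ 3 * (ε * r) ^ 2 * L :=
      le_mul_of_one_le_right (by positivity) hL1
    nlinarith

/-! ### The pressure term -/

/-- The Morrey growth of exponent `α < 1/2` makes the far-field pressure integral converge. -/
lemma Adm.decay {α K : ℝ} {u : E2 → E2} (hα : α < 1 / 2) (h : Adm α K u) :
    Integrable fun y => ‖u y‖ ^ 2 * ((1 + ‖y‖)⁻¹) ^ 3 := by
  obtain ⟨C, -, H⟩ := dyadic (a := 2 + 2 * α) (by linarith)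
  have cu := h.sm.continuous
  obtain ⟨I, -⟩ := H (fun y => ‖u y‖ ^ 2) (K ^ 2) 1 one_pos (sq_nonneg _) (by fun_prop)
    (fun _ => sq_nonneg _) h.mb
  have cF : Continuous fun y => ‖u y‖ ^ 2 * ((1 + ‖y‖)⁻¹) ^ 3 :=
    (by fun_prop : Continuous fun y => ‖u y‖ ^ 2).mul
      ((Continuous.inv₀ (f := fun y : E2 => 1 + ‖y‖) (by fun_prop) fun y => by positivity).pow 3)
  rw [← integrableOn_univ, ← Set.union_compl_self (ball (0:E2) 1)]
  refine (ioball cF _ _).union ?_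
  have e : (ball (0:E2) 1)ᶜ = {y | 1 ≤ ‖y‖} := by
    ext y; simp
  rw [e]
  refine I.mono' cF.aestronglyMeasurable ?_
  refine (ae_restrict_iff' (measurableSet_le measurable_const measurable_norm)).2
    (Filter.Eventually.of_forall fun y hy => ?_)
  have hy0 : 0 < ‖y‖ := lt_of_lt_of_le one_pos hy
  rw [Real.norm_of_nonneg (by positivity)]
  gcongr
  linarith

/-- Cauchy–Schwarz on balls for a pair of Morrey fields. -/
lemma MB.cross {α γ K δ : ℝ} {u w : E2 → E2} (hK : 0 ≤ K) (hδ : 0 ≤ δ) (cu : Continuous u)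
    (cw : Continuous w) (hu : MB α K u) (hw : MB γ (δ * K) w) {R : ℝ} (hR : 1 ≤ R) :
    ∫ y in ball 0 R, ‖w y‖ * ‖u y‖ ≤ δ * K ^ 2 * R ^ (2 + α + γ) := by
  have hR0 : 0 < R := by linarith
  refine (le_abs_self _).trans ((cs_int (μ := volume.restrict (ball 0 R))
    cw.norm.aestronglyMeasurable cu.norm.aestronglyMeasurable
    (ioball (by fun_prop) _ _) (ioball (by fun_prop) _ _)).2.trans ?_)
  calc _ ≤ √((δ * K * R ^ (1 + γ)) ^ 2) * √((K * R ^ (1 + α)) ^ 2) := by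
        gcongr
        · refine (hw R hR).trans (le_of_eq ?_)
          rw [mul_pow _ (R ^ _), ← Real.rpow_natCast (R ^ _), ← Real.rpow_mul hR0.le]
          congr 2; push_cast; ring
        · refine (hu R hR).trans (le_of_eq ?_)
          rw [mul_pow _ (R ^ _), ← Real.rpow_natCast (R ^ _), ← Real.rpow_mul hR0.le]
          congr 2; push_cast; ring
    _ = _ := by
        rw [Real.sqrt_sq (by positivity), Real.sqrt_sq (by positivity)]
        rw [show 2 + α + γ = (1 + γ) + (1 + α) by ring, Real.rpow_add hR0 (1 + γ)]
        ring

/-- The pressure part of the energy estimate. After moving all derivatives onto the test field the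
difference of the pressures is `∫ (b ⊗ b - a ⊗ a) : H`, with `H` the Hessian of the potential of
`w·∇χ`; `H` is controlled in `L²` near the support of `χ` and pointwise by `|y|⁻³` away from it. -/
lemma pressure {α γ : ℝ} (hα0 : 0 ≤ α) (hα : α < 1 / 2) (hγ0 : 0 ≤ γ) (hαγ : α + γ < 1) (Cχ : ℝ)
    (hCχ : 0 ≤ Cχ) : ∃ C, 0 ≤ C ∧ ∀ (K δ : ℝ) (θ : E2 → ℝ) (a b : E2 → E2), IsCutoff θ →
    0 ≤ K → 0 ≤ δ → Adm α K a → Adm α K b → MB γ (δ * K) (fun x => b x - a x) →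
    ∀ (r : ℝ) (χ : E2 → ℝ), 1 ≤ r → IsCut Cχ r χ →
    (∀ i, Integrable fun x => (χ x * (b x i - a x i)) * pressureForce θ a i x) ∧
    (∀ i, Integrable fun x => (χ x * (b x i - a x i)) * pressureForce θ b i x) ∧
    |(∑ i, ∫ x, (χ x * (b x i - a x i)) * pressureForce θ a i x) -
      ∑ i, ∫ x, (χ x * (b x i - a x i)) * pressureForce θ b i x| ≤
      C * K ^ 3 * δ ^ 2 * r ^ (2 + 2 * γ) := by
  obtain ⟨C, hC, HV⟩ := split_vel
  obtain ⟨CH, hCH, HH⟩ := H_bounds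
  obtain ⟨Cd, hCd, HD⟩ := dyadic (a := 2 + α + γ) (by linarith)
  set Q := √(CH * (4 * Cχ ^ 2 + 64)) with hQ
  refine ⟨4 * (2 * C * Q * 256 + CH * 8 * 16 * Cd * 2), by positivity,
    fun K δ θ a b hθ hK hδ ha hb hw r χ hr hχ => ?_⟩
  have hr0 : 0 < r := by linarith
  have ca := ha.sm.continuous
  have cb := hb.sm.continuous
  have cn : Continuous fun x => ‖b x - a x‖ := by fun_prop
  obtain ⟨Ba, -⟩ := HV α K a hα0 (by linarith) hK ha r hr
  obtain ⟨Bb, -⟩ := HV α K b hα0 (by linarith) hK hb r hr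
  have sw : ∀ i, Sm fun x => b x i - a x i := fun i => (hb.co i).sub' (ha.co i)
  have wn : ∀ i x, |b x i - a x i| ≤ ‖b x - a x‖ := fun i x => abs_le_norm2 (b x - a x) i
  set g : Fin 2 → E2 → ℝ := fun i x => χ x * (b x i - a x i) with hg
  have sg : ∀ i, Sm (g i) := fun i => hχ.sm.mul' (sw i)
  have gc : ∀ i, HasCompactSupport (g i) := fun i => hχ.hcs.mul_right
  set f : E2 → ℝ := fun x => pd 0 (g 0) x + pd 1 (g 1) x with hf
  -- only `∇χ` survives in `div (χ w)`, because `w = b - a` is divergence free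
  have fe : ∀ x, f x = pd 0 χ x * (b x 0 - a x 0) + pd 1 χ x * (b x 1 - a x 1) := fun x => by
    have d : ∀ i, pd i (g i) x = pd i χ x * (b x i - a x i) +
        χ x * (pd i (fun y => b y i) x - pd i (fun y => a y i) x) := fun i => by
      simp only [hg]
      rw [pd_mul (hχ.sm.diff x) ((sw i).diff x), pd_sub ((hb.co i).diff x) ((ha.co i).diff x)]
      try ring
    have h1 := ha.divc x
    have h2 := hb.divc x
    simp only [hf, d]
    linear_combination χ x * h2 - χ x * h1
  obtain ⟨Ia, Ja, Ea⟩ := press_id hθ ha.sm ha.div (ha.decay hα) sg gc (f := f) (fun _ => rfl)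
  obtain ⟨Ib, Jb, Eb⟩ := press_id hθ hb.sm hb.div (hb.decay hα) sg gc (f := f) (fun _ => rfl)
  refine ⟨Ia, Ib, ?_⟩
  obtain ⟨Hfar, Hnear⟩ := HH θ hθ g f r hr sg
    (fun i x hx => by simp only [hg, hχ.zero x hx, zero_mul]) (fun _ => rfl)
  set H : Fin 2 → Fin 2 → E2 → ℝ := fun j k => Cv fundE (pd k (pd j f)) with hH
  set G := (∫ z, |g 0 z|) + ∫ z, |g 1 z| with hG
  set S := 16 * δ * K * r ^ (1 + γ) with hS
  have S0 : 0 ≤ S := by positivity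
  have S2 : S ^ 2 = 256 * δ ^ 2 * K ^ 2 * r ^ (2 + 2 * γ) := by
    rw [hS, mul_pow _ (r ^ _), ← Real.rpow_natCast (r ^ _), ← Real.rpow_mul hr0.le,
      show (1 + γ) * ((2:ℕ):ℝ) = 2 + 2 * γ by push_cast; ring]
    ring
  have W4 : ∫ x in ball 0 (4 * r), ‖b x - a x‖ ^ 2 ≤ S ^ 2 := by
    refine (hw (4 * r) (by linarith)).trans ?_
    rw [S2]
    calc _ ≤ (δ * K) ^ 2 * (4 ^ 4 * r ^ (2 + 2 * γ)) := by
          gcongr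
          exact rp_mul (by norm_num) hr0.le 4 (by norm_num; linarith)
      _ = _ := by ring
  have W2 : ∫ x in ball 0 (2 * r), ‖b x - a x‖ ^ 2 ≤ S ^ 2 :=
    (ball_le (by fun_prop) (fun _ => sq_nonneg _) (ball_subset_ball (by linarith))).trans W4
  have G1 : ∀ i, ∫ z, |g i z| ≤ 4 * r * S := fun i => by
    refine (le_abs_self _).trans ((int_ball_le (R := 2 * r) (G := fun x => 1 * ‖b x - a x‖)
      (by fun_prop) (fun x _ => ?_) fun x hx => by
        simp only [hg, hχ.zero x hx, zero_mul, abs_zero]).trans ?_)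
    · rw [abs_abs, abs_mul]
      exact mul_le_mul (by rw [abs_of_nonneg (hχ.nn x)]; exact hχ.le1 x) (wn i x) (abs_nonneg _)
        zero_le_one
    · refine (le_abs_self _).trans ((cs_int (μ := volume.restrict (ball 0 (2 * r)))
        (f := fun _ => (1:ℝ)) (g := fun x => ‖b x - a x‖)
        aestronglyMeasurable_const cn.aestronglyMeasurable
        (ioball (by fun_prop) _ _) (ioball (by fun_prop) _ _)).2.trans ?_)
      calc _ ≤ √((4 * r) ^ 2) * √(S ^ 2) := by
            gcongr
            rw [setIntegral_const, smul_eq_mul]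
            have := ball_vol (R := 2 * r) (by positivity)
            rw [one_pow, mul_one]
            refine this.trans (le_of_eq (by ring))
        _ = _ := by rw [Real.sqrt_sq (by positivity), Real.sqrt_sq S0]
  have G0 : 0 ≤ G := add_nonneg (integral_nonneg fun _ => abs_nonneg _)
    (integral_nonneg fun _ => abs_nonneg _)
  have G8 : G ≤ 8 * r * S := by linarith [G1 0, G1 1]
  have F2 : ∫ z, f z ^ 2 ≤ 4 * Cχ ^ 2 * (r⁻¹) ^ 2 * S ^ 2 := by
    refine (le_abs_self _).trans ((int_ball_le (R := 2 * r)
      (G := fun x => 4 * Cχ ^ 2 * (r⁻¹) ^ 2 * ‖b x - a x‖ ^ 2)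
      (by fun_prop) (fun x _ => ?_) fun x hx => by
        rw [fe, hχ.dzero 0 x hx, hχ.dzero 1 x hx]; simp).trans ?_)
    · have p : ∀ i, |pd i χ x * (b x i - a x i)| ≤ Cχ / r * ‖b x - a x‖ := fun i => by
        rw [abs_mul]; exact mul_le_mul (hχ.dle i x) (wn i x) (abs_nonneg _) (by positivity)
      have q : |f x| ≤ 2 * (Cχ / r * ‖b x - a x‖) := by
        rw [fe]; refine (abs_add_le _ _).trans ?_; linarith [p 0, p 1]
      rw [abs_of_nonneg (sq_nonneg _), ← sq_abs]
      calc _ ≤ (2 * (Cχ / r * ‖b x - a x‖)) ^ 2 := by gcongr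
        _ = _ := by field_simp; ring
    · rw [integral_const_mul]; gcongr
  have H2 : ∀ j k, ∫ y in ball 0 (4 * r), H j k y ^ 2 ≤ (Q * (r⁻¹ * S)) ^ 2 := fun j k => by
    refine (Hnear j k).trans ?_
    calc _ ≤ CH * (4 * Cχ ^ 2 * (r⁻¹) ^ 2 * S ^ 2 + (r⁻¹) ^ 4 * (8 * r * S) ^ 2) := by gcongr
      _ = CH * (4 * Cχ ^ 2 + 64) * (r⁻¹ * S) ^ 2 := by field_simp; ring
      _ = _ := by rw [mul_pow Q, hQ, Real.sq_sqrt (by positivity)]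
  have cH : ∀ j k, Continuous (H j k) := fun j k =>
    have sf : Sm f := ((sg 0).pd 0).add' ((sg 1).pd 1)
    have cf : HasCompactSupport f := hcs_add (hcs_pd (gc 0) 0) (hcs_pd (gc 1) 1)
    (Cv_sm li_fundE ((sf.pd j).pd k) (hcs_pd (hcs_pd cf j) k)).1.cont
  have T : ∀ j k, |∫ y, (b y j * b y k) * H j k y - (a y j * a y k) * H j k y| ≤
      (2 * C * Q * 256 + CH * 8 * 16 * Cd * 2) * K ^ 3 * δ ^ 2 * r ^ (2 + 2 * γ) := fun j k => by
    have IT := (Jb j k).sub (Ja j k)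
    have IT' : Integrable fun y => (b y j * b y k) * H j k y - (a y j * a y k) * H j k y := IT
    rw [← integral_add_compl (measurableSet_ball (x := (0:E2)) (ε := 4 * r)) IT',
      show (ball (0:E2) (4 * r))ᶜ = {y | 4 * r ≤ ‖y‖} by ext y; simp]
    have cbj : ∀ j, Continuous fun y => b y j := fun j => (hb.co j).cont
    have caj : ∀ j, Continuous fun y => a y j := fun j => (ha.co j).cont
    -- near field: `|u| ≲ Kr` on the ball, `w` and `H` in `L²`
    have near : |∫ y in ball 0 (4 * r), ((b y j * b y k) * H j k y - (a y j * a y k) * H j k y)| ≤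
        2 * C * Q * 256 * K ^ 3 * δ ^ 2 * r ^ (2 + 2 * γ) := by
      have cT : Continuous fun y => b y j * b y k - a y j * a y k := by
        have := cbj j; have := cbj k; have := caj j; have := caj k
        fun_prop
      simp_rw [← sub_mul]
      refine (cs_int (μ := volume.restrict (ball 0 (4 * r))) cT.aestronglyMeasurable
        (cH j k).aestronglyMeasurable (ioball (cT.pow 2) _ _)
        (ioball ((cH j k).pow 2) _ _)).2.trans ?_
      have T2 : ∫ y in ball 0 (4 * r), (b y j * b y k - a y j * a y k) ^ 2 ≤
          (2 * C * K * r * S) ^ 2 := by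
        calc _ ≤ ∫ y in ball 0 (4 * r), (2 * C * K * r) ^ 2 * ‖b y - a y‖ ^ 2 := by
              refine setIntegral_mono_on (ioball (cT.pow 2) _ _) (ioball (by fun_prop) _ _)
                measurableSet_ball fun y hy => ?_
              have hy' : ‖y‖ ≤ 4 * r := (mem_ball_zero_iff.1 hy).le
              rw [← sq_abs, ← mul_pow]
              gcongr
              rw [show b y j * b y k - a y j * a y k =
                (b y j - a y j) * b y k + a y j * (b y k - a y k) by ring]
              refine (abs_add_le _ _).trans ?_
              rw [abs_mul, abs_mul]
              have h1 := mul_le_mul (wn j y) (Bb k y hy') (abs_nonneg _) (norm_nonneg _)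
              have h2 := mul_le_mul (Ba j y hy') (wn k y) (abs_nonneg _) (by positivity)
              linarith
          _ ≤ _ := by
              rw [integral_const_mul, mul_pow _ S]; gcongr
      calc _ ≤ √((2 * C * K * r * S) ^ 2) * √((Q * (r⁻¹ * S)) ^ 2) := by
            gcongr
            exact H2 j k
        _ = 2 * C * K * Q * S ^ 2 := by
            rw [Real.sqrt_sq (by positivity), Real.sqrt_sq (by positivity)]; field_simp
        _ = _ := by rw [S2]; ring
    -- far field: mass growth `R^(2+α+γ)` of `|w||u|` against `|y|⁻³`, summable since `α + γ < 1`
    have far : |∫ y in {y | 4 * r ≤ ‖y‖}, ((b y j * b y k) * H j k y - (a y j * a y k) * H j k y)| ≤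
        CH * 8 * 16 * Cd * 2 * K ^ 3 * δ ^ 2 * r ^ (2 + 2 * γ) := by
      obtain ⟨I, B⟩ := HD (fun y => ‖b y - a y‖ * ‖a y‖ + ‖b y - a y‖ * ‖b y‖) (2 * δ * K ^ 2)
        (4 * r) (by positivity) (by positivity) (by fun_prop) (fun y => by positivity)
        (fun R hR => by
          have hR1 : 1 ≤ R := by linarith
          have h1 := MB.cross hK hδ ca (cb.sub ca) ha.mb hw hR1
          have h2 := MB.cross hK hδ cb (cb.sub ca) hb.mb hw hR1
          rw [integral_add (ioball (by fun_prop) _ _) (ioball (by fun_prop) _ _)]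
          refine (add_le_add h1 h2).trans (le_of_eq (by ring)))
      have step : |∫ y in {y | 4 * r ≤ ‖y‖},
          ((b y j * b y k) * H j k y - (a y j * a y k) * H j k y)| ≤
          ∫ y in {y : E2 | 4 * r ≤ ‖y‖}, (CH * G) *
            ((‖b y - a y‖ * ‖a y‖ + ‖b y - a y‖ * ‖b y‖) * (‖y‖⁻¹) ^ 3) := by
        refine norm_integral_le_of_norm_le
          (f := fun y => (b y j * b y k) * H j k y - (a y j * a y k) * H j k y) (I.const_mul _) ?_
        refine (ae_restrict_iff' (measurableSet_le measurable_const measurable_norm)).2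
          (Filter.Eventually.of_forall fun y hy => ?_)
        rw [← sub_mul, Real.norm_eq_abs, abs_mul]
        have h1 : |b y j * b y k - a y j * a y k| ≤ ‖b y - a y‖ * ‖a y‖ + ‖b y - a y‖ * ‖b y‖ := by
          rw [show b y j * b y k - a y j * a y k =
                (b y k - a y k) * a y j + (b y j - a y j) * b y k by ring]
          refine (abs_add_le _ _).trans ?_
          rw [abs_mul, abs_mul]
          exact add_le_add (mul_le_mul (wn k y) (abs_le_norm2 _ _) (abs_nonneg _) (norm_nonneg _))
            (mul_le_mul (wn j y) (abs_le_norm2 _ _) (abs_nonneg _) (norm_nonneg _))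
        refine (mul_le_mul h1 (Hfar j k y hy) (abs_nonneg _) (by positivity)).trans
          (le_of_eq (by ring))
      refine step.trans ?_
      rw [integral_const_mul]
      have e1 : (4 * r) ^ (2 + α + γ - 3) ≤ r ^ (2 + α + γ - 3) :=
        Real.rpow_le_rpow_of_nonpos hr0 (by linarith) (by linarith)
      -- the exponents match up to the loss `r^(α-1) ≤ 1`
      have e2' : r ^ (2 + α + γ - 3) * (r * r ^ (1 + γ)) ≤ r ^ (2 + 2 * γ) := by
        rw [← Real.rpow_one_add' hr0.le (by linarith), ← Real.rpow_add hr0]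
        exact Real.rpow_le_rpow_of_exponent_le hr (by linarith)
      calc _ ≤ (CH * (8 * r * S)) * (Cd * (2 * δ * K ^ 2) * r ^ (2 + α + γ - 3)) := by
            refine mul_le_mul (by gcongr) (B.trans (by gcongr)) ?_ (by positivity)
            exact integral_nonneg fun y => by positivity
        _ = (CH * 8 * 16 * Cd * 2 * K ^ 3 * δ ^ 2) *
            (r ^ (2 + α + γ - 3) * (r * r ^ (1 + γ))) := by rw [hS]; ring
        _ ≤ _ := by gcongr
    refine (abs_add_le _ _).trans ((add_le_add near far).trans (le_of_eq (by ring)))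
  rw [Ea, Eb]
  have E : (-∑ j, ∑ k, ∫ y, (a y j * a y k) * H j k y) - -∑ j, ∑ k, ∫ y, (b y j * b y k) * H j k y =
      ∑ j, ∑ k, ∫ y, (b y j * b y k) * H j k y - (a y j * a y k) * H j k y := by
    have : ∀ j k, ∫ y, (b y j * b y k) * H j k y - (a y j * a y k) * H j k y =
        (∫ y, (b y j * b y k) * H j k y) - ∫ y, (a y j * a y k) * H j k y := fun j k =>
      integral_sub (Jb j k) (Ja j k)
    simp only [this, Finset.sum_sub_distrib]
    ring
  rw [show (-∑ j, ∑ k, ∫ y, (a y j * a y k) * Cv fundE (pd k (pd j f)) y) -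
    -∑ j, ∑ k, ∫ y, (b y j * b y k) * Cv fundE (pd k (pd j f)) y = _ from E]
  refine (Finset.abs_sum_le_sum_abs _ _).trans ((Finset.sum_le_sum fun j _ =>
    (Finset.abs_sum_le_sum_abs _ _).trans (Finset.sum_le_sum fun k _ => T j k)).trans ?_)
  simp only [Finset.sum_const, Finset.card_univ, Fintype.card_fin, nsmul_eq_mul]
  push_cast
  exact le_of_eq (by ring)

/-! ### The energy estimate at a fixed time -/

/-- Choice of the splitting scale. With `ε = min (r^γ δ) r^α` both a priori bounds on `w` are used:
the logarithm of `r` is absorbed because `r^{γ-α}δ ≤ 1` or the gain `(r^{γ-α}δ)^{-2}` is available. -/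
lemma scale_choice {α γ r δ : ℝ} (hα0 : 0 ≤ α) (hα : α ≤ 1) (hγ : α < γ) (hr : 1 ≤ r)
    (hδ : 0 < δ) (hδ1 : δ ≤ 1) :
    ∃ ε, 0 < ε ∧ ε ≤ r ∧ (ε = r ^ γ * δ ∨ ε = r ^ α) ∧
      (ε * r) ^ 2 * (1 + Real.log (r / ε)) ≤
        (1 + (γ - α)⁻¹) * δ ^ 2 * r ^ (2 + 2 * γ) * (1 + Real.log (1 / δ)) := by
  have hr0 : 0 < r := by linarith
  have hd : 0 < γ - α := by linarith
  set X := r ^ γ * δ with hX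
  set Y := r ^ α with hY
  have X0 : 0 < X := by positivity
  have Y0 : 0 < Y := by positivity
  set l := Real.log r with hl
  have l0 : 0 ≤ l := Real.log_nonneg hr
  set m := Real.log (1 / δ) with hm
  have m0 : 0 ≤ m := Real.log_nonneg ((one_le_div hδ).2 hδ1)
  have m1 : Real.log δ = -m := by rw [hm, one_div, Real.log_inv]; ring
  have lX : Real.log X = γ * l - m := by
    rw [hX, Real.log_mul (by positivity) hδ.ne', Real.log_rpow hr0, m1]; ring
  have lY : Real.log Y = α * l := by rw [hY, Real.log_rpow hr0]
  have XX : δ ^ 2 * r ^ (2 + 2 * γ) = (X * r) ^ 2 := by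
    rw [hX, show 2 + 2 * γ = (1 + γ) * ((2:ℕ):ℝ) by push_cast; ring, Real.rpow_mul hr0.le,
      Real.rpow_natCast, Real.rpow_add hr0, Real.rpow_one]
    ring
  have Yr : Y ≤ r := by
    calc Y ≤ r ^ (1:ℝ) := Real.rpow_le_rpow_of_exponent_le hr hα
      _ = r := Real.rpow_one r
  have i0 : 0 < (γ - α)⁻¹ := inv_pos.2 hd
  rw [mul_assoc (1 + (γ - α)⁻¹), XX]
  rcases le_total X Y with h | h
  · refine ⟨X, X0, h.trans Yr, Or.inl rfl, ?_⟩
    have h1 : Real.log X ≤ Real.log Y := Real.log_le_log X0 h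
    have h2 : l ≤ (γ - α)⁻¹ * m := by
      rw [inv_mul_eq_div, le_div_iff₀ hd]; linarith
    have h3 : Real.log (r / X) ≤ l + m := by
      rw [Real.log_div hr0.ne' X0.ne', lX]; nlinarith
    calc _ ≤ (X * r) ^ 2 * ((1 + (γ - α)⁻¹) * (1 + m)) := by
          gcongr
          nlinarith
      _ = _ := by ring
  · refine ⟨Y, Y0, Yr, Or.inr rfl, ?_⟩
    have h3 : Real.log (r / Y) ≤ l := by
      rw [Real.log_div hr0.ne' Y0.ne', lY]; nlinarith
    have h4 : l = (γ - α)⁻¹ * (Real.log (X / Y) + m) := by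
      rw [Real.log_div X0.ne' Y0.ne', lX, lY]; field_simp; ring
    have h5 : Y ^ 2 * Real.log (X / Y) ≤ X ^ 2 := by
      have := Real.log_le_self (div_pos X0 Y0).le
      calc _ ≤ Y ^ 2 * (X / Y) := by gcongr
        _ = X * Y := by field_simp
        _ ≤ _ := by nlinarith
    have h6 : Y ^ 2 ≤ X ^ 2 := by gcongr
    have h7 : Y ^ 2 * (1 + l) ≤ (1 + (γ - α)⁻¹) * (X ^ 2 * (1 + m)) := by
      rw [h4]
      have : (γ - α)⁻¹ * (Y ^ 2 * Real.log (X / Y) + Y ^ 2 * m) ≤ (γ - α)⁻¹ * (X ^ 2 + X ^ 2 * m) := by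
        gcongr
      nlinarith [mul_nonneg (sq_nonneg X) m0]
    calc _ ≤ (Y * r) ^ 2 * (1 + l) := by gcongr
      _ = (Y ^ 2 * (1 + l)) * r ^ 2 := by ring
      _ ≤ ((1 + (γ - α)⁻¹) * (X ^ 2 * (1 + m))) * r ^ 2 := by gcongr
      _ = _ := by ring

/-- The right-hand side `-(u·∇)uᵢ - Pᵢ` of the Euler equations. -/
def rhs (θ : E2 → ℝ) (u : E2 → E2) (i : Fin 2) (x : E2) : ℝ :=
  -(∑ j, u x j * pdv j i u x) - pressureForce θ u i x

/-- Localised energy estimate for the difference of two fields, at a fixed time. -/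
lemma fixed_time {α γ : ℝ} (hα0 : 0 ≤ α) (hα : α < 1 / 2) (hγ : α < γ) (hαγ : α + γ < 1) (Cχ : ℝ)
    (hCχ : 0 ≤ Cχ) : ∃ C, 0 ≤ C ∧ ∀ (K δ : ℝ) (θ : E2 → ℝ) (a b : E2 → E2), IsCutoff θ →
    0 ≤ K → 0 < δ → δ ≤ 1 → Adm α K a → Adm α K b → MB γ (δ * K) (fun x => b x - a x) →
    ∀ (r : ℝ) (χ : E2 → ℝ), 1 ≤ r → IsCut Cχ r χ →
    |∫ x, χ x * ∑ i, (b x i - a x i) * (rhs θ b i x - rhs θ a i x)| ≤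
      C * K ^ 3 * δ ^ 2 * r ^ (2 + 2 * γ) * (1 + Real.log (1 / δ)) := by
  obtain ⟨C1, hC1, H1⟩ := transport Cχ hCχ
  obtain ⟨C2, hC2, H2⟩ := pressure hα0 hα (by linarith) hαγ Cχ hCχ
  have hd : 0 < (γ - α)⁻¹ := inv_pos.2 (by linarith)
  refine ⟨C1 * (1 + (γ - α)⁻¹) + C2, by positivity,
    fun K δ θ a b hθ hK hδ hδ1 ha hb hw r χ hr hχ => ?_⟩
  have hr0 : 0 < r := by linarith
  obtain ⟨ε, hε, hεr, hor, hs⟩ := scale_choice hα0 (by linarith) hγ hr hδ hδ1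
  obtain ⟨Ia, Ib, P⟩ := H2 K δ θ a b hθ hK hδ.le ha hb hw r χ hr hχ
  have m0 : 0 ≤ Real.log (1 / δ) := Real.log_nonneg ((one_le_div hδ).2 hδ1)
  have sq_rp : ∀ s : ℝ, r ^ (2 + 2 * s) = (r ^ s * r) ^ 2 := fun s => by
    rw [show 2 + 2 * s = (1 + s) * ((2:ℕ):ℝ) by push_cast; ring, Real.rpow_mul hr0.le,
      Real.rpow_natCast, Real.rpow_add hr0, Real.rpow_one]
    ring
  -- `ε` is one of the two a priori sizes of `w` at scale `r`: `r^γ δ` by the Morrey bound on the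
  -- difference, `r^α` by the bounds on the two fields separately
  have hW : ∫ x in ball 0 (2 * r), ‖b x - a x‖ ^ 2 ≤ 64 * (K * ε * r) ^ 2 := by
    rcases hor with h | h
    · refine (hw (2 * r) (by linarith)).trans ?_
      calc _ ≤ (δ * K) ^ 2 * (2 ^ 4 * r ^ (2 + 2 * γ)) := by
            gcongr
            exact rp_mul (by norm_num) hr0.le 4 (by norm_num; linarith)
        _ = 16 * (K * ε * r) ^ 2 := by rw [sq_rp, h]; ring
        _ ≤ _ := by gcongr; norm_num
    · refine ((ha.sub hb).mb (2 * r) (by linarith)).trans ?_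
      calc _ ≤ (2 * K) ^ 2 * (2 ^ 4 * r ^ (2 + 2 * α)) := by
            gcongr
            exact rp_mul (by norm_num) hr0.le 4 (by norm_num; linarith)
        _ = _ := by rw [sq_rp, h]; ring
  have T := H1 α K a b hα0 (by linarith) hK ha hb r ε χ hr hχ hε hεr hW
  have had : ∀ x, DifferentiableAt ℝ a x := fun x => ha.sm.differentiable (by simp) x
  have hbd : ∀ x, DifferentiableAt ℝ b x := fun x => hb.sm.differentiable (by simp) x
  have IT : Integrable fun x =>
      χ x * ∑ i, (b x i - a x i) * ((∑ j, a x j * pdv j i a x) - ∑ j, b x j * pdv j i b x) := by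
    refine int_cs ?_ hχ.hcs.mul_right
    simp only [fun x j i => pdv_eq (had x) j i, fun x j i => pdv_eq (hbd x) j i]
    have c1 : ∀ i, Continuous fun x => a x i := fun i => (ha.co i).cont
    have c2 : ∀ i, Continuous fun x => b x i := fun i => (hb.co i).cont
    have c3 : ∀ i j, Continuous (pd j fun x => a x i) := fun i j => ((ha.co i).pd j).cont
    have c4 : ∀ i j, Continuous (pd j fun x => b x i) := fun i j => ((hb.co i).pd j).cont
    exact hχ.sm.cont.mul (continuous_finsetSum _ fun i _ => ((c2 i).sub (c1 i)).mul
      ((continuous_finsetSum _ fun j _ => (c1 j).mul (c3 i j)).sub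
        (continuous_finsetSum _ fun j _ => (c2 j).mul (c4 i j))))
  have E : ∫ x, χ x * ∑ i, (b x i - a x i) * (rhs θ b i x - rhs θ a i x) =
      (∫ x, χ x * ∑ i, (b x i - a x i) *
        ((∑ j, a x j * pdv j i a x) - ∑ j, b x j * pdv j i b x)) +
      ((∑ i, ∫ x, (χ x * (b x i - a x i)) * pressureForce θ a i x) -
        ∑ i, ∫ x, (χ x * (b x i - a x i)) * pressureForce θ b i x) := by
    rw [← integral_finsetSum _ fun i _ => Ia i, ← integral_finsetSum _ fun i _ => Ib i,
      ← integral_sub (integrable_finsetSum _ fun i _ => Ia i)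
        (integrable_finsetSum _ fun i _ => Ib i),
      ← integral_add IT (isub (integrable_finsetSum _ fun i _ => Ia i)
        (integrable_finsetSum _ fun i _ => Ib i))]
    congr 1
    funext x
    simp only [rhs, Fin.sum_univ_two]
    ring
  rw [E]
  refine (abs_add_le _ _).trans ((add_le_add T P).trans ?_)
  have h1 : C1 * K ^ 3 * (ε * r) ^ 2 * (1 + Real.log (r / ε)) ≤
      C1 * K ^ 3 * ((1 + (γ - α)⁻¹) * δ ^ 2 * r ^ (2 + 2 * γ) * (1 + Real.log (1 / δ))) := by
    rw [mul_assoc (C1 * K ^ 3)]; gcongr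
  have h2 : C2 * K ^ 3 * δ ^ 2 * r ^ (2 + 2 * γ) ≤
      C2 * K ^ 3 * δ ^ 2 * r ^ (2 + 2 * γ) * (1 + Real.log (1 / δ)) :=
    le_mul_of_one_le_right (by positivity) (by linarith)
  refine (add_le_add h1 h2).trans (le_of_eq (by ring))

/-! ### Osgood's lemma for families of functions -/

/-- Comparison principle for a family of functions, none of which satisfies a closed differential
inequality: the derivative of each is controlled only where all members lie below the barrier `M`.
The uniform derivative bound `L` lets the gap `g` be propagated over steps of fixed length. -/
lemma family_compare {ι : Type*} {f f' : ι → ℝ → ℝ} {M M' : ℝ → ℝ} {t L g : ℝ} (ht : 0 ≤ t)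
    (hg : 0 < g) (hL : 0 ≤ L) (fc : ∀ i, ContinuousOn (f i) (Set.Icc 0 t))
    (fd : ∀ i, ∀ s ∈ Set.Ioo 0 t, HasDerivAt (f i) (f' i s) s)
    (Md : ∀ s, HasDerivAt M (M' s) s) (M0 : Monotone M)
    (fL : ∀ i, ∀ s ∈ Set.Ioo 0 t, f' i s ≤ L)
    (key : ∀ s ∈ Set.Ioo 0 t, (∀ i, f i s ≤ M s) → ∀ i, f' i s ≤ M' s)
    (h0 : ∀ i, f i 0 + g ≤ M 0) : ∀ i, f i t + g ≤ M t := by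
  set η := g / (L + 1) with hη
  have η0 : 0 < η := by positivity
  have main : ∀ n : ℕ, ∀ s ∈ Set.Icc 0 t, s ≤ n * η → ∀ i, f i s + g ≤ M s := by
    intro n
    induction n with
    | zero =>
      intro s hs h i
      have : s = 0 := le_antisymm (by simpa using h) hs.1
      rw [this]; exact h0 i
    | succ n ih =>
      intro s hs h
      rcases le_total s (n * η) with h1 | h1
      · exact ih s hs h1
      set p := n * η with hp
      have p0 : 0 ≤ p := by positivity
      have hpm : p ∈ Set.Icc 0 t := ⟨p0, h1.trans hs.2⟩
      have hpi := ih p hpm le_rfl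
      have sub : Set.Icc p s ⊆ Set.Icc 0 t := Set.Icc_subset_Icc p0 hs.2
      have subo : ∀ x ∈ interior (Set.Icc p s), x ∈ Set.Ioo 0 t := fun x hx => by
        rw [interior_Icc] at hx
        exact ⟨p0.trans_lt hx.1, hx.2.trans_le hs.2⟩
      -- the uniform derivative bound keeps the family below the barrier during one step
      have low : ∀ x ∈ Set.Icc p s, ∀ i, f i x ≤ M x := fun x hx i => by
        have := (convex_Icc p s).image_sub_le_mul_sub_of_deriv_le ((fc i).mono sub)
          (fun y hy => (fd i y (subo y hy)).differentiableAt.differentiableWithinAt)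
          (C := L) (fun y hy => by rw [(fd i y (subo y hy)).deriv]; exact fL i y (subo y hy))
          p ⟨le_rfl, h1⟩ x hx hx.1
        have h2 : L * (x - p) ≤ g := by
          have h3 : x - p ≤ η := by
            have := hx.2; push_cast at h; rw [hp]; linarith
          calc L * (x - p) ≤ (L + 1) * η :=
                mul_le_mul (by linarith) h3 (by linarith [hx.1]) (by linarith)
            _ = g := by rw [hη]; field_simp
        linarith [hpi i, M0 hx.1]
      intro i
      have anti : AntitoneOn (fun x => f i x - M x) (Set.Icc p s) := by
        refine antitoneOn_of_deriv_nonpos (convex_Icc p s)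
          (((fc i).mono sub).sub fun x _ => (Md x).continuousAt.continuousWithinAt)
          (fun y hy => (((fd i y (subo y hy)).sub (Md y)).differentiableAt).differentiableWithinAt)
          fun y hy => ?_
        have e : deriv (fun x => f i x - M x) y = f' i y - M' y :=
          ((fd i y (subo y hy)).sub (Md y)).deriv
        rw [e]
        linarith [key y (subo y hy) (low y (interior_subset hy)) i]
      have := anti ⟨le_rfl, h1⟩ ⟨h1, le_rfl⟩ h1
      simp only at this
      linarith [hpi i]
  obtain ⟨n, hn⟩ := exists_nat_ge (t / η)
  exact main n t ⟨ht, le_rfl⟩ ((div_le_iff₀ η0).1 hn)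

/-- Osgood's lemma for families with modulus `x ↦ x log (A / x)`, `A = e²B`. -/
lemma family_osgood {ι : Type*} {f f' : ι → ℝ → ℝ} {t c B y0 M0 : ℝ} (ht : 0 ≤ t) (hc : 0 ≤ c)
    (hB : 0 < B) (fc : ∀ i, ContinuousOn (f i) (Set.Icc 0 t))
    (fd : ∀ i, ∀ s ∈ Set.Ioo 0 t, HasDerivAt (f i) (f' i s) s)
    (fB : ∀ i, ∀ s ∈ Set.Icc 0 t, f i s ≤ B)
    (key : ∀ s ∈ Set.Ioo 0 t, ∀ M, 0 < M → M ≤ B → (∀ i, f i s ≤ M) →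
      ∀ i, f' i s ≤ c * M * Real.log (Real.exp 2 * B / M))
    (h0 : ∀ i, f i 0 ≤ y0) (hM0 : 0 < M0) (hy : y0 < M0) (hM : M0 ≤ Real.exp 2 * B) (i : ι) :
    f i t ≤ (Real.exp 2 * B) ^ (1 - Real.exp (-(c * t))) * M0 ^ Real.exp (-(c * t)) := by
  set A := Real.exp 2 * B with hA
  have A0 : 0 < A := by positivity
  set l := Real.log (A / M0) with hl
  have l0 : 0 ≤ l := Real.log_nonneg ((one_le_div hM0).2 hM)
  -- the solution of `M' = c M log (A / M)` with `M 0 = M0`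
  set M : ℝ → ℝ := fun s => A * Real.exp (-(l * Real.exp (-(c * s)))) with hMd
  have Mp : ∀ s, 0 < M s := fun s => by simp only [hMd]; positivity
  have lM : ∀ s, Real.log (A / M s) = l * Real.exp (-(c * s)) := fun s => by
    simp only [hMd]
    rw [Real.log_div A0.ne' (by positivity), Real.log_mul A0.ne' (by positivity), Real.log_exp]
    ring
  have Md : ∀ s, HasDerivAt M (c * M s * Real.log (A / M s)) s := fun s => by
    have h1 : HasDerivAt (fun s => -(c * s)) (-(c * 1)) s := ((hasDerivAt_id s).const_mul c).neg
    have h2 : HasDerivAt M _ s := ((h1.exp.const_mul l).neg.exp).const_mul A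
    refine h2.congr_deriv ?_
    rw [lM]
    show A * (Real.exp (-(l * Real.exp (-(c * s)))) * _) =
      c * (A * Real.exp (-(l * Real.exp (-(c * s))))) * _
    ring
  have Mm : Monotone M := fun x y hxy => by
    simp only [hMd]
    have : c * x ≤ c * y := by gcongr
    gcongr
  have Mz : M 0 = M0 := by
    simp only [hMd, mul_zero, neg_zero, Real.exp_zero, mul_one, hl]
    rw [Real.exp_neg, Real.exp_log (by positivity)]
    field_simp
  have Mt : M t = A ^ (1 - Real.exp (-(c * t))) * M0 ^ Real.exp (-(c * t)) := by
    rw [Real.rpow_def_of_pos A0, Real.rpow_def_of_pos hM0, ← Real.exp_add]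
    simp only [hMd, hl]
    nth_rewrite 1 [← Real.exp_log A0]
    rw [← Real.exp_add, Real.log_div A0.ne' hM0.ne']
    congr 1
    ring
  rw [← Mt]
  -- once the barrier exceeds `B` the a priori bound already suffices
  rcases le_total B (M t) with h | h
  · exact (fB i t ⟨ht, le_rfl⟩).trans h
  have := family_compare (f := f) (f' := f') (M := M) (L := c * B * Real.log (A / B))
    (g := M0 - y0) ht (by linarith)
    (by rw [hA, mul_div_assoc, div_self hB.ne', mul_one, Real.log_exp]; positivity) fc fd Md Mm
    (fun i s hs => key s hs B hB le_rfl (fun j => fB j s (Set.Ioo_subset_Icc_self hs)) i)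
    (fun s hs hf => key s hs (M s) (Mp s) ((Mm hs.2.le).trans h) hf)
    (fun i => by rw [Mz]; linarith [h0 i]) i
  linarith

/-! ### Solutions and localised energies -/

/-- The extended-real Morrey norm is at most `K` exactly when the real integral bounds `MB` hold. -/
lemma morrey_le_iff {α K : ℝ} (hK : 0 ≤ K) {f : E2 → E2} (hf : Continuous f) :
    morreyR α 1 f ≤ ENNReal.ofReal K ↔ MB α K f := by
  have key : ∀ r : ℝ, 1 ≤ r →
      (((∫⁻ x in ball (0 : E2) r, (‖f x‖₊ : ℝ≥0∞) ^ 2) /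
        ENNReal.ofReal (r ^ (((2:ℕ) : ℝ) + 2 * α))) ^ ((1 : ℝ) / 2) ≤ ENNReal.ofReal K ↔
      ∫ y in ball 0 r, ‖f y‖ ^ 2 ≤ K ^ 2 * r ^ (2 + 2 * α)) := fun r hr => by
    have hr0 : 0 < r := by linarith
    have e : (∫⁻ x in ball (0 : E2) r, (‖f x‖₊ : ℝ≥0∞) ^ 2) =
        ENNReal.ofReal (∫ y in ball 0 r, ‖f y‖ ^ 2) := by
      rw [ofReal_integral_eq_lintegral_ofReal (ioball (by fun_prop) _ _)
        (Filter.Eventually.of_forall fun _ => sq_nonneg _)]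
      congr 1
      funext x
      rw [ENNReal.ofReal_pow (norm_nonneg _), ofReal_norm]
      rfl
    have p : 0 < r ^ (2 + 2 * α) := by positivity
    rw [e, one_div, ENNReal.rpow_inv_le_iff (by norm_num), Nat.cast_ofNat,
      ENNReal.div_le_iff (by simpa using p) ENNReal.ofReal_ne_top, ENNReal.rpow_two,
      ← ENNReal.ofReal_pow hK, ← ENNReal.ofReal_mul (by positivity),
      ENNReal.ofReal_le_ofReal_iff (by positivity)]
  unfold morreyR MB
  rw [iSup_le_iff]
  exact ⟨fun h r hr => (key r hr).1 (h ⟨r, hr⟩), fun h r => (key r.1 r.2).2 (h r.1 r.2)⟩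

section Solution
variable {θ : E2 → ℝ} {u : ℝ → E2 → E2}

lemma sol_slice (h : IsYudovichSolution θ u) {s : ℝ} (hs : 0 ≤ s) :
    ContDiff ℝ (⊤ : ℕ∞) (u s) := by
  rw [← contDiffOn_univ]
  exact h.1.comp (f := fun x : E2 => (s, x)) (by fun_prop) fun x _ => ⟨hs, trivial⟩

lemma sol_deriv (h : IsYudovichSolution θ u) {s : ℝ} (hs : 0 < s) (x : E2) (i : Fin 2) :
    HasDerivAt (fun s => u s x i) (rhs θ (u s) i x) s :=
  (h.2.2.2 s hs.le x i).hasDerivAt (Ici_mem_nhds hs)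

/-- Joint continuity of the right-hand side. It is read off from the equation (it is `∂ₜuᵢ`), so nothing
about continuity of the pressure integrals in time has to be proved. -/
lemma rhs_cont (h : IsYudovichSolution θ u) (i : Fin 2) :
    ContinuousOn (fun q : ℝ × E2 => rhs θ (u q.1) i q.2) (Set.Ioi 0 ×ˢ Set.univ) := by
  have ho : IsOpen (Set.Ioi (0:ℝ) ×ˢ (Set.univ : Set E2)) := isOpen_Ioi.prod isOpen_univ
  have hU : ContDiffOn ℝ (⊤ : ℕ∞) (fun q : ℝ × E2 => u q.1 q.2) (Set.Ioi 0 ×ˢ Set.univ) :=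
    h.1.mono (Set.prod_mono_left Set.Ioi_subset_Ici_self)
  have hc := hU.continuousOn_fderiv_of_isOpen ho (by simp)
  have hc2 : ContinuousOn (fun q : ℝ × E2 =>
      (fderiv ℝ (fun q : ℝ × E2 => u q.1 q.2) q ((1:ℝ), (0:E2))) i) (Set.Ioi 0 ×ˢ Set.univ) :=
    (EuclideanSpace.proj (𝕜 := ℝ) i).continuous.comp_continuousOn (hc.clm_apply continuousOn_const)
  refine hc2.congr fun q hq => ?_
  have hd : HasFDerivAt (fun q : ℝ × E2 => u q.1 q.2)
      (fderiv ℝ (fun q : ℝ × E2 => u q.1 q.2) (q.1, q.2)) (q.1, q.2) :=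
    ((hU.differentiableOn (by simp)).differentiableAt (ho.mem_nhds hq)).hasFDerivAt
  have h0 : HasDerivAt (fun s : ℝ => (s, q.2)) ((1:ℝ), (0:E2)) q.1 :=
    (hasDerivAt_id q.1).prodMk (hasDerivAt_const q.1 q.2)
  have h1 := HasFDerivAt.comp_hasDerivAt (f := fun s : ℝ => (s, q.2)) q.1 hd h0
  have h2 := (EuclideanSpace.proj (𝕜 := ℝ) i).hasFDerivAt.comp_hasDerivAt q.1 h1
  exact (sol_deriv h hq.1 q.2 i).unique h2

end Solution

section Energy
variable {θ : E2 → ℝ} {u₁ u₂ : ℝ → E2 → E2}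

/-- Time derivative of the localised energy of `u₂ - u₁`. -/
lemma energy_deriv (h1 : IsYudovichSolution θ u₁) (h2 : IsYudovichSolution θ u₂) {C r s : ℝ}
    {χ : E2 → ℝ} (hχ : IsCut C r χ) (hs : 0 < s) :
    HasDerivAt (fun s => ∫ x, χ x * ‖u₂ s x - u₁ s x‖ ^ 2)
      (2 * ∫ x, χ x * ∑ i, (u₂ s x i - u₁ s x i) * (rhs θ (u₂ s) i x - rhs θ (u₁ s) i x)) s := by
  have hin : ∀ a ∈ Set.Icc (s / 2) (s + 1), 0 < a := fun a ha => by linarith [ha.1]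
  have hin' : Set.Icc (s / 2) (s + 1) ⊆ Set.Ioi 0 := fun a ha => hin a ha
  have sub : Set.Icc (s / 2) (s + 1) ×ˢ (Set.univ : Set E2) ⊆ Set.Ioi 0 ×ˢ Set.univ :=
    Set.prod_mono_left hin'
  have zero : ∀ x ∉ closedBall (0:E2) (2 * r), χ x = 0 := fun x hx =>
    hχ.zero x (by rw [mem_closedBall_zero_iff, not_le] at hx; exact hx.le)
  have joint : ∀ {u : ℝ → E2 → E2}, IsYudovichSolution θ u → ∀ i,
      ContinuousOn (fun q : ℝ × E2 => u q.1 q.2 i) (Set.Ioi 0 ×ˢ Set.univ) := fun h i =>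
    (EuclideanSpace.proj (𝕜 := ℝ) i).continuous.comp_continuousOn
      (h.1.continuousOn.mono (Set.prod_mono_left Set.Ioi_subset_Ici_self))
  have key := par_deriv (κ := fun _ => 1) (continuous_const.locallyIntegrable)
    (Φ := fun s x => χ x * ‖u₂ s x - u₁ s x‖ ^ 2)
    (Φ' := fun s x => 2 * (χ x *
      ∑ i, (u₂ s x i - u₁ s x i) * (rhs θ (u₂ s) i x - rhs θ (u₁ s) i x)))
    (k := closedBall 0 (2 * r)) (isCompact_closedBall _ _) (a := s / 2) (b := s + 1) (s0 := s)
    ⟨by linarith, by linarith⟩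
    (fun a ha => by
      have c1 := (sol_slice h1 (hin a ha).le).continuous
      have c2 := (sol_slice h2 (hin a ha).le).continuous
      have := hχ.sm.cont
      fun_prop)
    (fun a ha x => by
      have ha0 : 0 < a := hin a (Set.Ioo_subset_Icc_self ha)
      simp only [nsq, PiLp.sub_apply]
      have d : ∀ i, HasDerivAt (fun a => (u₂ a x i - u₁ a x i) ^ 2) _ a := fun i =>
        ((sol_deriv h2 ha0 x i).sub (sol_deriv h1 ha0 x i)).pow 2
      refine (((d 0).add (d 1)).const_mul (χ x)).congr_deriv ?_
      simp only [Fin.sum_univ_two, Pi.sub_apply]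
      push_cast
      ring)
    (by
      refine ContinuousOn.mono (continuousOn_const.mul ((hχ.sm.cont.comp continuous_snd).continuousOn.mul
        (continuousOn_finsetSum _ fun i _ => ((joint h2 i).sub (joint h1 i)).mul
          ((rhs_cont h2 i).sub (rhs_cont h1 i))))) sub)
    (fun a _ x hx => by simp only [zero x hx, zero_mul])
    (fun a _ x hx => by simp only [zero x hx, zero_mul, mul_zero])
  simp only [one_mul] at key
  rwa [integral_const_mul] at key

lemma energy_cont (h1 : IsYudovichSolution θ u₁) (h2 : IsYudovichSolution θ u₂) {C r t : ℝ}
    {χ : E2 → ℝ} (hχ : IsCut C r χ) :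
    ContinuousOn (fun s => ∫ x, χ x * ‖u₂ s x - u₁ s x‖ ^ 2) (Set.Icc 0 t) := by
  refine continuousOn_integral_of_compact_support (μ := volume) (isCompact_closedBall (0:E2) (2 * r))
    (f := fun s x => χ x * ‖u₂ s x - u₁ s x‖ ^ 2) ?_ fun s x _ hx => ?_
  · have sub : Set.Icc 0 t ×ˢ (Set.univ : Set E2) ⊆ Set.Ici 0 ×ˢ Set.univ :=
      Set.prod_mono_left Set.Icc_subset_Ici_self
    exact (hχ.sm.cont.comp continuous_snd).continuousOn.mul
      (((h2.1.continuousOn.mono sub).sub (h1.1.continuousOn.mono sub)).norm.pow 2)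
  · show χ x * _ = 0
    rw [hχ.zero x (by rw [mem_closedBall_zero_iff, not_le] at hx; exact hx.le), zero_mul]

/-- Both solutions are admissible with constant `K(t)` at every time up to `t`. -/
lemma sol_adm {α t s : ℝ} (h1 : IsYudovichSolution θ u₁) (h2 : IsYudovichSolution θ u₂)
    (hK : yudovichK α u₁ u₂ t < ⊤) (hs : s ∈ Set.Icc 0 t) :
    Adm α (yudovichK α u₁ u₂ t).toReal (u₁ s) ∧ Adm α (yudovichK α u₁ u₂ t).toReal (u₂ s) := by
  set K := (yudovichK α u₁ u₂ t).toReal with hKd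
  have e : yudovichK α u₁ u₂ t = ENNReal.ofReal K := (ENNReal.ofReal_toReal hK.ne).symm
  have K0 : 0 ≤ K := ENNReal.toReal_nonneg
  have b : ((⨆ x, ENNReal.ofReal |curl2 (u₁ s) x|) + morreyR α 1 (u₁ s)) +
      ((⨆ x, ENNReal.ofReal |curl2 (u₂ s) x|) + morreyR α 1 (u₂ s)) ≤ ENNReal.ofReal K := by
    rw [← e]
    exact le_iSup (fun s : Set.Icc (0 : ℝ) t =>
      (((⨆ x, ENNReal.ofReal |curl2 (u₁ s.1) x|) + morreyR α 1 (u₁ s.1)) +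
      ((⨆ x, ENNReal.ofReal |curl2 (u₂ s.1) x|) + morreyR α 1 (u₂ s.1)))) ⟨s, hs⟩
  have gen : ∀ u : ℝ → E2 → E2, IsYudovichSolution θ u →
      (⨆ x, ENNReal.ofReal |curl2 (u s) x|) + morreyR α 1 (u s) ≤ ENNReal.ofReal K →
      Adm α K (u s) := fun u hu hb => by
    refine ⟨sol_slice hu hs.1, hu.2.1 s hs.1, fun x => ?_,
      (morrey_le_iff K0 (sol_slice hu hs.1).continuous).1 (le_add_self.trans hb)⟩
    refine (ENNReal.ofReal_le_ofReal_iff K0).1 (le_trans ?_ (le_self_add.trans hb))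
    exact le_iSup (fun x => ENNReal.ofReal |curl2 (u s) x|) x
  exact ⟨gen u₁ h1 (le_self_add.trans b), gen u₂ h2 (le_add_self.trans b)⟩

end Energy

/-! ### Stability -/

lemma MB.mono {α γ K K' : ℝ} {f : E2 → E2} (hK : 0 ≤ K) (hα : α ≤ γ) (hKK : K ≤ K')
    (h : MB α K f) : MB γ K' f := fun r hr => (h r hr).trans (by gcongr)

lemma Adm.mono {α K K' : ℝ} {u : E2 → E2} (hK : 0 ≤ K) (hKK : K ≤ K') (h : Adm α K u) :
    Adm α K' u :=
  ⟨h.sm, h.div, fun x => (h.curl x).trans hKK, h.mb.mono hK le_rfl hKK⟩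

/-- The cut-off energy is dominated by the Morrey bound; `16 = 2 ^ 4` comes from doubling the ball. -/
lemma energy_upper {γ K C r : ℝ} {f : E2 → E2} {χ : E2 → ℝ} (hγ1 : γ ≤ 1) (hr : 1 ≤ r)
    (hχ : IsCut C r χ) (hf : Continuous f) (h : MB γ K f) :
    ∫ x, χ x * ‖f x‖ ^ 2 ≤ 16 * K ^ 2 * r ^ (2 + 2 * γ) := by
  have hr0 : 0 < r := by linarith
  refine (le_abs_self _).trans ((int_ball_le (R := 2 * r) (G := fun x => ‖f x‖ ^ 2) (by fun_prop)
    (fun x _ => ?_) fun x hx => by rw [hχ.zero x hx, zero_mul]).trans ?_)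
  · rw [abs_of_nonneg (mul_nonneg (hχ.nn x) (sq_nonneg _))]
    exact mul_le_of_le_one_left (sq_nonneg _) (hχ.le1 x)
  · refine (h (2 * r) (by linarith)).trans ?_
    calc _ ≤ K ^ 2 * (2 ^ 4 * r ^ (2 + 2 * γ)) := by
          gcongr
          exact rp_mul (by norm_num) hr0.le 4 (by norm_num; linarith)
      _ = _ := by ring

/-- The cut-off energy dominates the mass in `B(0,r)`. -/
lemma energy_lower {C r : ℝ} {f : E2 → E2} {χ : E2 → ℝ} (hχ : IsCut C r χ) (hf : Continuous f) :
    ∫ x in ball 0 r, ‖f x‖ ^ 2 ≤ ∫ x, χ x * ‖f x‖ ^ 2 := by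
  rw [← integral_indicator measurableSet_ball]
  refine integral_mono_of_nonneg (Filter.Eventually.of_forall fun x => ?_)
    (int_cs (hχ.sm.cont.mul (by fun_prop)) hχ.hcs.mul_right) (Filter.Eventually.of_forall fun x => ?_)
  · exact Set.indicator_nonneg (fun _ _ => sq_nonneg _) _
  · by_cases hx : x ∈ ball (0:E2) r
    · rw [Set.indicator_of_mem hx]
      show _ ≤ χ x * _
      rw [hχ.one x (mem_ball_zero_iff.1 hx).le, one_mul]
    · rw [Set.indicator_of_notMem hx]
      exact mul_nonneg (hχ.nn x) (sq_nonneg _)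

/-- Real-valued form of the stability estimate: the localised energies at all scales `r ≥ 1` form a
family to which Osgood's lemma applies. -/
lemma stability {α γ : ℝ} (hα0 : 0 ≤ α) (hα : α < 1 / 2) (hγ : α < γ) (hαγ : α + γ < 1) :
    ∃ C, 0 < C ∧ ∀ (θ : E2 → ℝ), IsCutoff θ → ∀ u₁ u₂ : ℝ → E2 → E2,
      IsYudovichSolution θ u₁ → IsYudovichSolution θ u₂ → ∀ t K d : ℝ, 0 ≤ t → 0 < K → 0 ≤ d →
      d ≤ 2 * K →
      (∀ s ∈ Set.Icc 0 t, Adm α K (u₁ s) ∧ Adm α K (u₂ s)) →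
      MB γ d (fun x => u₂ 0 x - u₁ 0 x) →
      MB γ (8 * Real.exp 1 * d ^ Real.exp (-(C * t * K)) * K ^ (1 - Real.exp (-(C * t * K))))
        (fun x => u₂ t x - u₁ t x) := by
  obtain ⟨Cχ, hCχ, HC⟩ := exists_IsCut
  obtain ⟨C, hC, HF⟩ := fixed_time hα0 hα hγ hαγ Cχ hCχ
  choose! χ hχ using HC
  refine ⟨8 * C + 1, by positivity, fun θ hθ u₁ u₂ h1 h2 t K d ht hK hd hdK adm hd0 => ?_⟩
  set c := (8 * C + 1) * K with hc
  have c0 : 0 ≤ c := by positivity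
  set B := 64 * K ^ 2 with hB
  have B0 : 0 < B := by positivity
  set w : ℝ → E2 → E2 := fun s x => u₂ s x - u₁ s x with hw
  have cw : ∀ s ∈ Set.Icc 0 t, Continuous (w s) := fun s hs =>
    (adm s hs).2.sm.continuous.sub (adm s hs).1.sm.continuous
  have mw : ∀ s ∈ Set.Icc 0 t, MB γ (2 * K) (w s) := fun s hs =>
    ((adm s hs).1.sub (adm s hs).2).mb.mono (by positivity) hγ.le le_rfl
  set q : {r : ℝ // 1 ≤ r} → ℝ := fun r => (r.1 ^ (2 + 2 * γ))⁻¹ with hq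
  have r0 : ∀ r : {r : ℝ // 1 ≤ r}, 0 < r.1 := fun r => by linarith [r.2]
  have p0 : ∀ r : {r : ℝ // 1 ≤ r}, 0 < r.1 ^ (2 + 2 * γ) := fun r => by
    have := r0 r; positivity
  have q0 : ∀ r, 0 < q r := fun r => inv_pos.2 (p0 r)
  have qp : ∀ r, q r * r.1 ^ (2 + 2 * γ) = 1 := fun r => inv_mul_cancel₀ (p0 r).ne'
  set f : {r : ℝ // 1 ≤ r} → ℝ → ℝ := fun r s => q r * ∫ x, χ r.1 x * ‖w s x‖ ^ 2 with hf
  have hχr : ∀ r : {r : ℝ // 1 ≤ r}, IsCut Cχ r.1 (χ r.1) := fun r => hχ r.1 (r0 r)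
  have up : ∀ s ∈ Set.Icc 0 t, ∀ k, MB γ k (w s) → ∀ r, f r s ≤ 16 * k ^ 2 := fun s hs k hk r => by
    have := mul_le_mul_of_nonneg_left
      (energy_upper (by linarith) r.2 (hχr r) (cw s hs) hk) (q0 r).le
    calc _ ≤ _ := this
      _ = 16 * k ^ 2 * (q r * r.1 ^ (2 + 2 * γ)) := by ring
      _ = _ := by rw [qp, mul_one]
  have low : ∀ s ∈ Set.Icc 0 t, ∀ k, (∀ r, f r s ≤ k ^ 2) → MB γ k (w s) := fun s hs k hk r hr => by
    refine (energy_lower (hχr ⟨r, hr⟩) (cw s hs)).trans ?_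
    have := hk ⟨r, hr⟩
    simp only [hf, hq] at this
    rwa [inv_mul_le_iff₀ (p0 ⟨r, hr⟩), mul_comm] at this
  have zt : (0:ℝ) ∈ Set.Icc 0 t := ⟨le_rfl, ht⟩
  have tt : t ∈ Set.Icc 0 t := ⟨ht, le_rfl⟩
  set e := Real.exp (-(c * t)) with he
  have e0 : 0 < e := Real.exp_pos _
  have e1 : e ≤ 1 := Real.exp_le_one_iff.2 (by have := mul_nonneg c0 ht; linarith)
  have main : ∀ M0, 16 * d ^ 2 < M0 → M0 ≤ Real.exp 2 * B → ∀ r,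
      f r t ≤ (Real.exp 2 * B) ^ (1 - e) * M0 ^ e := fun M0 h0 hM r => by
    refine family_osgood (f := f) (f' := fun r s => q r * (2 * ∫ x, χ r.1 x *
      ∑ i, (u₂ s x i - u₁ s x i) * (rhs θ (u₂ s) i x - rhs θ (u₁ s) i x)))
      ht c0 B0 (fun r => continuousOn_const.mul (energy_cont h1 h2 (hχr r)))
      (fun r s hs => (energy_deriv h1 h2 (hχr r) hs.1).const_mul (q r))
      (fun r s hs => (up s hs _ (mw s hs) r).trans (le_of_eq (by rw [hB]; ring))) ?_
      (up 0 zt d hd0) (lt_of_le_of_lt (by positivity) h0) h0 hM r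
    intro s hs M hM0 hMB hfM r
    have hs' := Set.Ioo_subset_Icc_self hs
    -- `δ` is the size of the difference relative to the fields; all energies at most `M` means
    -- `‖u₂ - u₁‖ ≤ δ · 8K` in the Morrey norm of exponent `γ`
    set δ := √(M / B) with hδ
    have d0 : 0 < δ := Real.sqrt_pos.2 (div_pos hM0 B0)
    have d1 : δ ≤ 1 := Real.sqrt_le_one.2 ((div_le_one B0).2 hMB)
    have d2 : δ ^ 2 = M / B := Real.sq_sqrt (div_pos hM0 B0).le
    have dM : (δ * (8 * K)) ^ 2 = M := by rw [mul_pow, d2, hB]; field_simp; ring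
    have hmb : MB γ (δ * (8 * K)) (w s) := low s hs' _ fun r => by rw [dM]; exact hfM r
    have E := HF (8 * K) δ θ (u₁ s) (u₂ s) hθ (by positivity) d0 d1
      ((adm s hs').1.mono hK.le (by linarith)) ((adm s hs').2.mono hK.le (by linarith)) hmb
      r.1 (χ r.1) r.2 (hχr r)
    have lg : 2 * (1 + Real.log (1 / δ)) = Real.log (Real.exp 2 * B / M) := by
      rw [mul_div_assoc, Real.log_mul (by positivity) (by positivity), Real.log_exp, one_div,
        Real.log_inv, hδ, Real.log_sqrt (by positivity), Real.log_div hM0.ne' B0.ne',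
        Real.log_div B0.ne' hM0.ne']
      ring
    have lg0 : 0 ≤ Real.log (Real.exp 2 * B / M) := by
      rw [← lg]
      have := Real.log_nonneg ((one_le_div d0).2 d1)
      positivity
    calc q r * (2 * ∫ x, χ r.1 x *
          ∑ i, (u₂ s x i - u₁ s x i) * (rhs θ (u₂ s) i x - rhs θ (u₁ s) i x))
        ≤ q r * (2 * (C * (8 * K) ^ 3 * δ ^ 2 * r.1 ^ (2 + 2 * γ) * (1 + Real.log (1 / δ)))) := by
          have := (le_abs_self _).trans E
          have := q0 r
          gcongr
      _ = (q r * r.1 ^ (2 + 2 * γ)) * ((C * (8 * K)) * (δ * (8 * K)) ^ 2 *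
            (2 * (1 + Real.log (1 / δ)))) := by ring
      _ = (8 * C * K) * M * Real.log (Real.exp 2 * B / M) := by rw [qp, dM, lg]; ring
      _ ≤ _ := by
          rw [hc]
          gcongr
          linarith
  have dB : 16 * d ^ 2 < Real.exp 2 * B := by
    have : 1 < Real.exp 2 := Real.one_lt_exp_iff.2 (by norm_num)
    rw [hB]
    nlinarith [mul_pos hK hK]
  -- the strict gap between the data and the barrier is removed by letting the barrier descend
  have lim : ∀ r, f r t ≤ (Real.exp 2 * B) ^ (1 - e) * (16 * d ^ 2) ^ e := fun r => by
    have ct : Filter.Tendsto (fun M0 : ℝ => (Real.exp 2 * B) ^ (1 - e) * M0 ^ e)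
        (nhdsWithin (16 * d ^ 2) (Set.Ioi (16 * d ^ 2)))
        (nhds ((Real.exp 2 * B) ^ (1 - e) * (16 * d ^ 2) ^ e)) :=
      ((Real.continuousAt_rpow_const _ _ (Or.inr e0.le)).const_mul _).tendsto.mono_left
        nhdsWithin_le_nhds
    refine ge_of_tendsto ct ?_
    filter_upwards [Ioo_mem_nhdsGT dB] with M0 hM0
    exact main M0 hM0.1 hM0.2.le r
  rw [show (8 * C + 1) * t * K = c * t by rw [hc]; ring, ← he]
  refine low t tt _ fun r => (lim r).trans ?_
  have hA : Real.exp 2 * B = (8 * Real.exp 1 * K) ^ 2 := by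
    rw [hB, mul_pow, mul_pow, ← Real.exp_nat_mul]; norm_num; ring
  have s1 : ∀ x y : ℝ, 0 ≤ x → (x ^ 2) ^ y = (x ^ y) ^ 2 := fun x y hx => by
    rw [← Real.rpow_natCast x, ← Real.rpow_natCast (x ^ y), ← Real.rpow_mul hx, ← Real.rpow_mul hx,
      mul_comm]
  rw [hA, show 16 * d ^ 2 = (4 * d) ^ 2 by ring, s1 _ _ (by positivity), s1 _ _ (by positivity),
    ← mul_pow]
  have h8 : (4:ℝ) ≤ 8 * Real.exp 1 := by linarith [Real.add_one_le_exp 1]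
  have : (8 * Real.exp 1) ^ (1 - e) * 4 ^ e ≤ 8 * Real.exp 1 := by
    calc _ ≤ (8 * Real.exp 1) ^ (1 - e) * (8 * Real.exp 1) ^ e := by gcongr
      _ = _ := by rw [← Real.rpow_add (by positivity), sub_add_cancel, Real.rpow_one]
  refine pow_le_pow_left₀ (by positivity) ?_ 2
  calc (8 * Real.exp 1 * K) ^ (1 - e) * (4 * d) ^ e
      = ((8 * Real.exp 1) ^ (1 - e) * 4 ^ e) * d ^ e * K ^ (1 - e) := by
        rw [Real.mul_rpow (by positivity) hK.le, Real.mul_rpow (by norm_num) hd]; ring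
    _ ≤ _ := by gcongr

/-- Hölder stability of the data-to-solution map (Theorem 5.1(i)): for `γ > α` with
`α + γ < 1`, `‖u₂(t) − u₁(t)‖_{L²_γ} ≤ C₁ ‖u₂(0) − u₁(0)‖_{L²_γ}^{e^{−C₂tK(t)}}
K(t)^{1 − e^{−C₂tK(t)}}`, with `C₁, C₂` depending only on `α` and `γ`. -/
theorem yudovich_holder_stability (α γ : ℝ) (hα0 : 0 ≤ α) (hα : α < 1 / 2)
    (hγ : α < γ) (hαγ : α + γ < 1) :
    ∃ C₁ C₂ : ℝ, 0 < C₁ ∧ 0 < C₂ ∧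
      ∀ (θ : E2 → ℝ), IsCutoff θ →
      ∀ u₁ u₂ : ℝ → E2 → E2,
        IsYudovichSolution θ u₁ → IsYudovichSolution θ u₂ →
        (∀ t, 0 ≤ t → yudovichK α u₁ u₂ t < ⊤) →
        ∀ t, 0 ≤ t →
          morreyR γ 1 (fun x => u₂ t x - u₁ t x) ≤
            ENNReal.ofReal C₁ *
              (morreyR γ 1 (fun x => u₂ 0 x - u₁ 0 x)) ^
                (Real.exp (-(C₂ * t * (yudovichK α u₁ u₂ t).toReal))) *
              (yudovichK α u₁ u₂ t) ^
                (1 - Real.exp (-(C₂ * t * (yudovichK α u₁ u₂ t).toReal))) := by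
  obtain ⟨C, hC, H⟩ := stability hα0 hα hγ hαγ
  refine ⟨8 * Real.exp 1, C, by positivity, hC, fun θ hθ u₁ u₂ h1 h2 hfin t ht => ?_⟩
  have adm := fun s hs => sol_adm h1 h2 (hfin t ht) (s := s) hs
  have hKe : yudovichK α u₁ u₂ t = ENNReal.ofReal (yudovichK α u₁ u₂ t).toReal :=
    (ENNReal.ofReal_toReal (hfin t ht).ne).symm
  have K0 : 0 ≤ (yudovichK α u₁ u₂ t).toReal := ENNReal.toReal_nonneg
  generalize (yudovichK α u₁ u₂ t).toReal = K at *
  rw [hKe]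
  have zt : (0:ℝ) ∈ Set.Icc 0 t := ⟨le_rfl, ht⟩
  have tt : t ∈ Set.Icc 0 t := ⟨ht, le_rfl⟩
  have cw : ∀ s ∈ Set.Icc 0 t, Continuous fun x => u₂ s x - u₁ s x := fun s hs =>
    (adm s hs).2.sm.continuous.sub (adm s hs).1.sm.continuous
  have mw : ∀ s ∈ Set.Icc 0 t, MB γ (2 * K) (fun x => u₂ s x - u₁ s x) := fun s hs =>
    ((adm s hs).1.sub (adm s hs).2).mb.mono (by positivity) hγ.le le_rfl
  -- for `K = 0` both fields vanish, and so does the left-hand side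
  rcases K0.eq_or_lt with hK | hK
  · have := (morrey_le_iff (by positivity) (cw t tt)).2 (mw t tt)
    rw [← hK, mul_zero, ENNReal.ofReal_zero] at this
    exact this.trans bot_le
  have D := (morrey_le_iff (by positivity) (cw 0 zt)).2 (mw 0 zt)
  have De : morreyR γ 1 (fun x => u₂ 0 x - u₁ 0 x) =
      ENNReal.ofReal (morreyR γ 1 (fun x => u₂ 0 x - u₁ 0 x)).toReal :=
    (ENNReal.ofReal_toReal (ne_top_of_le_ne_top ENNReal.ofReal_ne_top D)).symm
  have d0 : 0 ≤ (morreyR γ 1 (fun x => u₂ 0 x - u₁ 0 x)).toReal := ENNReal.toReal_nonneg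
  generalize (morreyR γ 1 (fun x => u₂ 0 x - u₁ 0 x)).toReal = d at *
  have hd : MB γ d (fun x => u₂ 0 x - u₁ 0 x) := (morrey_le_iff d0 (cw 0 zt)).1 De.le
  rw [De] at D ⊢
  have hdK : d ≤ 2 * K := (ENNReal.ofReal_le_ofReal_iff (by positivity)).1 D
  have R := H θ hθ u₁ u₂ h1 h2 t K d ht hK d0 hdK adm hd
  have e1 : Real.exp (-(C * t * K)) ≤ 1 := Real.exp_le_one_iff.2 (by
    have : 0 ≤ C * t * K := by positivity
    linarith)
  refine ((morrey_le_iff (by positivity) (cw t tt)).2 R).trans (le_of_eq ?_)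
  rw [ENNReal.ofReal_rpow_of_nonneg d0 (Real.exp_pos _).le,
    ENNReal.ofReal_rpow_of_nonneg K0 (by linarith), ← ENNReal.ofReal_mul (by positivity),
    ← ENNReal.ofReal_mul (by positivity)]

end
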